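/- Fix λ₀∈(−2,2), 0<θ≤1 and 0<κ<θ/8. Set a_±=±√(4−λ₀²)/2, c_±=1−λ₀²/4 ± (iλ₀/2)·√(1−λ₀²/4), and φ_±(y)=((a_±+y+iλ₀/2)²−(a_±+iλ₀/2)²)/2 − Log(1+y/(a_±−iλ₀/2)) − c_±·y², where Log is the principal branch of the complex logarithm; φ_± is analytic in a neighborhood of 0 and its Taylor expansion at 0 starts from the third-order term. Then, with ⟨·⟩₀ taken with parameter γ=c_+, one has ⟨exp{−∑_{j=−n}^{n}φ_+(x_j/W)}⟩₀ → 1 as n→∞, and likewise ⟨exp{−∑_{j=−n}^{n}φ_−(x_j/W)}⟩₀ → 1 with γ=c_−. -/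

import Mathlib

open MeasureTheory

/-- Extend `x : Fin m → ℝ` to `ℕ → ℝ` by zero. -/
noncomputable def pad (m : ℕ) (x : Fin m → ℝ) : ℕ → ℝ :=
  fun j => if h : j < m then x ⟨j, h⟩ else 0

/-- `μ_γ(x) = exp{−(1/2)∑_{j=−n+1}^{n}(x_j−x_{j−1})² − (γ/W²)∑_{j=−n}^{n}x_j²}` on `ℝ^N`,
`N = 2n+1` (coordinates relabelled by `Fin N`). -/
noncomputable def muG (m : ℕ) (W : ℝ) (γ : ℂ) (x : Fin m → ℝ) : ℂ :=
  Complex.exp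
    ((((-(1/2) * ∑ j ∈ Finset.Ico 1 m, (pad m x j - pad m x (j-1))^2 : ℝ)) : ℂ)
      - (γ / (W : ℂ)^2) * ((∑ j ∈ Finset.range m, (pad m x j)^2 : ℝ) : ℂ))

/-- `W(n) = N^{(1+θ)/2}` where `N = 2n+1`, so `W² = N^{1+θ}`. -/
noncomputable def Wn (θ : ℝ) (n : ℕ) : ℝ := ((2 * (n : ℝ) + 1)) ^ ((1 + θ) / 2)

/-- `δ(n) = W(n)^{−κ}`. -/
noncomputable def dl (θ κ : ℝ) (n : ℕ) : ℝ := (Wn θ n) ^ (-κ)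

/-- The cube `{x : |x_i| ≤ r for all i}`. -/
def box (m : ℕ) (r : ℝ) : Set (Fin m → ℝ) := {x | ∀ i, |x i| ≤ r}

/-- The normalized average `⟨F⟩₀` over the cube `[−δW, δW]^N` with weight `μ_γ`. -/
noncomputable def avg0 (n : ℕ) (W δ : ℝ) (γ : ℂ) (F : (Fin (2*n+1) → ℝ) → ℂ) : ℂ :=
  (∫ x in box (2*n+1) (δ * W), F x * muG (2*n+1) W γ x) /
    (∫ x in box (2*n+1) (δ * W), muG (2*n+1) W γ x)

/-- `a_+ = √(4−λ₀²)/2`. -/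
noncomputable def aplus (l0 : ℝ) : ℝ := Real.sqrt (4 - l0^2) / 2

/-- `c_± = 1 − λ₀²/4 ± (iλ₀/2)√(1−λ₀²/4)`. -/
noncomputable def cplus (l0 : ℝ) : ℂ :=
  ((1 - l0^2/4 : ℝ) : ℂ) + Complex.I * (l0/2 : ℝ) * (Real.sqrt (1 - l0^2/4) : ℝ)

noncomputable def cminus (l0 : ℝ) : ℂ :=
  ((1 - l0^2/4 : ℝ) : ℂ) - Complex.I * (l0/2 : ℝ) * (Real.sqrt (1 - l0^2/4) : ℝ)

/-- `φ_±(y) = ((a_±+y+iλ₀/2)² − (a_±+iλ₀/2)²)/2 − Log(1+y/(a_±−iλ₀/2)) − c_± y²`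
(with `a = a_±`, `c = c_±`). -/
noncomputable def phiPM (l0 : ℝ) (a : ℝ) (c : ℂ) (y : ℝ) : ℂ :=
  (((a : ℂ) + (y : ℂ) + Complex.I * (l0 : ℂ)/2)^2 - ((a : ℂ) + Complex.I * (l0 : ℂ)/2)^2)/2
    - Complex.log (1 + (y : ℂ)/((a : ℂ) - Complex.I * (l0 : ℂ)/2)) - c * (y : ℂ)^2

namespace BandChain

/-- Normalised Gaussian kernel. -/
noncomputable def gk (u : ℝ) : ℝ := (√(2 * Real.pi))⁻¹ * Real.exp (-(1/2) * u^2)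

/-- Transfer operator with weight `w`. -/
noncomputable def K (w f : ℝ → ℂ) (x : ℝ) : ℂ := ∫ y, ((gk (x - y) : ℝ) : ℂ) * (w y * f y)

/-- Bounded measurable functions. -/
def BM (f : ℝ → ℂ) : Prop := Measurable f ∧ ∃ C, ∀ x, ‖f x‖ ≤ C

lemma sqrt2pi_pos : 0 < √(2 * Real.pi) := by positivity

lemma gk_nonneg (u : ℝ) : 0 ≤ gk u := by unfold gk; positivity

lemma gk_cont : Continuous gk := by unfold gk; fun_prop

lemma gk_symm (x y : ℝ) : gk (x - y) = gk (y - x) := by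
  unfold gk; congr 2; ring

lemma gk_integrable : Integrable gk := by
  unfold gk
  exact (integrable_exp_neg_mul_sq (by norm_num : (0:ℝ) < 1/2)).const_mul _

lemma gk_integral : ∫ u, gk u = 1 := by
  unfold gk
  rw [integral_const_mul, integral_gaussian]
  rw [show Real.pi / (1/2) = 2 * Real.pi by ring]
  exact inv_mul_cancel₀ sqrt2pi_pos.ne'

lemma gk_integrable_sub (x : ℝ) : Integrable (fun y => gk (x - y)) :=
  gk_integrable.comp_sub_left x

lemma gk_integral_sub (x : ℝ) : ∫ y, gk (x - y) = 1 := by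
  rw [integral_sub_left_eq_self gk volume x, gk_integral]

lemma gk_integrable_subC (x : ℝ) : Integrable (fun y => ((gk (x - y) : ℝ) : ℂ)) :=
  (gk_integrable_sub x).ofReal

lemma BM.mul {f g : ℝ → ℂ} (hf : BM f) (hg : BM g) : BM (fun x => f x * g x) := by
  obtain ⟨mf, C, hC⟩ := hf
  obtain ⟨mg, D, hD⟩ := hg
  refine ⟨mf.mul mg, C * D, fun x => ?_⟩
  rw [norm_mul]
  exact mul_le_mul (hC x) (hD x) (norm_nonneg _) ((norm_nonneg _).trans (hC x))

lemma BM.add {f g : ℝ → ℂ} (hf : BM f) (hg : BM g) : BM (fun x => f x + g x) := by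
  obtain ⟨mf, C, hC⟩ := hf
  obtain ⟨mg, D, hD⟩ := hg
  exact ⟨mf.add mg, C + D, fun x => (norm_add_le _ _).trans (add_le_add (hC x) (hD x))⟩

lemma BM.sub {f g : ℝ → ℂ} (hf : BM f) (hg : BM g) : BM (fun x => f x - g x) := by
  obtain ⟨mf, C, hC⟩ := hf
  obtain ⟨mg, D, hD⟩ := hg
  exact ⟨mf.sub mg, C + D, fun x => (norm_sub_le _ _).trans (add_le_add (hC x) (hD x))⟩

lemma BM.const (c : ℂ) : BM (fun _ => c) := ⟨measurable_const, ‖c‖, fun _ => le_rfl⟩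

lemma BM.smul {f : ℝ → ℂ} (c : ℂ) (hf : BM f) : BM (fun x => c * f x) := (BM.const c).mul hf

lemma BM.sum {f : ℕ → ℝ → ℂ} (s : Finset ℕ) (hf : ∀ i ∈ s, BM (f i)) :
    BM (fun x => ∑ i ∈ s, f i x) := by
  classical
  induction s using Finset.induction_on with
  | empty => simpa using BM.const 0
  | insert a s ha ih =>
    simp only [Finset.sum_insert ha]
    exact (hf a (by simp)).add (ih fun i hi => hf i (by simp [hi]))

lemma BM.integrable_mul {f h : ℝ → ℂ} (hf : BM f) (hh : Integrable h) :
    Integrable (fun x => h x * f x) := by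
  obtain ⟨mf, C, hC⟩ := hf
  exact hh.mul_bdd mf.aestronglyMeasurable (Filter.Eventually.of_forall hC)

lemma K_integrand {w f : ℝ → ℂ} (hw : BM w) (hf : BM f) (x : ℝ) :
    Integrable (fun y => ((gk (x - y) : ℝ) : ℂ) * (w y * f y)) :=
  (hw.mul hf).integrable_mul (gk_integrable_subC x)

lemma K_meas {w f : ℝ → ℂ} (hw : BM w) (hf : BM f) : Measurable (K w f) := by
  have : StronglyMeasurable (Function.uncurry fun x y : ℝ => ((gk (x - y) : ℝ) : ℂ) * (w y * f y)) := by
    apply Measurable.stronglyMeasurable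
    have h1 : Measurable w := hw.1
    have h2 : Measurable f := hf.1
    have h3 : Measurable gk := gk_cont.measurable
    unfold Function.uncurry
    fun_prop
  exact this.integral_prod_right.measurable

lemma K_BM {w f : ℝ → ℂ} (hw : BM w) (hf : BM f) : BM (K w f) := by
  refine ⟨K_meas hw hf, ?_⟩
  obtain ⟨m, C, hC⟩ := hw.mul hf
  refine ⟨C, fun x => ?_⟩
  have : ‖K w f x‖ ≤ ∫ y, gk (x - y) * C := by
    apply norm_integral_le_of_norm_le ((gk_integrable_sub x).mul_const C)
    refine Filter.Eventually.of_forall fun y => ?_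
    rw [norm_mul, Complex.norm_real, Real.norm_of_nonneg (gk_nonneg _)]
    exact mul_le_mul_of_nonneg_left (hC y) (gk_nonneg _)
  rwa [integral_mul_const, gk_integral_sub, one_mul] at this

lemma Kit_BM {w f : ℝ → ℂ} (hw : BM w) (hf : BM f) (m : ℕ) : BM ((K w)^[m] f) := by
  induction m with
  | zero => exact hf
  | succ m ih => rw [Function.iterate_succ_apply']; exact K_BM hw ih

lemma K_add {w f h : ℝ → ℂ} (hw : BM w) (hf : BM f) (hh : BM h) (x : ℝ) :
    K w (fun y => f y + h y) x = K w f x + K w h x := by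
  unfold K
  rw [← integral_add (K_integrand hw hf x) (K_integrand hw hh x)]
  congr 1; ext y; ring

lemma K_sub {w f h : ℝ → ℂ} (hw : BM w) (hf : BM f) (hh : BM h) (x : ℝ) :
    K w (fun y => f y - h y) x = K w f x - K w h x := by
  unfold K
  rw [← integral_sub (K_integrand hw hf x) (K_integrand hw hh x)]
  congr 1; ext y; ring

lemma K_smul {w f : ℝ → ℂ} (c : ℂ) (x : ℝ) :
    K w (fun y => c * f y) x = c * K w f x := by
  unfold K
  rw [← integral_const_mul]
  congr 1; ext y; ring

lemma K_zero {w : ℝ → ℂ} (x : ℝ) : K w (fun _ => 0) x = 0 := by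
  unfold K; simp

lemma K_sum {w : ℝ → ℂ} {f : ℕ → ℝ → ℂ} (hw : BM w) (s : Finset ℕ) (hf : ∀ i ∈ s, BM (f i)) (x : ℝ) :
    K w (fun y => ∑ i ∈ s, f i y) x = ∑ i ∈ s, K w (f i) x := by
  unfold K
  rw [← integral_finsetSum s (fun i hi => K_integrand hw (hf i hi) x)]
  congr 1; ext y; rw [Finset.mul_sum, Finset.mul_sum]

lemma Kit_add {w f h : ℝ → ℂ} (hw : BM w) (hf : BM f) (hh : BM h) (m : ℕ) :
    (K w)^[m] (fun y => f y + h y) = fun x => (K w)^[m] f x + (K w)^[m] h x := by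
  induction m with
  | zero => rfl
  | succ m ih =>
    simp only [Function.iterate_succ_apply', ih]
    ext x
    exact K_add hw (Kit_BM hw hf m) (Kit_BM hw hh m) x

lemma Kit_smul {w f : ℝ → ℂ} (c : ℂ) (m : ℕ) :
    (K w)^[m] (fun y => c * f y) = fun x => c * (K w)^[m] f x := by
  induction m with
  | zero => rfl
  | succ m ih =>
    simp only [Function.iterate_succ_apply', ih]
    ext x
    exact K_smul c x

/-- Perturbed weight. -/
lemma K_pert {w ψ f : ℝ → ℂ} (hw : BM w) (hψ : BM ψ) (hf : BM f) (x : ℝ) :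
    K (fun y => w y * (1 + ψ y)) f x = K w f x + K w (fun y => ψ y * f y) x := by
  rw [← K_add hw hf (hψ.mul hf)]
  unfold K
  congr 1; ext y; ring

/-- Fubini. -/
lemma K_fubini {w f h : ℝ → ℂ} (hw : BM w) (hf : BM f) (hh : Integrable h) :
    ∫ x, h x * K w f x = ∫ y, (∫ x, h x * ((gk (x - y) : ℝ) : ℂ)) * w y * f y := by
  have e1 : ∀ x, h x * K w f x = ∫ y, h x * (((gk (x - y) : ℝ) : ℂ) * (w y * f y)) := fun x => by
    unfold K; rw [integral_const_mul]
  have e2 : ∀ y, (∫ x, h x * ((gk (x - y) : ℝ) : ℂ)) * w y * f y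
      = ∫ x, h x * (((gk (x - y) : ℝ) : ℂ) * (w y * f y)) := fun y => by
    rw [mul_assoc, ← integral_mul_const]; congr 1; ext x; ring
  simp_rw [e1, e2]
  apply integral_integral_swap
  have h1 : Integrable (fun z : ℝ × ℝ => h z.1 * ((gk (z.1 - z.2) : ℝ) : ℂ)) (volume.prod volume) := by
    have hg : AEStronglyMeasurable (fun z : ℝ × ℝ => ((gk (z.1 - z.2) : ℝ) : ℂ)) (volume.prod volume) := by
      have := gk_cont
      exact (by fun_prop : Continuous (fun z : ℝ × ℝ => ((gk (z.1 - z.2) : ℝ) : ℂ))).aestronglyMeasurable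
    refine (integrable_prod_iff (hh.1.comp_fst.mul hg)).2 ⟨?_, ?_⟩
    · exact Filter.Eventually.of_forall fun x => (gk_integrable_subC x).const_mul (h x)
    · have : (fun x => ∫ y, ‖h x * ((gk (x - y) : ℝ) : ℂ)‖) = fun x => ‖h x‖ := by
        ext x
        simp_rw [norm_mul, Complex.norm_real, Real.norm_of_nonneg (gk_nonneg _)]
        rw [integral_const_mul, gk_integral_sub, mul_one]
      change Integrable (fun x => ∫ y, ‖h x * ((gk (x - y) : ℝ) : ℂ)‖)
      rw [this]
      exact hh.norm
  obtain ⟨m, C, hC⟩ := hw.mul hf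
  have := h1.mul_bdd (g := fun z => w z.2 * f z.2) (c := C)
    (m.comp measurable_snd).aestronglyMeasurable (Filter.Eventually.of_forall fun z => hC z.2)
  refine this.congr (Filter.Eventually.of_forall fun z => ?_)
  simp [Function.uncurry, mul_assoc]

lemma rgauss (b c d : ℝ) (hb : 0 < b) :
    Integrable (fun x : ℝ => Real.exp (-b * x^2 + c * x + d)) ∧
    ∫ x : ℝ, Real.exp (-b * x^2 + c * x + d) = √(Real.pi / b) * Real.exp (d + c^2 / (4*b)) := by
  have e : ∀ x : ℝ, Real.exp (-b * x^2 + c * x + d)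
      = Real.exp (-b * (x - c/(2*b))^2) * Real.exp (d + c^2/(4*b)) := fun x => by
    rw [← Real.exp_add]; congr 1; field_simp; ring
  simp_rw [e]
  constructor
  · exact ((integrable_exp_neg_mul_sq hb).comp_sub_right (c/(2*b))).mul_const _
  · rw [integral_mul_const, integral_sub_right_eq_self (fun x => Real.exp (-b * x^2)) (c/(2*b)),
      integral_gaussian]

/-- One step bound with Gaussian profiles. -/
lemma K_gauss_bound {w f : ℝ → ℂ} {C a p : ℝ} (hs : 0 < 1 + 2 * (a + p))
    (hw : ∀ y, ‖w y‖ ≤ Real.exp (-p * y^2)) (hf : ∀ y, ‖f y‖ ≤ C * Real.exp (-a * y^2)) (x : ℝ) :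
    ‖K w f x‖ ≤ C * ((√(1 + 2 * (a + p)))⁻¹ * Real.exp (-((a+p)/(1 + 2*(a+p))) * x^2)) := by
  set s := a + p with hs'
  have hC : 0 ≤ C := by
    have := (norm_nonneg _).trans (hf 0)
    simpa using this
  obtain ⟨i1, i2⟩ := rgauss (1/2 + s) x (-(1/2) * x^2) (by linarith)
  have : ‖K w f x‖ ≤ ∫ y, (C * (√(2 * Real.pi))⁻¹) * Real.exp (-(1/2 + s) * y^2 + x * y + -(1/2) * x^2) := by
    apply norm_integral_le_of_norm_le (i1.const_mul _)
    refine Filter.Eventually.of_forall fun y => ?_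
    rw [norm_mul, norm_mul, Complex.norm_real, Real.norm_of_nonneg (gk_nonneg _)]
    calc gk (x - y) * (‖w y‖ * ‖f y‖) ≤ gk (x-y) * (Real.exp (-p * y^2) * (C * Real.exp (-a * y^2))) := by
          gcongr
          · exact gk_nonneg _
          · exact hw y
          · exact hf y
      _ = _ := by
          have : Real.exp (-(1/2 + s) * y^2 + x * y + -(1/2) * x^2)
            = Real.exp (-(1/2) * (x-y)^2) * Real.exp (-p * y^2) * Real.exp (-a * y^2) := by
            rw [← Real.exp_add, ← Real.exp_add]; congr 1; rw [hs']; ring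
          rw [this]; unfold gk; ring
  refine this.trans (le_of_eq ?_)
  rw [integral_const_mul, i2, mul_assoc]
  congr 1
  rw [← mul_assoc]
  congr 1
  · rw [show Real.pi / (1/2 + s) = (2 * Real.pi) / (1 + 2 * s) by field_simp,
      Real.sqrt_div (by positivity)]
    field_simp
  · congr 1
    field_simp
    ring

end BandChain

namespace BandChain

/-- Smallness conditions on the scale `u = 1/W`. -/
structure Lev (u γ cs : ℝ) : Prop where
  u0 : 0 < u
  g0 : 0 < γ
  c0 : 0 < cs
  h1 : 16 * cs^2 ≤ γ
  h2 : 16 * cs * u ≤ 1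
  h3 : 8 * γ * u^2 ≤ 1

lemma Lev.step {u γ cs : ℝ} (L : Lev u γ cs) {w f : ℝ → ℂ} {C c : ℝ} (hc : -cs ≤ c) (hc' : c ≤ cs)
    (hw : ∀ y, ‖w y‖ ≤ Real.exp (-(γ * u^2) * y^2)) (hf : ∀ y, ‖f y‖ ≤ C * Real.exp (-(c * u) * y^2))
    (x : ℝ) :
    ‖K w f x‖ ≤ C * Real.exp (2 * cs * u) * Real.exp (-(min (c + γ/2 * u) cs * u) * x^2) := by
  obtain ⟨u0, g0, c0, h1, h2, h3⟩ := L
  have hC : 0 ≤ C := by simpa using (norm_nonneg _).trans (hf 0)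
  have hcu : c * u ≤ cs * u := mul_le_mul_of_nonneg_right hc' u0.le
  have hcu' : -(cs * u) ≤ c * u := by nlinarith
  have hs : 0 < 1 + 2 * (c * u + γ * u^2) := by nlinarith [mul_pos g0 (pow_pos u0 2)]
  have := K_gauss_bound hs hw hf x
  refine this.trans ?_
  rw [mul_assoc]
  gcongr
  · -- normalisation
    rw [inv_le_comm₀ (by positivity) (by positivity), ← Real.exp_neg]
    apply Real.le_sqrt_of_sq_le
    rw [← Real.exp_nat_mul]
    have e1 : Real.exp ((2:ℕ) * -(2 * cs * u)) * Real.exp (4 * cs * u) = 1 := by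
      rw [← Real.exp_add]; simp; ring_nf
    have e2 := Real.add_one_le_exp (4 * cs * u)
    have e3 : 0 < Real.exp ((2:ℕ) * -(2 * cs * u)) := Real.exp_pos _
    have e4 : 0 < cs * u := by positivity
    have e5 : Real.exp ((2:ℕ) * -(2 * cs * u)) * (4 * cs * u + 1) ≤ 1 := by
      exact (mul_le_mul_of_nonneg_left e2 e3.le).trans e1.le
    have e6 : Real.exp ((2:ℕ) * -(2 * cs * u)) ≤ 1 / (4 * cs * u + 1) := by
      rw [le_div_iff₀ (by positivity)]; exact e5
    refine e6.trans ?_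
    rw [div_le_iff₀ (by positivity)]
    have e7 : 0 < γ * u^2 := by positivity
    have : 1 ≤ (1 - 2 * (cs * u)) * (4 * cs * u + 1) := by nlinarith
    refine this.trans ?_
    gcongr
    nlinarith
  · refine (mul_le_mul_of_nonneg_right (min_le_left _ _) u0.le).trans ?_
    rw [le_div_iff₀ hs]
    have e7 : 0 < γ * u^2 := by positivity
    have a1 : c * u * (c * u) ≤ (cs * u) * (cs * u) := by nlinarith
    have a2 : (cs*u)*(cs*u) ≤ γ / 16 * u^2 := by nlinarith [sq_nonneg u]
    have a3 : c * u * (γ * u^2) ≤ 1/16 * (γ * u^2) := by nlinarith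
    have a4 : (c * u + γ * u^2) ≤ 1/4 := by nlinarith
    nlinarith

lemma Lev.iter {u γ cs : ℝ} (L : Lev u γ cs) {w f : ℝ → ℂ} {C c : ℝ} (hc : -cs ≤ c) (hc' : c ≤ cs)
    (hw : ∀ y, ‖w y‖ ≤ Real.exp (-(γ * u^2) * y^2)) (hf : ∀ y, ‖f y‖ ≤ C * Real.exp (-(c * u) * y^2))
    (j : ℕ) (x : ℝ) :
    ‖(K w)^[j] f x‖ ≤ C * Real.exp (2 * cs * (u * j)) * Real.exp (-(min (c + γ/2 * (u * j)) cs * u) * x^2) := by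
  induction j generalizing x with
  | zero => simpa [min_eq_left hc'] using hf x
  | succ j ih =>
    rw [Function.iterate_succ_apply']
    have hg := L.g0
    have hu := L.u0
    have := L.step (c := min (c + γ/2 * (u * j)) cs) ?_ (min_le_right _ _) hw ih x
    · refine this.trans ?_
      rw [mul_assoc C, ← Real.exp_add]
      have hC : 0 ≤ C := by simpa using (norm_nonneg _).trans (hf 0)
      gcongr ?_ * ?_ * ?_
      · apply le_of_eq; push_cast; ring_nf
      · apply Real.exp_le_exp.2
        have : min (c + γ/2 * (u * (j+1:ℕ))) cs ≤ min (min (c + γ/2 * (u * j)) cs + γ/2 * u) cs := by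
          apply le_min _ (min_le_right _ _)
          rw [min_add]
          apply le_min
          · refine (min_le_left _ _).trans (le_of_eq ?_); push_cast; ring
          · exact (min_le_right _ _).trans (by nlinarith)
        have h3 := mul_le_mul_of_nonneg_right this hu.le
        nlinarith [sq_nonneg x]
    · apply le_min
      · have : 0 ≤ γ/2 * (u * j) := by positivity
        linarith
      · linarith [L.c0]

/-- The simplified version: level `c` in, level `c'` out, `u j ≤ T`. -/
lemma Lev.iter' {u γ cs : ℝ} (L : Lev u γ cs) {w f : ℝ → ℂ} {C c c' T : ℝ} (hc : -cs ≤ c) (hc' : c ≤ cs)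
    (hw : ∀ y, ‖w y‖ ≤ Real.exp (-(γ * u^2) * y^2)) (hf : ∀ y, ‖f y‖ ≤ C * Real.exp (-(c * u) * y^2))
    (j : ℕ) (hT : u * j ≤ T) (h1 : c' ≤ cs) (h2 : c' ≤ c + γ/2 * (u * j)) (x : ℝ) :
    ‖(K w)^[j] f x‖ ≤ C * Real.exp (2 * cs * T) * Real.exp (-(c' * u) * x^2) := by
  have hC : 0 ≤ C := by simpa using (norm_nonneg _).trans (hf 0)
  have hcs := L.c0
  refine (L.iter hc hc' hw hf j x).trans ?_
  gcongr
  · exact L.u0.le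
  · exact le_min h2 h1

/-- Perturbation data: `w` free weight, `ψ` relative perturbation; `u = σ²`. -/
structure Pert (σ γ c C1 : ℝ) (w ψ : ℝ → ℂ) : Prop where
  hw : BM w
  hψ : BM ψ
  bw : ∀ y, ‖w y‖ ≤ Real.exp (-(γ * (σ^2)^2) * y^2)
  bw' : ∀ y, ‖w y * (1 + ψ y)‖ ≤ Real.exp (-(γ * (σ^2)^2) * y^2)
  bψ : ∀ y, ‖ψ y‖ ≤ C1 * σ^3 * Real.exp ((c * σ^2) * y^2)
  odd : ∃ ψo : ℝ → ℂ, BM ψo ∧ (∀ y, ψo (-y) = -ψo y) ∧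
    ∀ y, ‖ψ y - ψo y‖ ≤ C1 * σ^4 * Real.exp ((c * σ^2) * y^2)

/-- perturbed weight -/
noncomputable def wp (w ψ : ℝ → ℂ) : ℝ → ℂ := fun y => w y * (1 + ψ y)

lemma Pert.hwp {σ γ c C1 : ℝ} {w ψ : ℝ → ℂ} (P : Pert σ γ c C1 w ψ) : BM (wp w ψ) :=
  P.hw.mul ((BM.const 1).add P.hψ)

lemma telescope {w ψ f : ℝ → ℂ} (hw : BM w) (hψ : BM ψ) (hf : BM f) (l : ℕ) (x : ℝ) :
    (K (wp w ψ))^[l] f x - (K w)^[l] f x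
      = ∑ j ∈ Finset.range l, (K w)^[l - j] (fun y => ψ y * (K (wp w ψ))^[j] f y) x := by
  have hwp : BM (wp w ψ) := hw.mul ((BM.const 1).add hψ)
  induction l generalizing x with
  | zero => simp
  | succ l ih =>
    have hA := Kit_BM hwp hf l
    have hB := Kit_BM hw hf l
    rw [Finset.sum_range_succ, Function.iterate_succ_apply', Function.iterate_succ_apply' (K w)]
    have e1 : K (wp w ψ) ((K (wp w ψ))^[l] f) x = K w ((K (wp w ψ))^[l] f) x
      + K w (fun y => ψ y * (K (wp w ψ))^[l] f y) x := K_pert hw hψ hA x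
    rw [e1]
    have e2 : K w ((K (wp w ψ))^[l] f) x - K w ((K w)^[l] f) x
      = K w (fun y => (K (wp w ψ))^[l] f y - (K w)^[l] f y) x := (K_sub hw hA hB x).symm
    have e3 : K w (fun y => (K (wp w ψ))^[l] f y - (K w)^[l] f y) x
      = ∑ j ∈ Finset.range l, (K w)^[l + 1 - j] (fun y => ψ y * (K (wp w ψ))^[j] f y) x := by
      simp_rw [ih]
      rw [K_sum hw _ (fun j _ => Kit_BM hw (hψ.mul (Kit_BM hwp hf j)) _)]
      apply Finset.sum_congr rfl
      intro j hj
      rw [show l + 1 - j = (l - j) + 1 by have := Finset.mem_range.1 hj; omega,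
        Function.iterate_succ_apply']
    rw [← e3, ← e2]
    simp
    ring

lemma Pert.weak {σ γ cs c C1 : ℝ} {w ψ : ℝ → ℂ} (P : Pert σ γ c C1 w ψ) (L : Lev (σ^2) γ cs)
    (hσ : 0 < σ) (hC1 : 0 ≤ C1)
    (hc0 : 0 < c) (hcs : c ≤ cs) {f : ℝ → ℂ} (hf : BM f) {F T : ℝ} (hF : ∀ x, ‖f x‖ ≤ F) (l : ℕ)
    (hT : σ^2 * l ≤ T) (x : ℝ) :
    ‖(K (wp w ψ))^[l] f x - (K w)^[l] f x‖
      ≤ F * C1 * T * Real.exp (4 * cs * T) * σ * Real.exp ((c * σ^2) * x^2) := by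
  have hF0 : 0 ≤ F := (norm_nonneg _).trans (hF 0)
  have hg := L.g0
  have hcs0 := L.c0
  rw [telescope P.hw P.hψ hf]
  have key : ∀ j ∈ Finset.range l, ‖(K w)^[l - j] (fun y => ψ y * (K (wp w ψ))^[j] f y) x‖
      ≤ F * C1 * σ^3 * Real.exp (4 * cs * T) * Real.exp ((c * σ^2) * x^2) := by
    intro j hj
    have hjl := Finset.mem_range.1 hj
    have h1 : ∀ y, ‖(K (wp w ψ))^[j] f y‖ ≤ F * Real.exp (2 * cs * T) * Real.exp (-(0 * σ^2) * y^2) := by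
      intro y
      refine L.iter' (c := 0) (by linarith) hcs0.le P.bw' (by simpa using hF) j ?_ hcs0.le (by positivity) y
      refine le_trans ?_ hT
      gcongr
    have h2 : ∀ y, ‖ψ y * (K (wp w ψ))^[j] f y‖ ≤ (C1 * σ^3 * (F * Real.exp (2 * cs * T))) * Real.exp (-((-c) * σ^2) * y^2) := by
      intro y
      rw [norm_mul]
      have := mul_le_mul (P.bψ y) (h1 y) (norm_nonneg _) (by positivity)
      refine this.trans (le_of_eq ?_)
      simp; ring
    have h3 := L.iter' (c := -c) (c' := -c) (T := T) (by linarith) (by linarith) P.bw h2 (l - j) ?_ (by linarith)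
      (by have : 0 ≤ γ/2 * (σ^2 * (l - j : ℕ)) := by positivity
          linarith) x
    · refine h3.trans (le_of_eq ?_)
      rw [show 4 * cs * T = 2 * cs * T + 2 * cs * T by ring, Real.exp_add]
      simp; ring
    · refine le_trans ?_ hT
      gcongr
      omega
  refine (norm_sum_le _ _).trans ((Finset.sum_le_sum key).trans ?_)
  rw [Finset.sum_const, Finset.card_range, nsmul_eq_mul]
  calc (l:ℝ) * (F * C1 * σ^3 * Real.exp (4 * cs * T) * Real.exp ((c * σ^2) * x^2))
      = F * C1 * (σ^2 * l) * Real.exp (4 * cs * T) * σ * Real.exp ((c * σ^2) * x^2) := by ring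
    _ ≤ _ := by gcongr

lemma Pert.strong {σ γ cs c C1 : ℝ} {w ψ : ℝ → ℂ} (P : Pert σ γ c C1 w ψ) (L : Lev (σ^2) γ cs)
    (hσ : 0 < σ) (hC1 : 0 ≤ C1)
    (hc0 : 0 < c) (hcs : 2 * c ≤ cs) {f : ℝ → ℂ} (hf : BM f) {F T T1 : ℝ} (hF : ∀ x, ‖f x‖ ≤ F) (l : ℕ)
    (hT : σ^2 * l ≤ T) (hT1 : T1 ≤ σ^2 * l) (hcT : 2 * c ≤ γ/2 * (T1/2)) (x : ℝ) :
    ‖(K (wp w ψ))^[l] f x - (K w)^[l] f x‖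
      ≤ F * C1 * T * Real.exp (4 * cs * T) * σ * Real.exp (-(c * σ^2) * x^2) := by
  have hF0 : 0 ≤ F := (norm_nonneg _).trans (hF 0)
  have hg := L.g0
  have hcs0 := L.c0
  rw [telescope P.hw P.hψ hf]
  have key : ∀ j ∈ Finset.range l, ‖(K w)^[l - j] (fun y => ψ y * (K (wp w ψ))^[j] f y) x‖
      ≤ F * C1 * σ^3 * Real.exp (4 * cs * T) * Real.exp (-(c * σ^2) * x^2) := by
    intro j hj
    have hjl := Finset.mem_range.1 hj
    have hjT : σ^2 * j ≤ T := by
      refine le_trans ?_ hT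
      gcongr
    have hjT' : σ^2 * (l - j : ℕ) ≤ T := by
      refine le_trans ?_ hT
      gcongr
      omega
    obtain ⟨c1, c1a, c1b, c1c, c1d⟩ : ∃ c1, 0 ≤ c1 ∧ c1 ≤ cs ∧ c1 ≤ γ/2 * (σ^2 * j) ∧
        c ≤ c1 - c + γ/2 * (σ^2 * (l - j : ℕ)) := by
      rcases le_total (T1/2) (σ^2 * j) with h | h
      · refine ⟨2 * c, by linarith, hcs, hcT.trans (by gcongr), ?_⟩
        have : 0 ≤ γ/2 * (σ^2 * (l - j : ℕ)) := by positivity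
        linarith
      · refine ⟨0, le_rfl, hcs0.le, by positivity, ?_⟩
        have : γ/2 * (T1/2) ≤ γ/2 * (σ^2 * (l - j : ℕ)) := by
          gcongr
          rw [Nat.cast_sub hjl.le]
          linarith
        linarith
    have h1 : ∀ y, ‖(K (wp w ψ))^[j] f y‖ ≤ F * Real.exp (2 * cs * T) * Real.exp (-(c1 * σ^2) * y^2) := by
      intro y
      exact L.iter' (c := 0) (by linarith) hcs0.le P.bw' (by simpa using hF) j hjT c1b (by linarith) y
    have h2 : ∀ y, ‖ψ y * (K (wp w ψ))^[j] f y‖ ≤ (C1 * σ^3 * (F * Real.exp (2 * cs * T))) * Real.exp (-((c1 - c) * σ^2) * y^2) := by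
      intro y
      rw [norm_mul]
      have := mul_le_mul (P.bψ y) (h1 y) (norm_nonneg _) (by positivity)
      refine this.trans (le_of_eq ?_)
      rw [show -((c1 - c) * σ^2) * y^2 = c * σ^2 * y^2 + -(c1 * σ^2) * y^2 by ring, Real.exp_add]
      ring
    have h3 := L.iter' (c := c1 - c) (c' := c) (T := T) (by linarith) (by linarith) P.bw h2 (l - j) hjT' (by linarith)
      c1d x
    refine h3.trans (le_of_eq ?_)
    rw [show 4 * cs * T = 2 * cs * T + 2 * cs * T by ring, Real.exp_add]
    ring
  refine (norm_sum_le _ _).trans ((Finset.sum_le_sum key).trans ?_)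
  rw [Finset.sum_const, Finset.card_range, nsmul_eq_mul]
  calc (l:ℝ) * (F * C1 * σ^3 * Real.exp (4 * cs * T) * Real.exp (-(c * σ^2) * x^2))
      = F * C1 * (σ^2 * l) * Real.exp (4 * cs * T) * σ * Real.exp (-(c * σ^2) * x^2) := by ring
    _ ≤ _ := by gcongr

end BandChain

namespace BandChain

/-- Parameters of the free complex chain. -/
structure Free (g ω : ℂ) : Prop where
  g0 : 0 < g.re
  o0 : 0 < ω.re
  og : 0 < (ω - g).re
  sq : ω^2 = g^2 + 2 * g

noncomputable def w0 (g : ℂ) (y : ℝ) : ℂ := Complex.exp (-g * (y:ℂ)^2)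
noncomputable def ef (g ω : ℂ) (x : ℝ) : ℂ := Complex.exp (-(1/2) * (ω - g) * (x:ℂ)^2)
noncomputable def lam (g ω : ℂ) : ℂ :=
  ((√(2 * Real.pi))⁻¹ : ℝ) * ((Real.pi : ℂ) / ((1 + g + ω)/2)) ^ (1/2 : ℂ)
noncomputable def Nn (ω : ℂ) : ℂ := (((Real.pi : ℂ) / ω) ^ (1/2 : ℂ))⁻¹
noncomputable def eL (g ω : ℂ) (y : ℝ) : ℂ := Nn ω * Complex.exp (-(1/2) * (ω + g) * (y:ℂ)^2)
noncomputable def al (g ω : ℂ) (f : ℝ → ℂ) : ℂ := ∫ y, eL g ω y * f y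

lemma csqrt_sq (z : ℂ) : (z ^ (1/2 : ℂ))^2 = z := by
  rw [← Complex.cpow_nat_mul]; simp

lemma cg (b c d : ℂ) (hb : -(1/2) < b.re) (x : ℝ) :
    ∫ y : ℝ, Complex.exp (-b * (y:ℂ)^2 + c * y + d) * ((gk (y - x) : ℝ) : ℂ)
      = ((√(2 * Real.pi))⁻¹ : ℝ) * ((Real.pi : ℂ) / (b + 1/2)) ^ (1/2 : ℂ)
        * Complex.exp (d - (1/2) * (x:ℂ)^2 + (c + x)^2 / (4 * (b + 1/2))) := by
  have hb' : (-(b + 1/2)).re < 0 := by simp; linarith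
  have hne : b + 1/2 ≠ 0 := fun h => by rw [h] at hb'; simp at hb'
  have := integral_cexp_quadratic hb' (c + x) (d - (1/2) * (x:ℂ)^2)
  have e : ∀ y : ℝ, Complex.exp (-b * (y:ℂ)^2 + c * y + d) * ((gk (y - x) : ℝ) : ℂ)
     = ((√(2 * Real.pi))⁻¹ : ℝ) * Complex.exp (-(b+1/2) * (y:ℂ)^2 + (c + x) * y + (d - (1/2) * (x:ℂ)^2)) := by
    intro y
    unfold gk
    rw [Complex.ofReal_mul, Complex.ofReal_exp, mul_left_comm, ← Complex.exp_add]
    congr 2; push_cast; ring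
  simp_rw [e]
  rw [integral_const_mul, this, mul_assoc, neg_neg]
  congr 3
  field_simp
  ring

variable {g ω : ℂ}

lemma norm_cexp_sq (b : ℂ) (y : ℝ) : ‖Complex.exp (-b * (y:ℂ)^2)‖ = Real.exp (-b.re * y^2) := by
  rw [Complex.norm_exp]
  congr 1
  rw [← Complex.ofReal_pow, Complex.re_mul_ofReal, Complex.neg_re]

lemma BM_cexp_sq {b : ℂ} (hb : 0 ≤ b.re) : BM (fun y : ℝ => Complex.exp (-b * (y:ℂ)^2)) := by
  refine ⟨by fun_prop, 1, fun y => ?_⟩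
  rw [norm_cexp_sq]
  apply Real.exp_le_one_iff.2
  nlinarith [sq_nonneg y, mul_nonneg hb (sq_nonneg y)]

lemma Free.w0_BM (h : Free g ω) : BM (w0 g) := BM_cexp_sq h.g0.le

lemma ef_eq (x : ℝ) : ef g ω x = Complex.exp (-((1/2) * (ω - g)) * (x:ℂ)^2) := by
  unfold ef; congr 1; ring

lemma eL_eq (x : ℝ) : eL g ω x = Nn ω * Complex.exp (-((1/2) * (ω + g)) * (x:ℂ)^2) := by
  unfold eL; congr 2; ring

lemma half_re (z : ℂ) : ((1/2) * z).re = z.re / 2 := by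
  have : (1/2 : ℂ) = ((1/2 : ℝ) : ℂ) := by norm_num
  rw [this, Complex.re_ofReal_mul]; ring

lemma Free.ef_BM (h : Free g ω) : BM (ef g ω) := by
  rw [show ef g ω = fun x => _ from funext ef_eq]
  apply BM_cexp_sq
  rw [half_re]; have := h.og; linarith

lemma Free.eL_int (h : Free g ω) : Integrable (eL g ω) := by
  rw [show eL g ω = fun x => _ from funext eL_eq]
  apply Integrable.const_mul
  have : 0 < ((1/2) * (ω + g)).re := by
    rw [half_re, Complex.add_re]; have := h.g0; have := h.o0; linarith
  simpa using integrable_cexp_quadratic this 0 0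

lemma Free.S_re (h : Free g ω) : 1 < (1 + g + ω).re := by
  simp; linarith [h.g0, h.o0]

lemma Free.S_ne (h : Free g ω) : 1 + g + ω ≠ 0 := fun e => by
  have := h.S_re; rw [e] at this; simp at this; linarith

lemma Free.o_ne (h : Free g ω) : ω ≠ 0 := fun e => by
  have := h.o0; rw [e] at this; simp at this

lemma Free.rS (h : Free g ω) : (1 + g - ω) * (1 + g + ω) = 1 := by
  linear_combination -h.sq

lemma Free.r_eq (h : Free g ω) : 1 + g - ω = (1 + g + ω)⁻¹ := eq_inv_of_mul_eq_one_left h.rS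

lemma Free.r_norm (h : Free g ω) : ‖1 + g - ω‖ < 1 := by
  rw [h.r_eq, norm_inv]
  apply inv_lt_one_of_one_lt₀
  exact h.S_re.trans_le (Complex.re_le_norm _)

lemma Free.r_ne (h : Free g ω) : 1 + g - ω ≠ 0 := by rw [h.r_eq]; exact inv_ne_zero h.S_ne

lemma Free.lam_sq (h : Free g ω) : (lam g ω)^2 = (1 + g + ω)⁻¹ := by
  unfold lam
  rw [mul_pow, csqrt_sq, ← Complex.ofReal_pow, inv_pow, Real.sq_sqrt (by positivity)]
  have := h.S_ne
  have hp : (Real.pi : ℂ) ≠ 0 := by exact_mod_cast Real.pi_ne_zero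
  push_cast
  field_simp

lemma Free.lam_ne (h : Free g ω) : lam g ω ≠ 0 := fun e => by
  have := h.lam_sq
  rw [e] at this
  exact inv_ne_zero h.S_ne (by rw [← this]; simp)

lemma Free.K_ef (h : Free g ω) (x : ℝ) : K (w0 g) (ef g ω) x = lam g ω * ef g ω x := by
  have hb : -(1/2) < ((1/2) * (g + ω)).re := by
    rw [half_re, Complex.add_re]; have := h.g0; have := h.o0; linarith
  have := cg ((1/2) * (g + ω)) 0 0 hb x
  unfold K
  calc _ = ∫ y : ℝ, Complex.exp (-((1/2) * (g + ω)) * (y:ℂ)^2 + 0 * y + 0) * ((gk (y - x) : ℝ) : ℂ) := by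
        congr 1; ext y
        rw [gk_symm, mul_comm]; congr 1
        unfold w0 ef
        rw [← Complex.exp_add]; congr 1; ring
    _ = _ := by
        rw [this]; unfold lam ef
        congr 3
        · ring
        · have h1 := h.S_ne
          have h2 : (1/2 : ℂ) * (g + ω) + 1/2 = (1 + g + ω)/2 := by ring
          rw [h2]
          have h3 := h.r_eq
          have : (0 + (x:ℂ))^2 / (4 * ((1 + g + ω)/2)) = (1/2) * (1 + g + ω)⁻¹ * (x:ℂ)^2 := by
            field_simp; ring
          rw [this, ← h3]; ring

lemma Free.Kit_ef (h : Free g ω) (m : ℕ) : (K (w0 g))^[m] (ef g ω) = fun x => (lam g ω)^m * ef g ω x := by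
  induction m with
  | zero => simp
  | succ m ih =>
    rw [Function.iterate_succ_apply', ih]
    ext x
    rw [K_smul, h.K_ef]; ring

lemma Free.eL_conv (h : Free g ω) (y : ℝ) :
    (∫ x, eL g ω x * ((gk (x - y) : ℝ) : ℂ)) * w0 g y = lam g ω * eL g ω y := by
  have hb : -(1/2) < ((1/2) * (ω + g)).re := by
    rw [half_re, Complex.add_re]; have := h.g0; have := h.o0; linarith
  have := cg ((1/2) * (ω + g)) 0 0 hb y
  simp_rw [eL_eq, mul_assoc]
  rw [integral_const_mul]
  simp only [zero_mul, add_zero] at this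
  simp_rw [this]
  unfold lam w0
  have h2 : (1/2 : ℂ) * (ω + g) + 1/2 = (1 + g + ω)/2 := by ring
  rw [h2, mul_assoc, mul_assoc, ← Complex.exp_add]
  have h1 := h.S_ne
  have h3 := h.r_eq
  have e : (0 + (y:ℂ))^2 / (4 * ((1 + g + ω)/2)) = (1/2) * (1 + g + ω)⁻¹ * (y:ℂ)^2 := by
            field_simp; ring
  rw [e, ← h3]
  have : (0 - 1 / 2 * (y:ℂ) ^ 2 + 1 / 2 * (1 + g - ω) * (y:ℂ) ^ 2 + -g * (y:ℂ) ^ 2) = -(1 / 2 * (ω + g)) * (y:ℂ) ^ 2 := by ring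
  rw [this]; ring

lemma Free.al_K (h : Free g ω) {f : ℝ → ℂ} (hf : BM f) :
    al g ω (K (w0 g) f) = lam g ω * al g ω f := by
  unfold al
  rw [K_fubini h.w0_BM hf h.eL_int, ← integral_const_mul]
  congr 1; ext y
  rw [h.eL_conv, mul_assoc]

lemma Free.al_Kit (h : Free g ω) {f : ℝ → ℂ} (hf : BM f) (m : ℕ) :
    al g ω ((K (w0 g))^[m] f) = (lam g ω)^m * al g ω f := by
  induction m with
  | zero => simp
  | succ m ih =>
    rw [Function.iterate_succ_apply', h.al_K (Kit_BM h.w0_BM hf m), ih]; ring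

lemma Free.gauss_ne {z : ℂ} (hz : z ≠ 0) : ((Real.pi : ℂ) / z) ^ (1/2 : ℂ) ≠ 0 := by
  intro e
  have := csqrt_sq ((Real.pi:ℂ)/z)
  rw [e] at this
  have hp : (Real.pi : ℂ) ≠ 0 := by exact_mod_cast Real.pi_ne_zero
  exact div_ne_zero hp hz (by rw [← this]; simp)

lemma Free.al_ef (h : Free g ω) : al g ω (ef g ω) = 1 := by
  unfold al eL ef
  have : ∀ y : ℝ, Nn ω * Complex.exp (-(1/2) * (ω + g) * (y:ℂ)^2) * Complex.exp (-(1/2) * (ω - g) * (y:ℂ)^2)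
    = Nn ω * Complex.exp (-ω * (y:ℂ)^2) := fun y => by
    rw [mul_assoc, ← Complex.exp_add]; congr 2; ring
  simp_rw [this]
  rw [integral_const_mul, integral_gaussian_complex h.o0]
  unfold Nn
  exact inv_mul_cancel₀ (Free.gauss_ne h.o_ne)

lemma al_add (h : Free g ω) {f k : ℝ → ℂ} (hf : BM f) (hk : BM k) :
    al g ω (fun x => f x + k x) = al g ω f + al g ω k := by
  unfold al
  rw [← integral_add (hf.integrable_mul h.eL_int) (hk.integrable_mul h.eL_int)]
  congr 1; ext y; ring

lemma al_sub (h : Free g ω) {f k : ℝ → ℂ} (hf : BM f) (hk : BM k) :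
    al g ω (fun x => f x - k x) = al g ω f - al g ω k := by
  unfold al
  rw [← integral_sub (hf.integrable_mul h.eL_int) (hk.integrable_mul h.eL_int)]
  congr 1; ext y; ring

lemma al_smul (c : ℂ) {f : ℝ → ℂ} :
    al g ω (fun x => c * f x) = c * al g ω f := by
  unfold al
  rw [← integral_const_mul]
  congr 1; ext y; ring

noncomputable def QQ (g ω q : ℂ) : ℂ := ω * (1 + q^2)/(1 - q^2) + g
noncomputable def PP (g ω q : ℂ) : ℂ := ω * (1 + q^2)/(1 - q^2) - g
noncomputable def BB (ω q : ℂ) : ℂ := 2 * ω * q/(1 - q^2)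

lemma one_sub_sq_ne {q : ℂ} (hq : ‖q‖ < 1) : 1 - q^2 ≠ 0 := by
  intro e
  have : q^2 = 1 := (sub_eq_zero.1 e).symm
  have h2 : ‖q‖^2 = 1 := by rw [← norm_pow, this]; simp
  nlinarith [norm_nonneg q]

lemma Free.kernel (h : Free g ω) (m : ℕ) :
    ∃ D : ℂ, 0 < (QQ g ω ((1 + g - ω)^(m+1))).re ∧ ∀ f, BM f → ∀ x : ℝ,
      (K (w0 g))^[m+1] f x = ∫ y : ℝ, D * Complex.exp (-((1/2) * QQ g ω ((1 + g - ω)^(m+1))) * (y:ℂ)^2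
        + (BB ω ((1 + g - ω)^(m+1)) * x) * y + (-(1/2) * PP g ω ((1 + g - ω)^(m+1)) * (x:ℂ)^2)) * f y := by
  have hr := h.r_norm
  have hr0 := h.r_ne
  obtain ⟨r, hrdef⟩ : ∃ r, r = 1 + g - ω := ⟨_, rfl⟩
  have hS : 1 + g + ω = r⁻¹ := by rw [hrdef, h.r_eq, inv_inv]
  rw [← hrdef] at hr hr0 ⊢
  have hg : g = (r + r⁻¹)/2 - 1 := by rw [← hS, hrdef]; ring
  have ho : ω = (r⁻¹ - r)/2 := by rw [← hS, hrdef]; ring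
  have hr2 := one_sub_sq_ne hr
  induction m with
  | zero =>
    have eQ : QQ g ω (r^(0+1)) = 1 + 2 * g := by
      rw [zero_add, pow_one]; unfold QQ; rw [hg, ho]; field_simp; ring
    have eP : PP g ω (r^(0+1)) = 1 := by
      rw [zero_add, pow_one]; unfold PP; rw [hg, ho]; field_simp; ring
    have eB : BB ω (r^(0+1)) = 1 := by
      rw [zero_add, pow_one]; unfold BB; rw [ho]; field_simp
    rw [eQ, eP, eB]
    refine ⟨((√(2 * Real.pi))⁻¹ : ℝ), by simp; linarith [h.g0], fun f hf x => ?_⟩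
    simp only [zero_add, Function.iterate_one]
    unfold K
    congr 1; ext y
    unfold gk w0
    rw [Complex.ofReal_mul, Complex.ofReal_exp]
    rw [show ∀ a b c d : ℂ, a * b * (c * d) = a * (b * c) * d by intros; ring, ← Complex.exp_add]
    congr 3
    push_cast; ring
  | succ m ih =>
    obtain ⟨D, hQ, ih⟩ := ih
    set q := r^(m+1) with hq
    have hq1 : ‖q‖ < 1 := by
      rw [hq, norm_pow]; exact pow_lt_one₀ (norm_nonneg _) hr (by omega)
    have hq2 := one_sub_sq_ne hq1
    have hrq : ‖r * q‖ < 1 := by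
      rw [norm_mul]; nlinarith [norm_nonneg r, norm_nonneg q]
    have hrq2 := one_sub_sq_ne hrq
    have hrq3 : 1 - r^2 * q^2 ≠ 0 := by rw [← mul_pow]; exact hrq2
    have eq' : r^(m+1+1) = r * q := by rw [hq]; ring
    rw [eq']
    have eS : QQ g ω q + 1 = (1 - (r*q)^2)/(r * (1 - q^2)) := by
      unfold QQ; rw [hg, ho]; field_simp; ring
    have eQ : QQ g ω (r*q) = 1 + 2 * g - (QQ g ω q + 1)⁻¹ := by
      rw [eS]; unfold QQ; rw [hg, ho, inv_div]; field_simp; ring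
    have eB : BB ω (r*q) = BB ω q * (QQ g ω q + 1)⁻¹ := by
      rw [eS]; unfold BB; rw [ho, inv_div]; field_simp
    have eP : PP g ω (r*q) = PP g ω q - (BB ω q)^2 * (QQ g ω q + 1)⁻¹ := by
      rw [eS]; unfold PP BB; rw [hg, ho, inv_div]; field_simp; ring
    have hQ1 : 1 < (QQ g ω q + 1).re := by simpa using hQ
    have hQn : QQ g ω q + 1 ≠ 0 := fun e => by rw [e] at hQ1; simp at hQ1; linarith
    have hQi : ‖(QQ g ω q + 1)⁻¹‖ < 1 := by
      rw [norm_inv]; exact inv_lt_one_of_one_lt₀ (hQ1.trans_le (Complex.re_le_norm _))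
    refine ⟨D * (((√(2 * Real.pi))⁻¹ : ℝ) * ((Real.pi : ℂ) / ((1/2) * QQ g ω q + 1/2)) ^ (1/2 : ℂ)), ?_, ?_⟩
    · rw [eQ]
      have := (Complex.re_le_norm (QQ g ω q + 1)⁻¹)
      simp only [Complex.sub_re, Complex.add_re, Complex.one_re]
      have h2 : (2 * g).re = 2 * g.re := by simp
      rw [h2]
      linarith [h.g0]
    · intro f hf x
      rw [Function.iterate_succ_apply, ih _ (K_BM h.w0_BM hf) x]
      have hb : 0 < ((1/2) * QQ g ω q).re := by rw [half_re]; linarith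
      rw [K_fubini h.w0_BM hf ((integrable_cexp_quadratic hb _ _).const_mul D)]
      congr 1; ext y
      simp_rw [mul_assoc D]
      rw [integral_const_mul, cg _ _ _ (by linarith) y]
      unfold w0
      rw [show ∀ a b c d e : ℂ, a * (b * c * d) * e = a * (b * c * (d * e)) by intros; ring,
        ← Complex.exp_add, mul_assoc D]
      congr 4
      rw [eQ, eB, eP]
      have e4 : (4 * ((1/2) * QQ g ω q + 1/2) : ℂ) = 2 * (QQ g ω q + 1) := by ring
      rw [e4]
      field_simp
      ring

end BandChain

namespace BandChain

lemma csqrt_sector {z : ℂ} (hz : 0 < z.re) :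
    0 < (z ^ (1/2 : ℂ)).re ∧ |(z ^ (1/2 : ℂ)).im| < (z ^ (1/2 : ℂ)).re := by
  have h1 : 0 ≤ (z ^ (1/2 : ℂ)).re := by
    rw [one_div, Complex.cpow_inv_two_re]; positivity
  have h2 := csqrt_sq z
  have h3 : (z ^ (1/2 : ℂ)).re^2 - (z ^ (1/2 : ℂ)).im^2 = z.re := by
    rw [← congrArg Complex.re h2]; simp [pow_two]
  have h4 : |(z ^ (1/2 : ℂ)).im| < (z ^ (1/2 : ℂ)).re := abs_lt_of_sq_lt_sq (by linarith) h1
  exact ⟨(abs_nonneg _).trans_lt h4, h4⟩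

lemma csqrt_ratio {z v : ℂ} (hz : 0 < z.re) (hv : 0 < v.re) :
    0 < (z ^ (1/2 : ℂ) / v ^ (1/2 : ℂ)).re := by
  obtain ⟨a1, a2⟩ := csqrt_sector hz
  obtain ⟨b1, b2⟩ := csqrt_sector hv
  generalize z ^ (1/2 : ℂ) = s at *
  generalize v ^ (1/2 : ℂ) = t at *
  have ht : 0 < Complex.normSq t := by
    rw [Complex.normSq_pos]; intro e; rw [e] at b1; simp at b1
  rw [Complex.div_re, ← add_div]
  apply div_pos _ ht
  rw [abs_lt] at a2 b2
  nlinarith [mul_pos (sub_pos.2 a2.2) (sub_pos.2 b2.2), mul_pos (neg_lt_iff_pos_add.1 a2.1) (neg_lt_iff_pos_add.1 b2.1)]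

lemma rho_bound {ρ q : ℂ} (hρ : 0 < ρ.re) (h : ρ^2 = 1 - q^2) (hq : ‖q‖ ≤ 1/2) :
    1/2 ≤ ‖ρ‖ ∧ ‖ρ⁻¹ - 1‖ ≤ 2 * ‖q‖^2 := by
  have h1 : 1 ≤ ‖ρ + 1‖ := by
    have := Complex.re_le_norm (ρ + 1); simp at this; linarith
  have h2 : ‖ρ - 1‖ * ‖ρ + 1‖ = ‖q‖^2 := by
    rw [← norm_mul, ← norm_pow, ← norm_neg (q^2)]; congr 1; linear_combination h
  have h3 : ‖ρ - 1‖ ≤ ‖q‖^2 := by nlinarith [norm_nonneg (ρ - 1)]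
  have h4 : 1/2 ≤ ‖ρ‖ := by
    have : ‖(1:ℂ)‖ ≤ ‖ρ‖ + ‖ρ - 1‖ := by
      have := norm_sub_le ρ (ρ - 1); simpa using this
    rw [norm_one] at this
    nlinarith [norm_nonneg q]
  refine ⟨h4, ?_⟩
  have hn : ρ ≠ 0 := fun e => by rw [e] at hρ; simp at hρ
  have : ρ⁻¹ - 1 = -(ρ - 1) * ρ⁻¹ := by field_simp; ring
  rw [this, norm_mul, norm_neg, norm_inv]
  have h5 : ‖ρ‖⁻¹ ≤ 2 := by
    rw [inv_le_comm₀ (by linarith) (by norm_num)]; linarith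
  nlinarith [norm_nonneg (ρ - 1), sq_nonneg ‖q‖, inv_nonneg.2 (norm_nonneg ρ)]

lemma norm_exp_sub_one' (z : ℂ) : ‖Complex.exp z - 1‖ ≤ ‖z‖ * Real.exp ‖z‖ := by
  have := Complex.norm_exp_sub_sum_le_norm_mul_exp z 1
  simpa using this

lemma norm_Nn (ω : ℂ) : ‖Nn ω‖ = √(‖ω‖ / Real.pi) := by
  unfold Nn
  rw [norm_inv]
  have h := congrArg norm (csqrt_sq ((Real.pi:ℂ)/ω))
  rw [norm_pow, norm_div, Complex.norm_real, Real.norm_eq_abs, abs_of_pos Real.pi_pos] at h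
  rw [← Real.sqrt_sq (norm_nonneg (((Real.pi:ℂ)/ω) ^ (1/2 : ℂ))), h, ← Real.sqrt_inv, inv_div]

variable {g ω : ℂ}

lemma Free.kernelD (h : Free g ω) (m : ℕ) {q : ℂ} (hq : q = (1 + g - ω)^(m+1)) (hq2 : ‖q‖ ≤ 1/2) :
    ∃ ρ : ℂ, 1/2 ≤ ‖ρ‖ ∧ ‖ρ⁻¹ - 1‖ ≤ 2 * ‖q‖^2 ∧ ∀ f, BM f → ∀ x : ℝ,
      Integrable (fun y : ℝ => (Nn ω * ρ⁻¹) * Complex.exp (-((1/2) * QQ g ω q) * (y:ℂ)^2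
        + (BB ω q * x) * y + (-(1/2) * PP g ω q * (x:ℂ)^2)) * f y) ∧
      (lam g ω)⁻¹^(m+1) * (K (w0 g))^[m+1] f x = ∫ y : ℝ, (Nn ω * ρ⁻¹) * Complex.exp (-((1/2) * QQ g ω q) * (y:ℂ)^2
        + (BB ω q * x) * y + (-(1/2) * PP g ω q * (x:ℂ)^2)) * f y := by
  obtain ⟨D, hQ, hD⟩ := h.kernel m
  rw [← hq] at hQ hD
  have hb : 0 < ((1/2) * QQ g ω q).re := by rw [half_re]; linarith
  have hq1 : 1 - q^2 ≠ 0 := one_sub_sq_ne (by linarith)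
  have hz : 0 < ((1/2) * (QQ g ω q + (ω - g))).re := by
    rw [half_re, Complex.add_re]; linarith [h.og]
  have ez : (1/2) * (QQ g ω q + (ω - g)) = ω / (1 - q^2) := by
    unfold QQ; field_simp; ring
  have hD0 := hD (ef g ω) h.ef_BM 0
  rw [h.Kit_ef] at hD0
  have e0 : ef g ω 0 = 1 := by unfold ef; simp
  beta_reduce at hD0
  rw [e0, mul_one] at hD0
  have e1 : ∀ y : ℝ, D * Complex.exp (-((1/2) * QQ g ω q) * (y:ℂ)^2
        + (BB ω q * (0:ℝ)) * y + (-(1/2) * PP g ω q * ((0:ℝ):ℂ)^2)) * ef g ω y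
      = D * Complex.exp (- (ω / (1 - q^2)) * (y:ℂ)^2) := fun y => by
    rw [← ez]; unfold ef; rw [mul_assoc, ← Complex.exp_add]; congr 2; push_cast; ring
  simp_rw [e1] at hD0
  rw [ez] at hz
  rw [integral_const_mul, integral_gaussian_complex hz] at hD0
  have hp : (Real.pi : ℂ) ≠ 0 := by exact_mod_cast Real.pi_ne_zero
  have hinv : ∀ z : ℂ, 0 < z.re → 0 < ((Real.pi : ℂ)/z).re := fun z hz => by
    rw [div_eq_mul_inv, Complex.re_ofReal_mul, Complex.inv_re]
    have : 0 < Complex.normSq z := by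
      rw [Complex.normSq_pos]; intro e; rw [e] at hz; simp at hz
    have := Real.pi_pos
    positivity
  have o_ne := h.o_ne
  set s1 := ((Real.pi:ℂ) / (ω / (1 - q^2))) ^ (1/2 : ℂ) with hs1
  set s0 := ((Real.pi:ℂ) / ω) ^ (1/2 : ℂ) with hs0
  have n0 : s0 ≠ 0 := Free.gauss_ne o_ne
  have n1 : s1 ≠ 0 := Free.gauss_ne (div_ne_zero o_ne hq1)
  have hρ : 0 < (s1 / s0).re := csqrt_ratio (hinv _ hz) (hinv _ h.o0)
  have hρ2 : (s1/s0)^2 = 1 - q^2 := by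
    rw [div_pow, hs1, hs0, csqrt_sq, csqrt_sq]; field_simp
  obtain ⟨b1, b2⟩ := rho_bound hρ hρ2 hq2
  refine ⟨s1/s0, b1, b2, fun f hf x => ?_⟩
  constructor
  · exact hf.integrable_mul ((integrable_cexp_quadratic hb _ _).const_mul _)
  have hl := h.lam_ne
  rw [hD f hf x, ← integral_const_mul]
  congr 1; ext y
  have : Nn ω * (s1/s0)⁻¹ = (lam g ω)⁻¹^(m+1) * D := by
    unfold Nn; rw [← hs0, inv_pow, hD0]
    have : D ≠ 0 := by rintro rfl; simp [hl] at hD0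
    field_simp
  rw [this]; ring

lemma Free.block (h : Free g ω) {cc M : ℝ} (hcc : 0 < cc) (hM : 1 ≤ M) (h1 : 8 * cc ≤ (ω - g).re)
    (h2 : ‖ω‖ ≤ M * cc) (m : ℕ) (hq1 : ‖1 + g - ω‖^(m+1) ≤ 1/2)
    (hq2 : 2 * M * ‖1 + g - ω‖^(m+1) ≤ 1) {f : ℝ → ℂ} (hf : BM f) {F : ℝ} (hF : ∀ x, ‖f x‖ ≤ F) (x : ℝ) :
    ‖(lam g ω)⁻¹^(m+1) * (K (w0 g))^[m+1] f x - al g ω f * ef g ω x‖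
      ≤ 6 * M^2 * ‖1 + g - ω‖^(m+1) * F * Real.exp (-(2 * cc) * x^2) := by
  rw [← norm_pow] at hq1 hq2 ⊢
  obtain ⟨q, hq⟩ : ∃ q, q = (1 + g - ω)^(m+1) := ⟨_, rfl⟩
  rw [← hq] at hq1 hq2 ⊢
  obtain ⟨ρ, r1, r2, hk⟩ := h.kernelD m hq hq1
  obtain ⟨ki, ke⟩ := hk f hf x
  have hF0 : 0 ≤ F := (norm_nonneg _).trans (hF 0)
  have hqn : 1 - q^2 ≠ 0 := one_sub_sq_ne (by linarith)
  rw [ke]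
  unfold al
  rw [← integral_mul_const, ← integral_sub ki ((hf.integrable_mul h.eL_int).mul_const _)]
  have hgi : Integrable (fun y : ℝ => ‖Nn ω‖ * ((4 * M + 2) * ‖q‖) * F * Real.exp (-(2*cc) * x^2) * Real.exp (-(2 * cc) * y^2)) :=
    (integrable_exp_neg_mul_sq (by linarith : (0:ℝ) < 2 * cc)).const_mul _
  have hb := norm_integral_le_of_norm_le hgi (f := fun y : ℝ => (Nn ω * ρ⁻¹) * Complex.exp (-((1/2) * QQ g ω q) * (y:ℂ)^2
        + (BB ω q * x) * y + (-(1/2) * PP g ω q * (x:ℂ)^2)) * f y - eL g ω y * f y * ef g ω x) ?_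
  · refine hb.trans ?_
    rw [integral_const_mul, integral_gaussian, norm_Nn]
    have hs : √(‖ω‖ / Real.pi) * √(Real.pi / (2 * cc)) ≤ M := by
      rw [← Real.sqrt_mul (by positivity), Real.sqrt_le_left (by linarith)]
      have := Real.pi_pos
      have e : ‖ω‖ / Real.pi * (Real.pi / (2 * cc)) = ‖ω‖ / (2 * cc) := by field_simp
      rw [e, div_le_iff₀ (by linarith)]
      nlinarith [mul_le_mul_of_nonneg_right (mul_le_mul_of_nonneg_left hM (by linarith : 0 ≤ M)) hcc.le]
    calc _ = (√(‖ω‖ / Real.pi) * √(Real.pi / (2 * cc))) * ((4 * M + 2) * ‖q‖ * F * Real.exp (-(2*cc) * x^2)) := by ring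
      _ ≤ M * ((6 * M) * ‖q‖ * F * Real.exp (-(2*cc) * x^2)) := by
        gcongr; linarith
      _ = _ := by ring
  · refine Filter.Eventually.of_forall fun y => ?_
    obtain ⟨ε, hε⟩ : ∃ ε, ε = 2 * ω * q^2/(1 - q^2) := ⟨_, rfl⟩
    obtain ⟨z, hz⟩ : ∃ z, z = -(1/2) * ε * ((x:ℂ)^2 + (y:ℂ)^2) + BB ω q * x * y := ⟨_, rfl⟩
    have eQ : QQ g ω q = ω + g + ε := by rw [hε]; unfold QQ; field_simp; ring
    have eP : PP g ω q = ω - g + ε := by rw [hε]; unfold PP; field_simp; ring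
    have e : (Nn ω * ρ⁻¹) * Complex.exp (-((1/2) * QQ g ω q) * (y:ℂ)^2
        + (BB ω q * x) * y + (-(1/2) * PP g ω q * (x:ℂ)^2)) * f y - eL g ω y * f y * ef g ω x
        = Nn ω * (Complex.exp (-((1/2) * (ω - g)) * (x:ℂ)^2) * Complex.exp (-((1/2) * (ω + g)) * (y:ℂ)^2)) *
          (ρ⁻¹ * (Complex.exp z - 1) + (ρ⁻¹ - 1)) * f y := by
      have : Complex.exp (-((1/2) * QQ g ω q) * (y:ℂ)^2
        + (BB ω q * x) * y + (-(1/2) * PP g ω q * (x:ℂ)^2)) =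
        (Complex.exp (-((1/2) * (ω - g)) * (x:ℂ)^2) * Complex.exp (-((1/2) * (ω + g)) * (y:ℂ)^2)) * Complex.exp z := by
        rw [← Complex.exp_add, ← Complex.exp_add, hz, eQ, eP]; congr 1; ring
      rw [this, eL_eq, ef_eq]; ring
    rw [e]
    set S := x^2 + y^2 with hS
    have hS0 : 0 ≤ S := by positivity
    have h3 : 3/4 ≤ ‖1 - q^2‖ := by
      have : ‖(1:ℂ)‖ ≤ ‖1 - q^2‖ + ‖q^2‖ := by
        have := norm_add_le (1 - q^2) (q^2); simpa using this
      rw [norm_one, norm_pow] at this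
      nlinarith [norm_nonneg q]
    have hεn : ‖ε‖ ≤ 4/3 * ‖ω‖ * ‖q‖ := by
      rw [hε, norm_div, div_le_iff₀ (by linarith), norm_mul, norm_mul, norm_pow, Complex.norm_ofNat]
      have : 0 ≤ ‖ω‖ * ‖q‖ := by positivity
      nlinarith [mul_nonneg this (sub_nonneg.2 h3), mul_nonneg this (sub_nonneg.2 hq1)]
    have hBn : ‖BB ω q‖ ≤ 8/3 * ‖ω‖ * ‖q‖ := by
      unfold BB
      rw [norm_div, div_le_iff₀ (by linarith), norm_mul, norm_mul, Complex.norm_ofNat]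
      have : 0 ≤ ‖ω‖ * ‖q‖ := by positivity
      nlinarith [mul_nonneg this (sub_nonneg.2 h3), mul_nonneg this (sub_nonneg.2 hq1)]
    have hzn : ‖z‖ ≤ 2 * ‖ω‖ * ‖q‖ * S := by
      have hxy : |x| * |y| ≤ S/2 := by
        rw [hS, ← sq_abs x, ← sq_abs y]; nlinarith [sq_nonneg (|x| - |y|)]
      have e1 : ‖-(1/2) * ε * ((x:ℂ)^2 + (y:ℂ)^2)‖ = ‖ε‖ * S / 2 := by
        have : (x:ℂ)^2 + (y:ℂ)^2 = (S : ℝ) := by rw [hS]; push_cast; ring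
        rw [this, norm_mul, norm_mul, Complex.norm_real, Real.norm_of_nonneg hS0]; norm_num; ring
      have e2 : ‖BB ω q * x * y‖ = ‖BB ω q‖ * (|x| * |y|) := by
        rw [norm_mul, norm_mul, Complex.norm_real, Complex.norm_real]; simp [mul_assoc]
      rw [hz]
      refine (norm_add_le _ _).trans ?_
      rw [e1, e2]
      calc _ ≤ (4/3 * ‖ω‖ * ‖q‖) * S/2 + (8/3 * ‖ω‖ * ‖q‖) * (S/2) := by gcongr
        _ = _ := by ring
    have hzn2 : ‖z‖ ≤ cc * S := by
      refine hzn.trans ?_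
      gcongr
      nlinarith [mul_le_mul_of_nonneg_right h2 (norm_nonneg q), mul_le_mul_of_nonneg_right hq2 hcc.le]
    have hSe : S * cc ≤ Real.exp (cc * S) := by
      have := Real.add_one_le_exp (cc * S); linarith
    have hze : ‖z‖ * Real.exp ‖z‖ ≤ 2 * M * ‖q‖ * Real.exp (2 * cc * S) := by
      calc _ ≤ (2 * (M * cc) * ‖q‖ * S) * Real.exp (cc * S) := by
            gcongr; exact hzn.trans (by gcongr)
        _ = 2 * M * ‖q‖ * (S * cc) * Real.exp (cc * S) := by ring
        _ ≤ 2 * M * ‖q‖ * Real.exp (cc * S) * Real.exp (cc * S) := by gcongr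
        _ = _ := by rw [mul_assoc, ← Real.exp_add]; congr 2; ring
    have hri : ‖ρ⁻¹‖ ≤ 2 := by
      rw [norm_inv, inv_le_comm₀ (by linarith) (by norm_num)]; linarith
    have hlast : ‖ρ⁻¹ * (Complex.exp z - 1) + (ρ⁻¹ - 1)‖ ≤ (4 * M + 2) * ‖q‖ * Real.exp (2 * cc * S) := by
      refine (norm_add_le _ _).trans ?_
      rw [norm_mul]
      have hone : 1 ≤ Real.exp (2 * cc * S) := Real.one_le_exp (by positivity)
      calc _ ≤ 2 * (2 * M * ‖q‖ * Real.exp (2 * cc * S)) + 2 * ‖q‖^2 := by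
            gcongr; exact (norm_exp_sub_one' z).trans hze
        _ ≤ 2 * (2 * M * ‖q‖ * Real.exp (2 * cc * S)) + 2 * ‖q‖ * Real.exp (2 * cc * S) := by
            apply add_le_add le_rfl
            rw [pow_two, ← mul_assoc]
            apply mul_le_mul_of_nonneg_left _ (by positivity)
            linarith
        _ = _ := by ring
    rw [norm_mul, norm_mul, norm_mul, norm_mul, norm_cexp_sq, norm_cexp_sq, half_re, half_re]
    have hE : Real.exp (-((ω - g).re / 2) * x ^ 2) * Real.exp (-((ω + g).re / 2) * y ^ 2)
        ≤ Real.exp (-(4 * cc) * S) := by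
      rw [← Real.exp_add]
      apply Real.exp_le_exp.2
      have : (ω - g).re ≤ (ω + g).re := by simp; linarith [h.g0]
      rw [hS]
      nlinarith [mul_nonneg (sub_nonneg.2 h1) (sq_nonneg x), mul_nonneg (sub_nonneg.2 (h1.trans this)) (sq_nonneg y)]
    calc _ ≤ ‖Nn ω‖ * Real.exp (-(4 * cc) * S) * ((4 * M + 2) * ‖q‖ * Real.exp (2 * cc * S)) * F := by
          gcongr; exact hF y
      _ = ‖Nn ω‖ * ((4 * M + 2) * ‖q‖) * F * (Real.exp (-(4 * cc) * S) * Real.exp (2 * cc * S)) := by ring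
      _ = ‖Nn ω‖ * ((4 * M + 2) * ‖q‖) * F * (Real.exp (-(2*cc) * x^2) * Real.exp (-(2 * cc) * y^2)) := by
          rw [← Real.exp_add, ← Real.exp_add]; congr 2; rw [hS]; ring
      _ = _ := by ring

end BandChain

namespace BandChain

/-- One block of the perturbed chain. -/
structure Blk (σ γ cs c C1 c2 M T Λ : ℝ) (g ω : ℂ) (ψ : ℝ → ℂ) (m : ℕ) : Prop where
  P : Pert σ γ c C1 (w0 g) ψ
  L : Lev (σ^2) γ cs
  F : Free g ω
  hσ : 0 < σ
  hσ1 : σ ≤ 1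
  hC1 : 0 ≤ C1
  c0 : 0 < c
  hcs : 2 * c ≤ cs
  hc2 : c ≤ c2
  hM : 1 ≤ M
  hT0 : 0 ≤ T
  h8 : 8 * (c2 * σ^2) ≤ (ω - g).re
  hω : ‖ω‖ ≤ M * (c2 * σ^2)
  hg : ‖g‖ ≤ ‖ω‖
  m1 : 1 ≤ m
  hT : σ^2 * m ≤ T
  hcT : 2 * c ≤ γ/2 * ((σ^2 * m)/2)
  hq : 6 * M^2 * ‖1 + g - ω‖^m ≤ 1/4
  hΛ : ∀ l ≤ m, ‖(lam g ω)⁻¹‖^l ≤ Λ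

noncomputable def cA (C1 T cs : ℝ) : ℝ := C1 * T * Real.exp (4 * cs * T)
noncomputable def bA (cs C1 M T Λ : ℝ) : ℝ :=
  (M + 1) * (Λ * cA C1 T cs) + Λ * T * (M * (C1 * (1 + cA C1 T cs)))

variable {σ γ cs c C1 c2 M T Λ : ℝ} {g ω : ℂ} {ψ : ℝ → ℂ} {m : ℕ}

lemma Blk.cA0 (B : Blk σ γ cs c C1 c2 M T Λ g ω ψ m) : 0 ≤ cA C1 T cs := by
  unfold cA; have := B.hC1; have := B.hT0; positivity

lemma Blk.Λ1 (B : Blk σ γ cs c C1 c2 M T Λ g ω ψ m) : 1 ≤ Λ := by simpa using B.hΛ 0 (by omega)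

lemma Blk.bA0 (B : Blk σ γ cs c C1 c2 M T Λ g ω ψ m) : 0 ≤ bA cs C1 M T Λ := by
  have := B.cA0; have := B.Λ1; have := B.hM; have := B.hT0; have := B.hC1
  unfold bA; positivity

lemma Blk.cc0 (B : Blk σ γ cs c C1 c2 M T Λ g ω ψ m) : 0 < c2 * σ^2 :=
  mul_pos (B.c0.trans_le B.hc2) (pow_pos B.hσ 2)

lemma Blk.lam_le (B : Blk σ γ cs c C1 c2 M T Λ g ω ψ m) : ‖lam g ω‖ ≤ 1 := by
  have h := congrArg norm B.F.lam_sq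
  rw [← B.F.r_eq, norm_pow] at h
  have := B.F.r_norm
  nlinarith [norm_nonneg (lam g ω)]

lemma Blk.ef_le (B : Blk σ γ cs c C1 c2 M T Λ g ω ψ m) (x : ℝ) :
    ‖ef g ω x‖ ≤ Real.exp (-(4 * (c2 * σ^2)) * x^2) := by
  rw [ef_eq, norm_cexp_sq, half_re]
  apply Real.exp_le_exp.2
  nlinarith [mul_nonneg (sub_nonneg.2 B.h8) (sq_nonneg x)]

lemma Blk.ef_le1 (B : Blk σ γ cs c C1 c2 M T Λ g ω ψ m) (x : ℝ) : ‖ef g ω x‖ ≤ 1 := by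
  refine (B.ef_le x).trans (Real.exp_le_one_iff.2 ?_)
  nlinarith [mul_nonneg B.cc0.le (sq_nonneg x)]

lemma Blk.ef_le2 (B : Blk σ γ cs c C1 c2 M T Λ g ω ψ m) (x : ℝ) :
    ‖ef g ω x‖ ≤ Real.exp (-(c * σ^2) * x^2) := by
  refine (B.ef_le x).trans (Real.exp_le_exp.2 ?_)
  have h := mul_nonneg B.cc0.le (sq_nonneg x)
  have h2 := mul_nonneg (mul_nonneg (sub_nonneg.2 B.hc2) (sq_nonneg σ)) (sq_nonneg x)
  nlinarith

lemma Blk.al_le (B : Blk σ γ cs c C1 c2 M T Λ g ω ψ m) {f : ℝ → ℂ} {F : ℝ}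
    (hf : ∀ y, ‖f y‖ ≤ F * Real.exp (2 * (c2 * σ^2) * y^2)) : ‖al g ω f‖ ≤ M * F := by
  have hcc := B.cc0
  have hM := B.hM
  have hF0 : 0 ≤ F := by simpa using (norm_nonneg _).trans (hf 0)
  obtain ⟨cc, hc⟩ : ∃ cc, cc = c2 * σ^2 := ⟨_, rfl⟩
  have h8 := B.h8
  have hω := B.hω
  rw [← hc] at hf hcc h8 hω
  have hgi : Integrable (fun y : ℝ => ‖Nn ω‖ * F * Real.exp (-(2 * cc) * y^2)) :=
    (integrable_exp_neg_mul_sq (by linarith : (0:ℝ) < 2 * cc)).const_mul _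
  unfold al
  refine (norm_integral_le_of_norm_le hgi (Filter.Eventually.of_forall fun y => ?_)).trans ?_
  · rw [norm_mul, eL_eq, norm_mul, norm_cexp_sq, half_re]
    have hE : Real.exp (-((ω + g).re / 2) * y ^ 2) ≤ Real.exp (-(4 * cc) * y^2) := by
      apply Real.exp_le_exp.2
      have : (ω - g).re ≤ (ω + g).re := by simp; linarith [B.F.g0]
      nlinarith [mul_nonneg (sub_nonneg.2 (h8.trans this)) (sq_nonneg y)]
    calc _ ≤ ‖Nn ω‖ * Real.exp (-(4 * cc) * y^2) * (F * Real.exp (2 * cc * y^2)) := by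
          gcongr; exact hf y
      _ = ‖Nn ω‖ * F * (Real.exp (-(4 * cc) * y^2) * Real.exp (2 * cc * y^2)) := by ring
      _ = _ := by rw [← Real.exp_add]; congr 2; ring
  · rw [integral_const_mul, integral_gaussian, norm_Nn]
    have hs : √(‖ω‖ / Real.pi) * √(Real.pi / (2 * cc)) ≤ M := by
      rw [← Real.sqrt_mul (by positivity), Real.sqrt_le_left (by linarith)]
      have := Real.pi_pos
      have e : ‖ω‖ / Real.pi * (Real.pi / (2 * cc)) = ‖ω‖ / (2 * cc) := by field_simp
      rw [e, div_le_iff₀ (by linarith)]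
      nlinarith [mul_le_mul_of_nonneg_right (mul_le_mul_of_nonneg_left hM (by linarith : 0 ≤ M)) hcc.le]
    calc _ = (√(‖ω‖ / Real.pi) * √(Real.pi / (2 * cc))) * F := by ring
      _ ≤ _ := by gcongr

lemma Blk.al_le' (B : Blk σ γ cs c C1 c2 M T Λ g ω ψ m) {f : ℝ → ℂ} {F : ℝ}
    (hf : ∀ y, ‖f y‖ ≤ F) : ‖al g ω f‖ ≤ M * F := by
  have hF0 : 0 ≤ F := (norm_nonneg _).trans (hf 0)
  refine B.al_le fun y => (hf y).trans ?_
  apply le_mul_of_one_le_right hF0 (Real.one_le_exp _)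
  have := B.cc0; positivity

/-- oddness -/
lemma Blk.al_psi_ef (B : Blk σ γ cs c C1 c2 M T Λ g ω ψ m) :
    ‖al g ω (fun y => ψ y * ef g ω y)‖ ≤ M * (C1 * σ^4) := by
  obtain ⟨ψo, mo, odd, ho⟩ := B.P.odd
  have h0 : al g ω (fun y => ψo y * ef g ω y) = 0 := by
    have h1 : al g ω (fun y => ψo y * ef g ω y) = - al g ω (fun y => ψo y * ef g ω y) := by
      unfold al
      rw [← integral_neg, ← integral_neg_eq_self]
      congr 1; ext y
      unfold eL ef
      beta_reduce
      rw [odd]; push_cast; rw [neg_sq]; ring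
    exact self_eq_neg.1 h1
  have e : al g ω (fun y => ψ y * ef g ω y) = al g ω (fun y => (ψ y - ψo y) * ef g ω y) := by
    have := al_sub B.F (B.P.hψ.mul B.F.ef_BM) (mo.mul B.F.ef_BM)
    rw [h0, sub_zero] at this
    rw [← this]; congr 1; ext y; ring
  rw [e]
  apply B.al_le
  intro y
  have hC1 := B.hC1
  have := B.hσ
  rw [norm_mul]
  calc _ ≤ (C1 * σ^4 * Real.exp ((c * σ^2) * y^2)) * 1 := by
        gcongr
        · exact ho y
        · exact B.ef_le1 y
    _ ≤ _ := by
        rw [mul_one]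
        apply mul_le_mul_of_nonneg_left (Real.exp_le_exp.2 _) (by positivity)
        have h := mul_nonneg B.cc0.le (sq_nonneg y)
        have h2 := mul_nonneg (mul_nonneg (sub_nonneg.2 B.hc2) (sq_nonneg σ)) (sq_nonneg y)
        nlinarith

lemma Blk.weak (B : Blk σ γ cs c C1 c2 M T Λ g ω ψ m) {f : ℝ → ℂ} (hf : BM f) {F : ℝ} (hF : ∀ x, ‖f x‖ ≤ F)
    (l : ℕ) (hl : l ≤ m) (x : ℝ) :
    ‖(K (wp (w0 g) ψ))^[l] f x - (K (w0 g))^[l] f x‖ ≤ F * cA C1 T cs * σ * Real.exp ((c * σ^2) * x^2) := by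
  have h1 : σ^2 * l ≤ T := le_trans (by gcongr) B.hT
  have := B.P.weak B.L B.hσ B.hC1 B.c0 (by linarith [B.hcs, B.c0]) hf hF l h1 x
  unfold cA
  simpa only [mul_assoc] using this

lemma Blk.al_d (B : Blk σ γ cs c C1 c2 M T Λ g ω ψ m) (l : ℕ) (hl : l ≤ m) :
    ‖al g ω (fun x => (K (wp (w0 g) ψ))^[l] (ef g ω) x - (K (w0 g))^[l] (ef g ω) x)‖
      ≤ l * (M * (C1 * (1 + cA C1 T cs)) * σ^4) := by
  have hw := B.F.w0_BM
  have hψ := B.P.hψ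
  have hwp := B.P.hwp
  have hef := B.F.ef_BM
  induction l with
  | zero => simp [al]
  | succ l ih =>
    have ih := ih (by omega)
    have hd : BM (fun x => (K (wp (w0 g) ψ))^[l] (ef g ω) x - (K (w0 g))^[l] (ef g ω) x) :=
      (Kit_BM hwp hef l).sub (Kit_BM hw hef l)
    have hu := Kit_BM hwp hef l
    have e1 : (fun x => (K (wp (w0 g) ψ))^[l+1] (ef g ω) x - (K (w0 g))^[l+1] (ef g ω) x)
        = fun x => K (w0 g) (fun x => (K (wp (w0 g) ψ))^[l] (ef g ω) x - (K (w0 g))^[l] (ef g ω) x) x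
          + K (w0 g) (fun y => ψ y * (K (wp (w0 g) ψ))^[l] (ef g ω) y) x := by
      ext x
      rw [Function.iterate_succ_apply', Function.iterate_succ_apply', K_sub hw hu (Kit_BM hw hef l)]
      have := K_pert hw hψ hu x
      unfold wp at this ⊢
      rw [this]; ring
    rw [e1, al_add B.F (K_BM hw hd) (K_BM hw (hψ.mul hu)), B.F.al_K hd, B.F.al_K (hψ.mul hu), ← mul_add, norm_mul]
    have e2 : (fun y => ψ y * (K (wp (w0 g) ψ))^[l] (ef g ω) y) = fun y =>
        (lam g ω)^l * (ψ y * ef g ω y) + ψ y * ((K (wp (w0 g) ψ))^[l] (ef g ω) y - (K (w0 g))^[l] (ef g ω) y) := by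
      ext y; rw [B.F.Kit_ef]; ring
    have h2 : ‖al g ω (fun y => ψ y * (K (wp (w0 g) ψ))^[l] (ef g ω) y)‖ ≤ M * (C1 * (1 + cA C1 T cs)) * σ^4 := by
      rw [e2, al_add B.F ((hψ.mul hef).smul _) (hψ.mul hd), al_smul]
      refine (norm_add_le _ _).trans ?_
      have h3 : ‖al g ω (fun y => ψ y * ((K (wp (w0 g) ψ))^[l] (ef g ω) y - (K (w0 g))^[l] (ef g ω) y))‖
          ≤ M * (C1 * σ^3 * (cA C1 T cs * σ)) := by
        apply B.al_le
        intro y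
        rw [norm_mul]
        have hw := B.weak hef B.ef_le1 l (by omega) y
        have := B.hC1
        have := B.hσ
        calc _ ≤ (C1 * σ^3 * Real.exp ((c * σ^2) * y^2)) * (1 * cA C1 T cs * σ * Real.exp ((c * σ^2) * y^2)) := by
              gcongr; exact B.P.bψ y
          _ = C1 * σ^3 * (cA C1 T cs * σ) * (Real.exp ((c * σ^2) * y^2) * Real.exp ((c * σ^2) * y^2)) := by ring
          _ ≤ _ := by
              rw [← Real.exp_add]
              have := B.cA0
              gcongr
              have h2 := mul_nonneg (mul_nonneg (sub_nonneg.2 B.hc2) (sq_nonneg σ)) (sq_nonneg y)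
              nlinarith
      have h4 : ‖(lam g ω)^l * al g ω (fun y => ψ y * ef g ω y)‖ ≤ M * (C1 * σ^4) := by
        rw [norm_mul, norm_pow]
        have := pow_le_one₀ (n := l) (norm_nonneg _) B.lam_le
        have h5 := B.al_psi_ef
        nlinarith [norm_nonneg (al g ω (fun y => ψ y * ef g ω y))]
      calc _ ≤ _ := add_le_add h4 h3
        _ = _ := by ring
    calc _ ≤ 1 * (‖_‖ + ‖_‖) := mul_le_mul B.lam_le (norm_add_le _ _) (norm_nonneg _) zero_le_one
      _ ≤ _ := by
        push_cast
        linarith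

/-- perturbed block operator, normalised -/
noncomputable def blk (g ω : ℂ) (ψ : ℝ → ℂ) (m : ℕ) (f : ℝ → ℂ) : ℝ → ℂ :=
  fun x => (lam g ω)⁻¹^m * (K (wp (w0 g) ψ))^[m] f x

lemma Blk.E_le (B : Blk σ γ cs c C1 c2 M T Λ g ω ψ m) {f : ℝ → ℂ} (hf : BM f) {F : ℝ} (hF : ∀ x, ‖f x‖ ≤ F) (x : ℝ) :
    ‖blk g ω ψ m f x - (lam g ω)⁻¹^m * (K (w0 g))^[m] f x‖ ≤ Λ * cA C1 T cs * σ * F * Real.exp (-(c * σ^2) * x^2) := by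
  have := B.P.strong B.L B.hσ B.hC1 B.c0 B.hcs hf hF m B.hT le_rfl B.hcT x
  unfold blk
  rw [← mul_sub, norm_mul, norm_pow]
  calc _ ≤ Λ * _ := mul_le_mul (B.hΛ m le_rfl) this (norm_nonneg _) (by linarith [B.Λ1])
    _ = _ := by unfold cA; ring

lemma Blk.step (B : Blk σ γ cs c C1 c2 M T Λ g ω ψ m) (hA : bA cs C1 M T Λ * σ ≤ 1/4) {f : ℝ → ℂ} (hf : BM f)
    {H : ℝ} (hH : ∀ x, ‖f x - al g ω f * ef g ω x‖ ≤ H) :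
    BM (blk g ω ψ m f) ∧
    ‖al g ω (blk g ω ψ m f) - al g ω f‖ ≤ bA cs C1 M T Λ * (σ^2 * ‖al g ω f‖ + σ * H) ∧
    ∀ x, ‖blk g ω ψ m f x - al g ω (blk g ω ψ m f) * ef g ω x‖
      ≤ (H/2 + bA cs C1 M T Λ * σ * ‖al g ω f‖) * Real.exp (-(c * σ^2) * x^2) := by
  have hw := B.F.w0_BM
  have hψ := B.P.hψ
  have hwp := B.P.hwp
  have hef := B.F.ef_BM
  have hH0 : 0 ≤ H := (norm_nonneg _).trans (hH 0)
  have hb : ∀ f, BM f → BM (blk g ω ψ m f) := fun f hf => (Kit_BM hwp hf m).smul _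
  have hb0 : ∀ f, BM f → BM (fun x => (lam g ω)⁻¹^m * (K (w0 g))^[m] f x) := fun f hf => (Kit_BM hw hf m).smul _
  obtain ⟨α, hα⟩ : ∃ α, α = al g ω f := ⟨_, rfl⟩
  rw [← hα] at hH ⊢
  obtain ⟨h, hh⟩ : ∃ h : ℝ → ℂ, h = fun x => f x - α * ef g ω x := ⟨_, rfl⟩
  have hhB : BM h := by rw [hh]; exact hf.sub (hef.smul _)
  have hH' : ∀ x, ‖h x‖ ≤ H := fun x => by rw [hh]; exact hH x
  have alh : al g ω h = 0 := by
    rw [hh, al_sub B.F hf (hef.smul _), al_smul, B.F.al_ef, hα]; ring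
  -- error parts
  obtain ⟨E1, hE1⟩ : ∃ E1 : ℝ → ℂ, E1 = fun x => blk g ω ψ m (ef g ω) x - (lam g ω)⁻¹^m * (K (w0 g))^[m] (ef g ω) x := ⟨_, rfl⟩
  obtain ⟨E2, hE2⟩ : ∃ E2 : ℝ → ℂ, E2 = fun x => blk g ω ψ m h x - (lam g ω)⁻¹^m * (K (w0 g))^[m] h x := ⟨_, rfl⟩
  obtain ⟨R, hR⟩ : ∃ R : ℝ → ℂ, R = fun x => (lam g ω)⁻¹^m * (K (w0 g))^[m] h x := ⟨_, rfl⟩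
  have E1B : BM E1 := by rw [hE1]; exact (hb _ hef).sub (hb0 _ hef)
  have E2B : BM E2 := by rw [hE2]; exact (hb _ hhB).sub (hb0 _ hhB)
  have RB : BM R := by rw [hR]; exact hb0 _ hhB
  have lne := B.F.lam_ne
  have e0 : blk g ω ψ m f = fun x => α * ef g ω x + (α * E1 x + (R x + E2 x)) := by
    ext x
    have ef' : f = fun y => α * ef g ω y + h y := by rw [hh]; ext y; ring
    have e1 : blk g ω ψ m f x = α * blk g ω ψ m (ef g ω) x + blk g ω ψ m h x := by
      unfold blk
      conv_lhs => rw [ef']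
      rw [Kit_add hwp (hef.smul α) hhB, Kit_smul]
      ring
    rw [e1, hE1, hE2, hR, B.F.Kit_ef]
    have : (lam g ω)⁻¹^m * (lam g ω)^m = 1 := by rw [← mul_pow, inv_mul_cancel₀ lne, one_pow]
    beta_reduce; linear_combination (α * ef g ω x) * this
  have alR : al g ω R = 0 := by rw [hR, al_smul, B.F.al_Kit hhB, alh]; simp
  have alb : al g ω (blk g ω ψ m f) = α + (α * al g ω E1 + al g ω E2) := by
    rw [e0, al_add B.F (hef.smul α) ((E1B.smul α).add (RB.add E2B)), al_add B.F (E1B.smul α) (RB.add E2B),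
      al_add B.F RB E2B, al_smul, al_smul, B.F.al_ef, alR]; ring
  have hcA := B.cA0
  have hΛ1 := B.Λ1
  have hσ := B.hσ
  have hσ1 := B.hσ1
  have hM := B.hM
  have hC1 := B.hC1
  have hT0 := B.hT0
  obtain ⟨A1, hA1⟩ : ∃ A1, A1 = Λ * cA C1 T cs := ⟨_, rfl⟩
  obtain ⟨A3, hA3⟩ : ∃ A3, A3 = Λ * T * (M * (C1 * (1 + cA C1 T cs))) := ⟨_, rfl⟩
  have A10 : 0 ≤ A1 := by rw [hA1]; positivity
  have A30 : 0 ≤ A3 := by rw [hA3]; positivity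
  have eA : bA cs C1 M T Λ = (M+1) * A1 + A3 := by unfold bA; rw [hA1, hA3]
  rw [eA] at hA ⊢
  have hexp : ∀ x : ℝ, Real.exp (-(c * σ^2) * x^2) ≤ 1 := fun x => by
    apply Real.exp_le_one_iff.2
    have := mul_nonneg (mul_nonneg B.c0.le (sq_nonneg σ)) (sq_nonneg x); linarith
  have bE1 : ∀ x, ‖E1 x‖ ≤ A1 * σ * Real.exp (-(c * σ^2) * x^2) := fun x => by
    have := B.E_le hef B.ef_le1 x
    rw [hE1, hA1]; simpa using this
  have bE2 : ∀ x, ‖E2 x‖ ≤ A1 * σ * H * Real.exp (-(c * σ^2) * x^2) := fun x => by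
    have := B.E_le hhB hH' x
    rw [hE2, hA1]; exact this
  have aE2 : ‖al g ω E2‖ ≤ M * (A1 * σ * H) := B.al_le' fun y =>
    (bE2 y).trans (mul_le_of_le_one_right (by positivity) (hexp y))
  have aE1 : ‖al g ω E1‖ ≤ A3 * σ^2 := by
    have e : E1 = fun x => (lam g ω)⁻¹^m * ((K (wp (w0 g) ψ))^[m] (ef g ω) x - (K (w0 g))^[m] (ef g ω) x) := by
      rw [hE1]; unfold blk; ext x; ring
    rw [e, al_smul, norm_mul, norm_pow]
    have h1 := B.al_d m le_rfl
    calc _ ≤ Λ * _ := mul_le_mul (B.hΛ m le_rfl) h1 (norm_nonneg _) (by linarith)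
      _ = Λ * (M * (C1 * (1 + cA C1 T cs))) * (σ^2 * m) * σ^2 := by ring
      _ ≤ Λ * (M * (C1 * (1 + cA C1 T cs))) * T * σ^2 := by gcongr; exact B.hT
      _ = _ := by rw [hA3]; ring
  have bR : ∀ x, ‖R x‖ ≤ H/4 * Real.exp (-(c * σ^2) * x^2) := fun x => by
    obtain ⟨k, rfl⟩ : ∃ k, m = k + 1 := ⟨m - 1, by have := B.m1; omega⟩
    have hq := B.hq
    have hqn : 0 ≤ ‖1 + g - ω‖^(k+1) := by positivity
    have h1 : ‖1 + g - ω‖^(k+1) ≤ 1/2 := by nlinarith [mul_nonneg hqn (by nlinarith : 0 ≤ M^2 - 1)]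
    have h2 : 2 * M * ‖1 + g - ω‖^(k+1) ≤ 1 := by nlinarith [mul_nonneg hqn (by nlinarith : 0 ≤ M^2 - M)]
    have := B.F.block B.cc0 hM B.h8 B.hω k h1 h2 hhB hH' x
    rw [alh, zero_mul, sub_zero] at this
    rw [hR]
    refine this.trans ?_
    rw [div_eq_mul_one_div H 4, mul_comm H]
    refine mul_le_mul (mul_le_mul_of_nonneg_right hq hH0) (Real.exp_le_exp.2 ?_) (Real.exp_pos _).le (by positivity)
    have h := mul_nonneg B.cc0.le (sq_nonneg x)
    have h2 := mul_nonneg (mul_nonneg (sub_nonneg.2 B.hc2) (sq_nonneg σ)) (sq_nonneg x)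
    nlinarith
  have hdiff : ‖al g ω (blk g ω ψ m f) - α‖ ≤ A3 * σ^2 * ‖α‖ + M * (A1 * σ * H) := by
    rw [alb, add_sub_cancel_left]
    refine (norm_add_le _ _).trans ?_
    rw [norm_mul]
    nlinarith [mul_le_mul_of_nonneg_left aE1 (norm_nonneg α)]
  have hnα := norm_nonneg α
  refine ⟨hb f hf, hdiff.trans ?_, fun x => ?_⟩
  · have h1 : 0 ≤ (M+1) * A1 * (σ^2 * ‖α‖) := by positivity
    have h2 : 0 ≤ (A1 + A3) * (σ * H) := by positivity
    nlinarith
  · have e2 : blk g ω ψ m f x - al g ω (blk g ω ψ m f) * ef g ω x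
        = α * E1 x + (R x + E2 x) - (al g ω (blk g ω ψ m f) - α) * ef g ω x := by
      rw [congrFun e0 x]; ring
    rw [e2]
    have hx := Real.exp_pos (-(c * σ^2) * x^2)
    calc _ ≤ ‖α‖ * ‖E1 x‖ + (‖R x‖ + ‖E2 x‖) + ‖al g ω (blk g ω ψ m f) - α‖ * ‖ef g ω x‖ := by
          refine (norm_sub_le _ _).trans ?_
          rw [norm_mul]
          gcongr
          refine (norm_add_le _ _).trans ?_
          rw [norm_mul]
          gcongr
          exact norm_add_le _ _
      _ ≤ ‖α‖ * (A1 * σ * Real.exp (-(c * σ^2) * x^2)) + (H/4 * Real.exp (-(c * σ^2) * x^2) + A1 * σ * H * Real.exp (-(c * σ^2) * x^2))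
          + (A3 * σ^2 * ‖α‖ + M * (A1 * σ * H)) * Real.exp (-(c * σ^2) * x^2) := by
          gcongr
          · exact bE1 x
          · exact bR x
          · exact bE2 x
          · exact B.ef_le2 x
      _ = (‖α‖ * (A1 * σ + A3 * σ^2) + (H/4 + ((M+1) * A1 * σ) * H)) * Real.exp (-(c * σ^2) * x^2) := by ring
      _ ≤ _ := by
          apply mul_le_mul_of_nonneg_right _ hx.le
          have h3 : (M+1) * A1 * σ ≤ 1/4 := by nlinarith [mul_nonneg A30 hσ.le]
          have h4 : A1 * σ + A3 * σ^2 ≤ ((M+1) * A1 + A3) * σ := by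
            have : A3 * σ^2 ≤ A3 * σ := by rw [pow_two]; gcongr; nlinarith
            nlinarith [mul_nonneg (mul_nonneg (by linarith : 0 ≤ M) A10) hσ.le]
          nlinarith [mul_le_mul_of_nonneg_right h3 hH0, mul_le_mul_of_nonneg_left h4 hnα]

end BandChain

namespace BandChain

variable {σ γ cs c C1 c2 M T Λ : ℝ} {g ω : ℂ} {ψ : ℝ → ℂ} {m : ℕ}

lemma blk_iter (g ω : ℂ) (ψ : ℝ → ℂ) (m b : ℕ) (f : ℝ → ℂ) :
    (blk g ω ψ m)^[b] f = fun x => (lam g ω)⁻¹^(m*b) * (K (wp (w0 g) ψ))^[m*b] f x := by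
  induction b with
  | zero => simp
  | succ b ih =>
    rw [Function.iterate_succ_apply', ih]
    unfold blk
    rw [Kit_smul]
    ext x
    rw [← Function.iterate_add_apply, mul_add, mul_one, add_comm (m*b) m, pow_add]
    ring

lemma Blk.iterate (B : Blk σ γ cs c C1 c2 M T Λ g ω ψ m) {A : ℝ} (hAd : A = bA cs C1 M T Λ) (hA : A * σ ≤ 1/4)
    {f : ℝ → ℂ} (hf : BM f) {H G : ℝ} (hH : ∀ x, ‖f x - al g ω f * ef g ω x‖ ≤ H) (b : ℕ)
    (hG : G = Real.exp ((A + 2 * A^2) * σ^2 * b) * (‖al g ω f‖ + 2 * A * σ * H)) (k : ℕ) (hk : k ≤ b) :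
    BM ((blk g ω ψ m)^[k] f) ∧ ∃ Hk, 0 ≤ Hk ∧
      (∀ x, ‖(blk g ω ψ m)^[k] f x - al g ω ((blk g ω ψ m)^[k] f) * ef g ω x‖ ≤ Hk) ∧
      (1 ≤ k → ∀ x, ‖(blk g ω ψ m)^[k] f x - al g ω ((blk g ω ψ m)^[k] f) * ef g ω x‖
        ≤ Hk * Real.exp (-(c * σ^2) * x^2)) ∧
      ‖al g ω ((blk g ω ψ m)^[k] f) - al g ω f‖ + 2 * A * σ * Hk + ‖al g ω f‖
        ≤ Real.exp ((A + 2 * A^2) * σ^2 * k) * (‖al g ω f‖ + 2 * A * σ * H) ∧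
      Hk ≤ H * (1/2)^k + 2 * A * σ * G := by
  have hH0 : 0 ≤ H := (norm_nonneg _).trans (hH 0)
  have hA0 : 0 ≤ A := by rw [hAd]; exact B.bA0
  have hσ := B.hσ
  have hG0 : 0 ≤ G := by rw [hG]; positivity
  induction k with
  | zero =>
    refine ⟨hf, H, hH0, hH, by omega, by simp [add_comm], ?_⟩
    have : 0 ≤ 2 * A * σ * G := by positivity
    simpa using this
  | succ k ih =>
    obtain ⟨hB, Hk, Hk0, h1, -, h3, h4⟩ := ih (by omega)
    obtain ⟨s1, s2, s3⟩ := B.step (hAd ▸ hA) hB h1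
    rw [← hAd] at s2 s3
    rw [Function.iterate_succ_apply']
    set fk := (blk g ω ψ m)^[k] f
    set αk := al g ω fk
    set α0 := al g ω f
    have hn : ‖αk‖ ≤ ‖αk - α0‖ + ‖α0‖ := by simpa using norm_add_le (αk - α0) α0
    have hAH : 0 ≤ 2 * A * σ * Hk := by positivity
    have hG1 : ‖αk‖ ≤ G := by
      have : Real.exp ((A + 2 * A^2) * σ^2 * k) * (‖al g ω f‖ + 2 * A * σ * H) ≤ G := by
        rw [hG]; gcongr; omega
      linarith
    refine ⟨s1, Hk/2 + A * σ * ‖αk‖, by positivity, fun x => (s3 x).trans ?_, fun _ => s3, ?_, ?_⟩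
    · apply mul_le_of_le_one_right (by positivity)
      apply Real.exp_le_one_iff.2
      have := mul_nonneg (mul_nonneg B.c0.le (sq_nonneg σ)) (sq_nonneg x); linarith
    · have h5 : ‖al g ω (blk g ω ψ m fk) - α0‖ ≤ ‖al g ω (blk g ω ψ m fk) - αk‖ + ‖αk - α0‖ := by
        simpa using norm_add_le (al g ω (blk g ω ψ m fk) - αk) (αk - α0)
      set Y := (A + 2 * A^2) * σ^2 with hY
      have hY0 : 0 ≤ Y := by positivity
      set D := ‖αk - α0‖ + 2 * A * σ * Hk + ‖α0‖ with hD
      have hD0 : ‖αk‖ ≤ D := by rw [hD]; linarith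
      have h6 : ‖al g ω (blk g ω ψ m fk) - α0‖ + 2 * A * σ * (Hk/2 + A * σ * ‖αk‖) + ‖α0‖ ≤ (1 + Y) * D := by
        have : (1 + Y) * D = D + Y * D := by ring
        rw [this]
        have h7 : Y * ‖αk‖ ≤ Y * D := by gcongr
        rw [hD]; rw [hD] at h7
        rw [hY] at h7 ⊢
        nlinarith
      refine h6.trans ?_
      have h8 : 1 + Y ≤ Real.exp Y := by have := Real.add_one_le_exp Y; linarith
      calc _ ≤ Real.exp Y * (Real.exp (Y * k) * (‖α0‖ + 2 * A * σ * H)) := by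
            gcongr
        _ = _ := by rw [← mul_assoc, ← Real.exp_add]; congr 2; push_cast; ring
    · have h9 : A * σ * ‖αk‖ ≤ A * σ * G := by gcongr
      rw [pow_succ]
      linarith

lemma gauss_scale {c σ : ℝ} (hc : 0 < c) (hσ : 0 < σ) {f : ℝ → ℂ} {F : ℝ}
    (hf : ∀ x, ‖f x‖ ≤ F * Real.exp (-(c * σ^2) * x^2)) : σ * ‖∫ x, f x‖ ≤ √(Real.pi / c) * F := by
  have hgi : Integrable (fun y : ℝ => F * Real.exp (-(c * σ^2) * y^2)) :=
    (integrable_exp_neg_mul_sq (by positivity : (0:ℝ) < c * σ^2)).const_mul _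
  have := norm_integral_le_of_norm_le hgi (Filter.Eventually.of_forall hf)
  rw [integral_const_mul, integral_gaussian] at this
  have e : √(Real.pi / (c * σ^2)) = √(Real.pi / c) / σ := by
    rw [← div_div, Real.sqrt_div' _ (by positivity), Real.sqrt_sq hσ.le]
  rw [e] at this
  calc _ ≤ σ * (F * (√(Real.pi / c) / σ)) := by gcongr
    _ = _ := by field_simp

/-- reference amplitude -/
noncomputable def J0 (g ω : ℂ) : ℂ := ∫ y, w0 g y * ef g ω y

noncomputable def Zc (w : ℝ → ℂ) (N : ℕ) : ℂ := ∫ x, w x * (K w)^[N] (fun _ => 1) x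

lemma J0_eq (h : Free g ω) : J0 g ω = ((Real.pi:ℂ) / ((1/2) * (ω + g))) ^ (1/2 : ℂ) := by
  unfold J0
  have hb : 0 < ((1/2) * (ω + g)).re := by
    rw [half_re, Complex.add_re]; have := h.g0; have := h.o0; linarith
  rw [← integral_gaussian_complex hb]
  congr 1; ext y; unfold w0 ef; rw [← Complex.exp_add]; congr 1; ring

lemma al_one (h : Free g ω) : al g ω (fun _ => 1) = Nn ω * J0 g ω := by
  rw [J0_eq h]
  have hb : 0 < ((1/2) * (ω + g)).re := by
    rw [half_re, Complex.add_re]; have := h.g0; have := h.o0; linarith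
  rw [← integral_gaussian_complex hb]
  unfold al
  simp_rw [eL_eq, mul_one]
  rw [integral_const_mul]

lemma Blk.lower (B : Blk σ γ cs c C1 c2 M T Λ g ω ψ m) :
    √(Real.pi / (M * c2)) ≤ σ * ‖al g ω (fun _ => 1) * J0 g ω‖ := by
  have hM := B.hM
  have hc2 : 0 < c2 := B.c0.trans_le B.hc2
  have hσ := B.hσ
  have hne : ω + g ≠ 0 := by
    intro e
    have h1 := B.F.g0
    have h2 := B.F.o0
    have := congrArg Complex.re e
    simp at this; linarith
  have hpos : 0 < ‖ω + g‖ := norm_pos_iff.2 hne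
  have hop : 0 < ‖ω‖ := norm_pos_iff.2 B.F.o_ne
  have hJ2 : ‖J0 g ω‖^2 = Real.pi / (‖ω + g‖/2) := by
    rw [J0_eq B.F, ← norm_pow, csqrt_sq, norm_div, norm_mul, Complex.norm_real, Real.norm_of_nonneg Real.pi_pos.le]
    norm_num
    ring
  have hJ : ‖J0 g ω‖ = √(Real.pi / (‖ω + g‖/2)) := by rw [← hJ2, Real.sqrt_sq (norm_nonneg _)]
  have hs : ‖ω + g‖ ≤ 2 * ‖ω‖ := by have := norm_add_le ω g; linarith [B.hg]
  rw [al_one B.F, norm_mul, norm_mul, norm_Nn]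
  have h1 : 1 ≤ √(‖ω‖ / Real.pi) * ‖J0 g ω‖ := by
    rw [hJ, ← Real.sqrt_mul (by positivity), Real.one_le_sqrt]
    have := Real.pi_pos
    have e : ‖ω‖ / Real.pi * (Real.pi / (‖ω + g‖/2)) = 2 * ‖ω‖ / ‖ω + g‖ := by field_simp
    rw [e, le_div_iff₀ hpos]; linarith
  have h2 : √(Real.pi / (M * c2)) ≤ σ * ‖J0 g ω‖ := by
    rw [hJ]
    rw [show σ * √(Real.pi / (‖ω + g‖/2)) = √(σ^2) * √(Real.pi / (‖ω + g‖/2)) by rw [Real.sqrt_sq hσ.le]]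
    rw [← Real.sqrt_mul (by positivity)]
    apply Real.sqrt_le_sqrt
    rw [div_le_iff₀ (by positivity)]
    have : ‖ω + g‖/2 ≤ M * (c2 * σ^2) := by linarith [B.hω]
    have h3 : σ^2 * (Real.pi / (‖ω + g‖/2)) * (M * c2) = Real.pi * (M * (c2 * σ^2) / (‖ω + g‖/2)) := by
      field_simp
    rw [h3]
    have h4 : 1 ≤ M * (c2 * σ^2) / (‖ω + g‖/2) := by rw [le_div_iff₀ (by positivity)]; linarith
    nlinarith [Real.pi_pos]
  nlinarith [norm_nonneg (J0 g ω), mul_nonneg hσ.le (norm_nonneg (J0 g ω))]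

lemma Blk.main (B : Blk σ γ cs c C1 c2 M T Λ g ω ψ m) {A h X : ℝ} (hAd : A = bA cs C1 M T Λ) (hA : A * σ ≤ 1/4)
    (hh : h = Λ * Real.exp (2 * cs * T) + M + 1) (s b : ℕ) (hs : s ≤ m) (hb : 1 ≤ b)
    (hX : X = Real.exp ((A + 2 * A^2) * σ^2 * b)) :
    σ * ‖(lam g ω)⁻¹^(m*b+s) * Zc (wp (w0 g) ψ) (m*b+s) - al g ω (fun _ => 1) * J0 g ω‖
      ≤ √(Real.pi / c) * ((A + 2 * A * h + M * C1 + 2 * A * (M + 1 + h)) * (σ * X) + (M + 1) * (X - 1) + h * (1/2)^b) := by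
  have hA0 : 0 ≤ A := by rw [hAd]; exact B.bA0
  have hσ := B.hσ
  have hσ1 := B.hσ1
  have hM := B.hM
  have hΛ1 := B.Λ1
  have hcA := B.cA0
  have hC1 := B.hC1
  have hT0 := B.hT0
  have hw := B.F.w0_BM
  have hψ := B.P.hψ
  have hwp := B.P.hwp
  have hef := B.F.ef_BM
  have h1B : BM (fun _ : ℝ => (1:ℂ)) := BM.const 1
  have hcsp := B.L.c0
  have hX1 : 1 ≤ X := by rw [hX]; apply Real.one_le_exp; positivity
  obtain ⟨f0, hf0⟩ : ∃ f0 : ℝ → ℂ, f0 = fun x => (lam g ω)⁻¹^s * (K (wp (w0 g) ψ))^[s] (fun _ => 1) x := ⟨_, rfl⟩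
  have f0B : BM f0 := by rw [hf0]; exact (Kit_BM hwp h1B s).smul _
  have f0le : ∀ x, ‖f0 x‖ ≤ Λ * Real.exp (2 * cs * T) := fun x => by
    rw [hf0, norm_mul, norm_pow]
    have hTs : σ^2 * s ≤ T := le_trans (by gcongr) B.hT
    have := B.L.iter' (c := 0) (c' := 0) (C := 1) (T := T) (by linarith) hcsp.le B.P.bw' (f := fun _ => 1) (by simp) s hTs hcsp.le
      (by have := B.L.g0; positivity) x
    have h2 : ‖(K (wp (w0 g) ψ))^[s] (fun _ => 1) x‖ ≤ Real.exp (2 * cs * T) := by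
      unfold wp; simpa using this
    exact mul_le_mul (B.hΛ s hs) h2 (norm_nonneg _) (by linarith)
  have a1 : ‖al g ω (fun _ => 1)‖ ≤ M := by
    have := B.al_le' (f := fun _ => (1:ℂ)) (F := 1) (by simp); simpa using this
  have hα0 : ‖al g ω f0 - al g ω (fun _ => 1)‖ ≤ A * σ := by
    have e : al g ω (fun _ => 1) = al g ω (fun x => (lam g ω)⁻¹^s * (K (w0 g))^[s] (fun _ => 1) x) := by
      rw [al_smul, B.F.al_Kit h1B, ← mul_assoc, ← mul_pow, inv_mul_cancel₀ B.F.lam_ne]; simp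
    rw [e, ← al_sub B.F f0B ((Kit_BM hw h1B s).smul _)]
    have : ‖al g ω (fun x => f0 x - (lam g ω)⁻¹^s * (K (w0 g))^[s] (fun _ => 1) x)‖ ≤ M * (Λ * cA C1 T cs * σ) := by
      apply B.al_le
      intro x
      have h2 := B.weak h1B (F := 1) (by simp) s hs x
      rw [hf0]
      beta_reduce
      rw [← mul_sub, norm_mul, norm_pow]
      calc _ ≤ Λ * (1 * cA C1 T cs * σ * Real.exp ((c * σ^2) * x^2)) :=
            mul_le_mul (B.hΛ s hs) h2 (norm_nonneg _) (by linarith)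
        _ = Λ * cA C1 T cs * σ * Real.exp ((c * σ^2) * x^2) := by ring
        _ ≤ _ := by
            apply mul_le_mul_of_nonneg_left (Real.exp_le_exp.2 _) (by positivity)
            have h := mul_nonneg B.cc0.le (sq_nonneg x)
            have h2 := mul_nonneg (mul_nonneg (sub_nonneg.2 B.hc2) (sq_nonneg σ)) (sq_nonneg x)
            nlinarith
    refine this.trans ?_
    rw [hAd]
    unfold bA
    have : 0 ≤ Λ * cA C1 T cs * σ + Λ * T * (M * (C1 * (1 + cA C1 T cs))) * σ := by positivity
    nlinarith
  obtain ⟨a, ha⟩ : ∃ a, a = ‖al g ω f0‖ := ⟨_, rfl⟩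
  have haM : a ≤ M + 1 := by
    have := norm_add_le (al g ω f0 - al g ω (fun _ => 1)) (al g ω (fun _ => 1))
    rw [sub_add_cancel, ← ha] at this
    linarith
  have ha0 : 0 ≤ a := by rw [ha]; positivity
  have hh0 : 0 ≤ h := by rw [hh]; positivity
  have hH : ∀ x, ‖f0 x - al g ω f0 * ef g ω x‖ ≤ h := fun x => by
    refine (norm_sub_le _ _).trans ?_
    rw [norm_mul, ← ha, hh]
    have := mul_le_mul_of_nonneg_left (B.ef_le1 x) ha0
    linarith [f0le x]
  obtain ⟨fbB, Hb, Hb0, -, hb2, hb3, hb4⟩ := B.iterate hAd hA f0B hH b rfl b le_rfl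
  rw [← hX, ← ha] at hb3 hb4
  have hb2 := hb2 hb
  set fb := (blk g ω ψ m)^[b] f0 with hfb
  have efb : ∀ x, (lam g ω)⁻¹^(m*b+s) * (K (wp (w0 g) ψ))^[m*b+s] (fun _ => 1) x = fb x := fun x => by
    rw [hfb, blk_iter, hf0, Kit_smul]
    beta_reduce
    rw [← Function.iterate_add_apply, pow_add]; ring
  set αb := al g ω fb
  have ecx : ∀ x : ℝ, Real.exp (-(c * σ^2) * x^2) ≤ 1 := fun x => by
    apply Real.exp_le_one_iff.2
    have := mul_nonneg (mul_nonneg B.c0.le (sq_nonneg σ)) (sq_nonneg x); linarith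
  have wp1 : ∀ x, ‖wp (w0 g) ψ x‖ ≤ 1 := fun x => by
    refine (B.P.bw' x).trans (Real.exp_le_one_iff.2 ?_)
    have := mul_nonneg (mul_nonneg B.L.g0.le (sq_nonneg (σ^2))) (sq_nonneg x); linarith
  have w01 : ∀ x, ‖w0 g x‖ ≤ 1 := fun x => by
    refine (B.P.bw x).trans (Real.exp_le_one_iff.2 ?_)
    have := mul_nonneg (mul_nonneg B.L.g0.le (sq_nonneg (σ^2))) (sq_nonneg x); linarith
  have iexp : Integrable (fun x : ℝ => Real.exp (-(c * σ^2) * x^2)) :=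
    integrable_exp_neg_mul_sq (mul_pos B.c0 (pow_pos hσ 2))
  have i1 : Integrable (ef g ω) := iexp.mono' hef.1.aestronglyMeasurable (Filter.Eventually.of_forall B.ef_le2)
  have i2 : Integrable (fun x => fb x - αb * ef g ω x) :=
    (iexp.const_mul Hb).mono' (fbB.sub (hef.smul _)).1.aestronglyMeasurable (Filter.Eventually.of_forall hb2)
  have j1 : Integrable (fun x => ef g ω x * wp (w0 g) ψ x) := hwp.integrable_mul i1
  have j2 : Integrable (fun x => (fb x - αb * ef g ω x) * wp (w0 g) ψ x) := hwp.integrable_mul i2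
  have j3 : Integrable (fun x => ef g ω x * w0 g x) := hw.integrable_mul i1
  have eZ : (lam g ω)⁻¹^(m*b+s) * Zc (wp (w0 g) ψ) (m*b+s)
      = αb * (∫ x, ef g ω x * wp (w0 g) ψ x) + ∫ x, (fb x - αb * ef g ω x) * wp (w0 g) ψ x := by
    unfold Zc
    rw [← integral_const_mul, ← integral_const_mul, ← integral_add (j1.const_mul _) j2]
    congr 1; ext x
    rw [mul_left_comm, efb]; ring
  have eD : (∫ x, ef g ω x * wp (w0 g) ψ x) - J0 g ω = ∫ x, w0 g x * (ψ x * ef g ω x) := by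
    unfold J0
    simp_rw [mul_comm (w0 g _) (ef g ω _)]
    rw [← integral_sub j1 j3]
    congr 1; ext x; unfold wp; ring
  have b1 : σ * ‖∫ x, ef g ω x * wp (w0 g) ψ x‖ ≤ √(Real.pi / c) * 1 := by
    apply gauss_scale B.c0 hσ
    intro x
    rw [norm_mul, one_mul]
    exact (mul_le_of_le_one_right (norm_nonneg _) (wp1 x)).trans (B.ef_le2 x)
  have b2 : σ * ‖∫ x, w0 g x * (ψ x * ef g ω x)‖ ≤ √(Real.pi / c) * (C1 * σ^3) := by
    apply gauss_scale B.c0 hσ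
    intro x
    rw [norm_mul, norm_mul]
    calc _ ≤ 1 * ((C1 * σ^3 * Real.exp ((c * σ^2) * x^2)) * Real.exp (-(4 * (c2 * σ^2)) * x^2)) := by
          gcongr
          · exact w01 x
          · exact B.P.bψ x
          · exact B.ef_le x
      _ = C1 * σ^3 * (Real.exp ((c * σ^2) * x^2) * Real.exp (-(4 * (c2 * σ^2)) * x^2)) := by ring
      _ ≤ _ := by
          rw [← Real.exp_add]
          apply mul_le_mul_of_nonneg_left (Real.exp_le_exp.2 _) (by positivity)
          have h := mul_nonneg B.cc0.le (sq_nonneg x)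
          have h2 := mul_nonneg (mul_nonneg (sub_nonneg.2 B.hc2) (sq_nonneg σ)) (sq_nonneg x)
          nlinarith
  have b3 : σ * ‖∫ x, (fb x - αb * ef g ω x) * wp (w0 g) ψ x‖ ≤ √(Real.pi / c) * Hb := by
    apply gauss_scale B.c0 hσ
    intro x
    rw [norm_mul]
    exact (mul_le_of_le_one_right (norm_nonneg _) (wp1 x)).trans (hb2 x)
  have dα : ‖αb - al g ω (fun _ => 1)‖ ≤ A * σ + (X * (a + 2 * A * σ * h) - a) := by
    have h1 := norm_add_le (αb - al g ω f0) (al g ω f0 - al g ω (fun _ => 1))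
    rw [sub_add_sub_cancel] at h1
    have : 0 ≤ 2 * A * σ * Hb := by positivity
    linarith
  set R := √(Real.pi / c)
  have hR : 0 ≤ R := Real.sqrt_nonneg _
  have eF : (lam g ω)⁻¹^(m*b+s) * Zc (wp (w0 g) ψ) (m*b+s) - al g ω (fun _ => 1) * J0 g ω
      = (αb - al g ω (fun _ => 1)) * (∫ x, ef g ω x * wp (w0 g) ψ x)
        + al g ω (fun _ => 1) * (∫ x, w0 g x * (ψ x * ef g ω x))
        + ∫ x, (fb x - αb * ef g ω x) * wp (w0 g) ψ x := by
    rw [eZ, ← eD]; ring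
  rw [eF]
  set I1 := ∫ x, ef g ω x * wp (w0 g) ψ x
  set I2 := ∫ x, w0 g x * (ψ x * ef g ω x)
  set I3 := ∫ x, (fb x - αb * ef g ω x) * wp (w0 g) ψ x
  have c1 : ‖αb - al g ω (fun _ => 1)‖ ≤ (A + 2 * A * h) * (σ * X) + (M+1) * (X - 1) := by
    refine dα.trans ?_
    have h1 : A * σ ≤ A * σ * X := le_mul_of_one_le_right (by positivity) hX1
    have h2 : a * (X - 1) ≤ (M+1) * (X - 1) := mul_le_mul_of_nonneg_right haM (by linarith)
    nlinarith
  have c2' : M * (C1 * σ^3) ≤ M * C1 * (σ * X) := by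
    have h1 : σ^3 ≤ σ := by
      calc σ^3 ≤ σ^1 := pow_le_pow_of_le_one hσ.le hσ1 (by norm_num)
        _ = σ := pow_one _
    have h2 : σ ≤ σ * X := le_mul_of_one_le_right hσ.le hX1
    rw [← mul_assoc]; gcongr; linarith
  have c3 : Hb ≤ h * (1/2)^b + 2 * A * (M + 1 + h) * (σ * X) := by
    refine hb4.trans ?_
    have : a + 2 * A * σ * h ≤ M + 1 + h := by nlinarith
    calc _ ≤ h * (1/2)^b + 2 * A * σ * (X * (M + 1 + h)) := by gcongr
      _ = _ := by ring
  calc _ ≤ σ * (‖αb - al g ω (fun _ => 1)‖ * ‖I1‖ + ‖al g ω (fun _ => 1)‖ * ‖I2‖ + ‖I3‖) := by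
        gcongr
        refine (norm_add_le _ _).trans ?_
        gcongr
        refine (norm_add_le _ _).trans ?_
        rw [norm_mul, norm_mul]
    _ = ‖αb - al g ω (fun _ => 1)‖ * (σ * ‖I1‖) + ‖al g ω (fun _ => 1)‖ * (σ * ‖I2‖) + σ * ‖I3‖ := by ring
    _ ≤ ((A + 2 * A * h) * (σ * X) + (M+1) * (X - 1)) * (R * 1) + M * (R * (C1 * σ^3)) + R * Hb := by
        gcongr
    _ = R * (((A + 2 * A * h) * (σ * X) + (M+1) * (X - 1)) + M * (C1 * σ^3) + Hb) := by ring
    _ ≤ R * (((A + 2 * A * h) * (σ * X) + (M+1) * (X - 1)) + M * C1 * (σ * X) + (h * (1/2)^b + 2 * A * (M + 1 + h) * (σ * X))) := by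
        gcongr
    _ = _ := by ring

end BandChain

namespace BandChain

variable {σ γ cs c C1 : ℝ} {g : ℂ} {ψ : ℝ → ℂ}

lemma gauss_iter {g : ℂ} (hg : 0 < g.re) (m : ℕ) : ∃ D a : ℂ, 0 ≤ a.re ∧ ‖a‖ ≤ m * ‖g‖ ∧
    Real.exp (-((m:ℝ)^2 * ‖g‖)) ≤ ‖D‖ ∧ ∀ x : ℝ, (K (w0 g))^[m] (fun _ => 1) x = D * Complex.exp (-a * (x:ℂ)^2) := by
  induction m with
  | zero => exact ⟨1, 0, by simp, by simp, by simp, by simp⟩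
  | succ m ih =>
    obtain ⟨D, a, h1, h2, h3, h4⟩ := ih
    obtain ⟨s, hs⟩ : ∃ s, s = a + g := ⟨_, rfl⟩
    have sre : 0 < s.re := by rw [hs, Complex.add_re]; linarith
    have sn : ‖s‖ ≤ (m + 1) * ‖g‖ := by rw [hs]; refine (norm_add_le _ _).trans ?_; linarith
    have hre : (1 + 2 * s).re = 1 + 2 * s.re := by simp
    have hn1 : 1 ≤ ‖1 + 2 * s‖ := by
      have := Complex.re_le_norm (1 + 2 * s); rw [hre] at this; linarith
    have hn2 : ‖1 + 2 * s‖ ≤ Real.exp (2 * ‖s‖) := by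
      refine (norm_add_le _ _).trans ?_
      have := Real.add_one_le_exp (2 * ‖s‖)
      simp only [norm_one, norm_mul, Complex.norm_ofNat]; linarith
    have hne : 1 + 2 * s ≠ 0 := fun e => by rw [e] at hn1; simp at hn1; linarith
    have hne' : s + 1/2 ≠ 0 := fun e => hne (by linear_combination 2 * e)
    refine ⟨D * (((√(2 * Real.pi))⁻¹ : ℝ) * ((Real.pi : ℂ) / (s + 1/2)) ^ (1/2 : ℂ)), s / (1 + 2 * s), ?_, ?_, ?_, ?_⟩
    · rw [Complex.div_re, ← add_div]
      apply div_nonneg _ (Complex.normSq_nonneg _)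
      simp
      nlinarith [sq_nonneg s.im, sq_nonneg s.re]
    · rw [norm_div]
      push_cast
      exact (div_le_self (norm_nonneg _) hn1).trans sn
    · have hq : Real.exp (-‖s‖) ≤ ‖(((√(2 * Real.pi))⁻¹ : ℝ) : ℂ) * ((Real.pi : ℂ) / (s + 1/2)) ^ (1/2 : ℂ)‖ := by
        apply le_of_sq_le_sq _ (norm_nonneg _)
        rw [← norm_pow, mul_pow, csqrt_sq, ← Complex.ofReal_pow, inv_pow, Real.sq_sqrt (by positivity)]
        have hp : (Real.pi : ℂ) ≠ 0 := by exact_mod_cast Real.pi_ne_zero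
        have : (((2 * Real.pi)⁻¹ : ℝ) : ℂ) * ((Real.pi : ℂ) / (s + 1/2)) = (1 + 2 * s)⁻¹ := by
          push_cast
          have : s + 1/2 = (1 + 2 * s)/2 := by ring
          rw [this]; field_simp
        rw [this, norm_inv, ← Real.exp_nat_mul, show ((2:ℕ):ℝ) * -‖s‖ = -(2 * ‖s‖) by push_cast; ring, Real.exp_neg]
        gcongr

      rw [norm_mul]
      calc _ ≤ Real.exp (-((m:ℝ)^2 * ‖g‖)) * Real.exp (-‖s‖) := by
            rw [← Real.exp_add]
            apply Real.exp_le_exp.2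
            push_cast
            nlinarith [mul_nonneg (Nat.cast_nonneg (α := ℝ) m) (norm_nonneg g)]
        _ ≤ _ := by gcongr
    · intro x
      rw [Function.iterate_succ_apply', show (K (w0 g))^[m] (fun _ => 1) = _ from funext h4, K_smul]
      have := cg s 0 0 (by linarith) x
      unfold K
      have e : ∀ y : ℝ, ((gk (x - y) : ℝ) : ℂ) * (w0 g y * Complex.exp (-a * (y:ℂ)^2))
          = Complex.exp (-s * (y:ℂ)^2 + 0 * y + 0) * ((gk (y - x) : ℝ) : ℂ) := fun y => by
        rw [gk_symm, mul_comm]; congr 1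
        unfold w0; rw [← Complex.exp_add, hs]; congr 1; ring
      simp_rw [e]
      rw [this, ← mul_assoc, ← mul_assoc]
      congr 2
      have : s + 1/2 = (1 + 2 * s)/2 := by ring
      rw [this]; field_simp; ring

lemma one_lower {G : ℝ} (hσ : 0 < σ) (hG : 0 < G) (hg : 0 < g.re) (hgn : ‖g‖ ≤ G * σ^4) (l : ℕ)
    (hl : σ^2 * (l + 1) ≤ 1) : Real.exp (-G) * √(Real.pi / G) ≤ σ * ‖Zc (w0 g) l‖ := by
  obtain ⟨D, a, h1, h2, h3, h4⟩ := gauss_iter hg l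
  unfold Zc
  have hr : 0 < (a + g).re := by rw [Complex.add_re]; linarith
  have e : ∀ x : ℝ, w0 g x * (K (w0 g))^[l] (fun _ => 1) x = D * Complex.exp (-(a + g) * (x:ℂ)^2) := fun x => by
    rw [h4]; unfold w0; rw [mul_left_comm, ← Complex.exp_add]; congr 2; ring
  simp_rw [e]
  rw [integral_const_mul, integral_gaussian_complex hr, norm_mul]
  have hs2 : ‖((Real.pi : ℂ)/(a+g)) ^ (1/2 : ℂ)‖ = √(Real.pi / ‖a + g‖) := by
    rw [← Real.sqrt_sq (norm_nonneg (((Real.pi : ℂ)/(a+g)) ^ (1/2 : ℂ))), ← norm_pow, csqrt_sq, norm_div, Complex.norm_real,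
      Real.norm_of_nonneg Real.pi_pos.le]
  have hl0 : (0:ℝ) ≤ l := Nat.cast_nonneg l
  have hD : Real.exp (-G) ≤ ‖D‖ := by
    refine le_trans (Real.exp_le_exp.2 (neg_le_neg ?_)) h3
    have h5 : σ^2 * l ≤ 1 := by nlinarith [sq_nonneg σ]
    have h6 : (σ^2 * l)^2 ≤ 1 := pow_le_one₀ (by positivity) h5
    calc (l:ℝ)^2 * ‖g‖ ≤ l^2 * (G * σ^4) := by gcongr
      _ = G * (σ^2 * l)^2 := by ring
      _ ≤ G * 1 := by gcongr
      _ = G := mul_one G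
  have hag : ‖a + g‖ ≤ G * σ^2 := by
    calc _ ≤ ‖a‖ + ‖g‖ := norm_add_le _ _
      _ ≤ (l + 1) * ‖g‖ := by linarith
      _ ≤ (l + 1) * (G * σ^4) := by gcongr
      _ = G * σ^2 * (σ^2 * (l + 1)) := by ring
      _ ≤ G * σ^2 * 1 := by gcongr
      _ = _ := mul_one _
  have hpos : 0 < ‖a + g‖ := norm_pos_iff.2 fun e => by rw [e] at hr; simp at hr
  have hsq : √(Real.pi / G) ≤ σ * √(Real.pi / ‖a + g‖) := by
    rw [show σ * √(Real.pi / ‖a + g‖) = √(σ^2) * √(Real.pi / ‖a + g‖) by rw [Real.sqrt_sq hσ.le],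
      ← Real.sqrt_mul (by positivity)]
    apply Real.sqrt_le_sqrt
    rw [← mul_div_assoc, div_le_div_iff₀ hG hpos]
    nlinarith [mul_le_mul_of_nonneg_left hag Real.pi_pos.le]
  rw [hs2]
  calc _ ≤ ‖D‖ * (σ * √(Real.pi / ‖a + g‖)) := by gcongr
    _ = _ := by ring

lemma one_main (P : Pert σ γ c C1 (w0 g) ψ) (L : Lev (σ^2) γ cs) (hσ : 0 < σ) (hσ1 : σ ≤ 1) (hC1 : 0 ≤ C1)
    (hc0 : 0 < c) (hcs : 2 * c ≤ cs) (hcγ : 8 * (2 * c) ≤ γ) (hg : 0 < g.re) (l : ℕ)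
    (hl : σ^2 * l ≤ 1) (hl' : 1/2 ≤ σ^2 * l) :
    σ * ‖Zc (wp (w0 g) ψ) l - Zc (w0 g) l‖ ≤ √(Real.pi / c) * ((cA C1 1 cs + C1 * Real.exp (2 * cs)) * σ) := by
  have hw : BM (w0 g) := BM_cexp_sq hg.le
  have hψ := P.hψ
  have hwp := P.hwp
  have hg0 := L.g0
  have hcsp := L.c0
  have h1B : BM (fun _ : ℝ => (1:ℂ)) := BM.const 1
  have wp1 : ∀ x, ‖wp (w0 g) ψ x‖ ≤ 1 := fun x => by
    refine (P.bw' x).trans (Real.exp_le_one_iff.2 ?_)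
    have := mul_nonneg (mul_nonneg L.g0.le (sq_nonneg (σ^2))) (sq_nonneg x); linarith
  have w01 : ∀ x, ‖w0 g x‖ ≤ 1 := fun x => by
    refine (P.bw x).trans (Real.exp_le_one_iff.2 ?_)
    have := mul_nonneg (mul_nonneg L.g0.le (sq_nonneg (σ^2))) (sq_nonneg x); linarith
  have iexp : Integrable (fun x : ℝ => Real.exp (-(c * σ^2) * x^2)) :=
    integrable_exp_neg_mul_sq (mul_pos hc0 (pow_pos hσ 2))
  obtain ⟨d, hd⟩ : ∃ d : ℝ → ℂ, d = fun x => (K (wp (w0 g) ψ))^[l] (fun _ => 1) x - (K (w0 g))^[l] (fun _ => 1) x := ⟨_, rfl⟩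
  have dB : BM d := by rw [hd]; exact (Kit_BM hwp h1B l).sub (Kit_BM hw h1B l)
  have hdn : ∀ x, ‖d x‖ ≤ cA C1 1 cs * σ * Real.exp (-(c * σ^2) * x^2) := fun x => by
    have := P.strong L hσ hC1 hc0 hcs h1B (F := 1) (by simp) l hl hl' (by linarith) x
    rw [hd]; unfold cA; simpa using this
  obtain ⟨k, hk⟩ : ∃ k : ℝ → ℂ, k = (K (w0 g))^[l] (fun _ => 1) := ⟨_, rfl⟩
  have kB : BM k := by rw [hk]; exact Kit_BM hw h1B l
  have hkn : ∀ x, ‖k x‖ ≤ Real.exp (2 * cs) * Real.exp (-(2 * c * σ^2) * x^2) := fun x => by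
    have := L.iter' (c := 0) (c' := 2 * c) (C := 1) (T := 1) (by linarith) hcsp.le P.bw (f := fun _ => 1) (by simp) l hl hcs
      (by nlinarith) x
    rw [hk]; simpa using this
  have hkn' : ∀ x, ‖k x‖ ≤ Real.exp (2 * cs) * Real.exp (-(c * σ^2) * x^2) := fun x => by
    refine (hkn x).trans (mul_le_mul_of_nonneg_left (Real.exp_le_exp.2 ?_) (Real.exp_pos _).le)
    have := mul_nonneg (mul_nonneg hc0.le (sq_nonneg σ)) (sq_nonneg x); nlinarith
  have i1 : Integrable d := (iexp.const_mul _).mono' dB.1.aestronglyMeasurable (Filter.Eventually.of_forall hdn)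
  have i2 : Integrable k := (iexp.const_mul _).mono' kB.1.aestronglyMeasurable (Filter.Eventually.of_forall hkn')
  have j1 := hwp.integrable_mul i1
  have j2 := hwp.integrable_mul i2
  have j3 := hw.integrable_mul i2
  have e : Zc (wp (w0 g) ψ) l - Zc (w0 g) l = (∫ x, d x * wp (w0 g) ψ x) + ∫ x, w0 g x * (ψ x * k x) := by
    have e1 : Zc (wp (w0 g) ψ) l = (∫ x, d x * wp (w0 g) ψ x) + ∫ x, k x * wp (w0 g) ψ x := by
      rw [← integral_add j1 j2]; unfold Zc; congr 1; ext x; rw [hd, hk]; ring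
    have e2 : Zc (w0 g) l = ∫ x, k x * w0 g x := by
      unfold Zc; congr 1; ext x; rw [hk]; ring
    rw [e1, e2, add_sub_assoc, ← integral_sub j2 j3]
    congr 2; ext x; unfold wp; ring
  have b1 : σ * ‖∫ x, d x * wp (w0 g) ψ x‖ ≤ √(Real.pi / c) * (cA C1 1 cs * σ) := by
    apply gauss_scale hc0 hσ
    intro x
    rw [norm_mul]
    exact (mul_le_of_le_one_right (norm_nonneg _) (wp1 x)).trans (hdn x)
  have b2 : σ * ‖∫ x, w0 g x * (ψ x * k x)‖ ≤ √(Real.pi / c) * (C1 * Real.exp (2 * cs) * σ) := by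
    apply gauss_scale hc0 hσ
    intro x
    rw [norm_mul, norm_mul]
    calc _ ≤ 1 * ((C1 * σ^3 * Real.exp ((c * σ^2) * x^2)) * (Real.exp (2 * cs) * Real.exp (-(2 * c * σ^2) * x^2))) := by
          gcongr
          · exact w01 x
          · exact P.bψ x
          · exact hkn x
      _ = C1 * Real.exp (2 * cs) * σ^3 * (Real.exp ((c * σ^2) * x^2) * Real.exp (-(2 * c * σ^2) * x^2)) := by ring
      _ = C1 * Real.exp (2 * cs) * σ^3 * Real.exp (-(c * σ^2) * x^2) := by
          rw [← Real.exp_add]; congr 2; ring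
      _ ≤ _ := by
          gcongr
          calc σ^3 ≤ σ^1 := pow_le_pow_of_le_one hσ.le hσ1 (by norm_num)
            _ = σ := pow_one _
  rw [e]
  calc _ ≤ σ * (‖∫ x, d x * wp (w0 g) ψ x‖ + ‖∫ x, w0 g x * (ψ x * k x)‖) := by
        gcongr; exact norm_add_le _ _
    _ ≤ _ := by rw [mul_add]; linarith

end BandChain

namespace BandChain

noncomputable def cw (w : ℝ → ℂ) (m : ℕ) (x : Fin (m+1) → ℝ) : ℂ :=
  (∏ i : Fin (m+1), w (x i)) * ∏ i : Fin m, ((gk (x i.castSucc - x i.succ) : ℝ) : ℂ)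

lemma gk_le (u : ℝ) : gk u ≤ (√(2 * Real.pi))⁻¹ := by
  unfold gk
  apply mul_le_of_le_one_right (by positivity)
  apply Real.exp_le_one_iff.2
  nlinarith [sq_nonneg u]

lemma cw_int {w F : ℝ → ℂ} (_hw : BM w) (hi : Integrable w) (hF : BM F) (m : ℕ) :
    Integrable (fun x : Fin (m+1) → ℝ => F (x 0) * cw w m x) := by
  have h1 : Integrable (fun x : Fin (m+1) → ℝ => ∏ i : Fin (m+1), w (x i)) := by
    exact Integrable.fintype_prod (f := fun _ => w) (fun _ => hi)
  obtain ⟨mF, C, hC⟩ := hF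
  have mg : Measurable gk := gk_cont.measurable
  have h2 : Integrable (fun x : Fin (m+1) → ℝ => (∏ i : Fin (m+1), w (x i)) * (F (x 0) * ∏ i : Fin m, ((gk (x i.castSucc - x i.succ) : ℝ) : ℂ))) := by
    refine h1.mul_bdd (c := C * ∏ i : Fin m, (√(2 * Real.pi))⁻¹) ?_ (Filter.Eventually.of_forall fun x => ?_)
    · apply Measurable.aestronglyMeasurable
      apply Measurable.mul
      · exact mF.comp (measurable_pi_apply 0)
      · refine Finset.measurable_prod _ fun i _ => ?_
        exact Complex.measurable_ofReal.comp (mg.comp ((measurable_pi_apply _).sub (measurable_pi_apply _)))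
    · rw [norm_mul, norm_prod]
      have hC0 : 0 ≤ C := (norm_nonneg _).trans (hC 0)
      gcongr with i
      · exact hC _
      · rw [Complex.norm_real, Real.norm_of_nonneg (gk_nonneg _)]; exact gk_le _
  refine h2.congr (Filter.Eventually.of_forall fun x => ?_)
  unfold cw; ring

lemma chain {w F : ℝ → ℂ} (hw : BM w) (hi : Integrable w) (hF : BM F) (m : ℕ) :
    ∫ x : Fin (m+1) → ℝ, F (x 0) * cw w m x = ∫ y, F y * (w y * (K w)^[m] (fun _ => 1) y) := by
  induction m generalizing F with
  | zero =>
    have := (volume_preserving_funUnique (Fin 1) ℝ).integral_comp' (fun y => F y * (w y * (K w)^[0] (fun _ => 1) y))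
    rw [← this]
    congr 1; ext x
    simp [cw, MeasurableEquiv.funUnique]
  | succ m ih =>
    have vp := (volume_preserving_piFinSuccAbove (fun _ : Fin (m+2) => ℝ) 0).symm
    rw [← vp.integral_comp' ]
    have hIntg := (vp.integrable_comp_emb (MeasurableEquiv.measurableEmbedding _)).2 (cw_int hw hi hF (m+1))
    rw [Measure.volume_eq_prod] at hIntg ⊢
    refine (integral_prod _ hIntg).trans ?_
    congr 1; ext y
    rw [Function.iterate_succ_apply']
    have ih' := ih (F := fun z => ((gk (y - z) : ℝ) : ℂ)) ⟨Complex.measurable_ofReal.comp (gk_cont.measurable.comp (measurable_const.sub measurable_id)),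
      (√(2 * Real.pi))⁻¹, fun z => by rw [Complex.norm_real, Real.norm_of_nonneg (gk_nonneg _)]; exact gk_le _⟩
    unfold K at ih' ⊢
    rw [← ih', ← mul_assoc, ← integral_const_mul]
    congr 1; ext x
    have e0 : (MeasurableEquiv.piFinSuccAbove (fun _ : Fin (m+2) => ℝ) 0).symm (y, x) = Fin.cons y x := by
      ext i; simp [MeasurableEquiv.piFinSuccAbove, Fin.insertNthEquiv]
    rw [Function.comp_apply, e0]
    unfold cw
    have hA : ∏ i : Fin (m+1+1), w ((Fin.cons y x : Fin (m+2) → ℝ) i) = w y * ∏ i : Fin (m+1), w (x i) := by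
      rw [Fin.prod_univ_succ]; simp only [Fin.cons_zero, Fin.cons_succ]
    have hB : ∏ i : Fin (m+1), ((gk ((Fin.cons y x : Fin (m+2) → ℝ) i.castSucc - (Fin.cons y x : Fin (m+2) → ℝ) i.succ) : ℝ) : ℂ)
        = ((gk (y - x 0) : ℝ) : ℂ) * ∏ i : Fin m, ((gk (x i.castSucc - x i.succ) : ℝ) : ℂ) := by
      rw [Fin.prod_univ_succ]
      simp only [Fin.castSucc_zero, ← Fin.succ_castSucc, Fin.cons_zero, Fin.cons_succ]
    rw [hA, hB, Fin.cons_zero]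
    ring

lemma chain1 {w : ℝ → ℂ} (hw : BM w) (hi : Integrable w) (m : ℕ) :
    ∫ x : Fin (m+1) → ℝ, cw w m x = Zc w m := by
  have := chain hw hi (BM.const 1) m
  simpa [Zc] using this

end BandChain

namespace BandChain

noncomputable def psi (φ : ℝ → ℂ) (W δ : ℝ) (y : ℝ) : ℂ :=
  (if |y| ≤ δ * W then Complex.exp (-φ (y / W)) else 0) - 1

lemma pad_fin {m : ℕ} (x : Fin m → ℝ) (i : Fin m) : pad m x i = x i := by
  unfold pad; simp

lemma muG_eq (m : ℕ) (W : ℝ) (γ : ℂ) (x : Fin (m+1) → ℝ) :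
    muG (m+1) W γ x = ((√(2 * Real.pi) : ℝ) : ℂ)^m * cw (w0 (γ / (W:ℂ)^2)) m x := by
  unfold muG cw
  have h1 : ∑ j ∈ Finset.range (m+1), (pad (m+1) x j)^2 = ∑ i : Fin (m+1), (x i)^2 := by
    rw [Finset.sum_range]; simp_rw [pad_fin]
  have h2 : ∑ j ∈ Finset.Ico 1 (m+1), (pad (m+1) x j - pad (m+1) x (j-1))^2
      = ∑ i : Fin m, (x i.castSucc - x i.succ)^2 := by
    rw [Finset.sum_Ico_eq_sum_range, Nat.add_sub_cancel, Finset.sum_range]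
    apply Finset.sum_congr rfl
    intro i _
    have e1 := pad_fin x i.succ
    have e2 := pad_fin x i.castSucc
    simp only [Fin.val_succ, Fin.val_castSucc] at e1 e2
    rw [show 1 + (i:ℕ) = i + 1 by ring, e1, Nat.add_sub_cancel, e2]; ring
  rw [h1, h2, sub_eq_add_neg, Complex.exp_add]
  have h3 : ∏ i : Fin (m+1), w0 (γ / (W:ℂ)^2) (x i)
      = Complex.exp (-((γ / (W:ℂ)^2) * ((∑ i : Fin (m+1), (x i)^2 : ℝ) : ℂ))) := by
    unfold w0
    rw [← Complex.exp_sum, ← Finset.mul_sum]; push_cast; ring_nf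
  have h4 : ((√(2 * Real.pi) : ℝ) : ℂ)^m * ∏ i : Fin m, ((gk (x i.castSucc - x i.succ) : ℝ) : ℂ)
      = Complex.exp ((-(1/2) * ∑ i : Fin m, (x i.castSucc - x i.succ)^2 : ℝ) : ℂ) := by
    rw [← Complex.ofReal_exp, Finset.mul_sum, Real.exp_sum, ← Complex.ofReal_prod, ← Complex.ofReal_pow,
      ← Complex.ofReal_mul]
    congr 1
    unfold gk
    rw [Finset.prod_mul_distrib, Finset.prod_const, Finset.card_univ, Fintype.card_fin, ← mul_assoc,
      ← mul_pow, mul_inv_cancel₀ sqrt2pi_pos.ne', one_pow, one_mul]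
  rw [h3, mul_left_comm, h4, mul_comm]

lemma box_meas (m : ℕ) (r : ℝ) : MeasurableSet (box m r) := by
  have : box m r = ⋂ i, {x : Fin m → ℝ | |x i| ≤ r} := by ext; simp [box]
  rw [this]
  exact MeasurableSet.iInter fun i => measurableSet_le (measurable_pi_apply i).abs measurable_const

lemma box_int (m : ℕ) (W δ : ℝ) (γ : ℂ) (φ : ℝ → ℂ) (hw : BM (wp (w0 (γ / (W:ℂ)^2)) (psi φ W δ)))
    (hi : Integrable (wp (w0 (γ / (W:ℂ)^2)) (psi φ W δ))) :
    ∫ x in box (m+1) (δ * W), Complex.exp (-(∑ j, φ (x j / W))) * muG (m+1) W γ x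
      = ((√(2 * Real.pi) : ℝ) : ℂ)^m * Zc (wp (w0 (γ / (W:ℂ)^2)) (psi φ W δ)) m := by
  rw [← chain1 hw hi, ← integral_const_mul, ← integral_indicator (box_meas _ _)]
  congr 1; ext x
  by_cases hx : x ∈ box (m+1) (δ * W)
  · rw [Set.indicator_of_mem hx, muG_eq, mul_left_comm]
    congr 1
    unfold cw
    rw [← mul_assoc]; congr 1
    unfold wp psi
    rw [← Finset.sum_neg_distrib, Complex.exp_sum, mul_comm, ← Finset.prod_mul_distrib]
    apply Finset.prod_congr rfl
    intro i _
    rw [if_pos (hx i)]; ring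
  · rw [Set.indicator_of_notMem hx]
    symm
    have : ∃ i, ¬ |x i| ≤ δ * W := by
      by_contra! h; exact hx h
    obtain ⟨i, hi'⟩ := this
    unfold cw
    rw [Finset.prod_eq_zero (Finset.mem_univ i) (by unfold wp psi; rw [if_neg hi']; ring)]
    ring

lemma avg0_eq (n : ℕ) (W δ : ℝ) (γ : ℂ) (φ : ℝ → ℂ) (hw : BM (wp (w0 (γ / (W:ℂ)^2)) (psi φ W δ)))
    (hi : Integrable (wp (w0 (γ / (W:ℂ)^2)) (psi φ W δ)))
    (hw' : BM (wp (w0 (γ / (W:ℂ)^2)) (psi 0 W δ)))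
    (hi' : Integrable (wp (w0 (γ / (W:ℂ)^2)) (psi 0 W δ))) :
    avg0 n W δ γ (fun x => Complex.exp (-(∑ j, φ (x j / W))))
      = Zc (wp (w0 (γ / (W:ℂ)^2)) (psi φ W δ)) (2*n) / Zc (wp (w0 (γ / (W:ℂ)^2)) (psi 0 W δ)) (2*n) := by
  unfold avg0
  rw [box_int (2*n) W δ γ φ hw hi]
  have := box_int (2*n) W δ γ 0 hw' hi'
  simp only [Pi.zero_apply, Finset.sum_const_zero, neg_zero, Complex.exp_zero, one_mul] at this
  rw [this]
  have h : ((√(2 * Real.pi) : ℝ) : ℂ)^(2*n) ≠ 0 := pow_ne_zero _ (by exact_mod_cast sqrt2pi_pos.ne')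
  rw [mul_div_mul_left _ _ h]

end BandChain

namespace BandChain

lemma abs_pow_four (t : ℝ) : |t|^4 = t^4 := by
  rw [← abs_pow]; exact abs_of_nonneg (by positivity)

lemma exp_pow4 {c : ℝ} (hc : 0 < c) (z : ℝ) :
    1 + z^4 + z^8 ≤ (1 + 2/c^2 + 24/c^4) * Real.exp (c * z^2) := by
  have hx : 0 ≤ c * z^2 := by positivity
  have h2 := Real.pow_div_factorial_le_exp _ hx 2
  have h4 := Real.pow_div_factorial_le_exp _ hx 4
  have h0 := Real.one_le_exp hx
  have e2 : z^4 = 2/c^2 * ((c * z^2)^2 / (Nat.factorial 2 : ℝ)) := by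
    simp [Nat.factorial]; field_simp
  have e4 : z^8 = 24/c^4 * ((c * z^2)^4 / (Nat.factorial 4 : ℝ)) := by
    simp [Nat.factorial]; field_simp
  rw [e2, e4, add_mul, add_mul, one_mul]
  gcongr

/-- constants for the perturbation -/
noncomputable def cC (c C0 b : ℝ) : ℝ := (C0 + (b + C0)^2 + b + 1) * (1 + 2/c^2 + 24/c^4)

lemma cC_nonneg {c C0 b : ℝ} (h0 : 0 ≤ C0) (hb : 0 ≤ b) (hc : 0 < c) : 0 ≤ cC c C0 b := by
  unfold cC; positivity

lemma pert_of {γ : ℂ} {φ : ℝ → ℂ} {β : ℂ} {C0 c σ W δ : ℝ} (hγ : 0 < γ.re) (hφm : Measurable φ)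
    (hC0 : 0 ≤ C0) (hφ : ∀ t : ℝ, |t| ≤ 1/2 → ‖φ t - β * (t:ℂ)^3‖ ≤ C0 * t^4) (hc : 0 < c)
    (hσ : 0 < σ) (hσ1 : σ ≤ 1) (hW : σ^2 * W = 1) (hδ : 0 < δ) (hδ1 : δ ≤ 1/2) (hσδ : σ ≤ δ^4)
    (hB1 : (‖β‖ + C0) * δ ≤ 1) (hB2 : (‖β‖ + C0) * δ ≤ γ.re / 2) :
    Pert σ (γ.re/2) c (cC c C0 ‖β‖) (w0 (γ / (W:ℂ)^2)) (psi φ W δ) := by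
  set B := ‖β‖ + C0 with hB
  have hB0 : 0 ≤ B := by positivity
  have hWi : W = (σ^2)⁻¹ := eq_inv_of_mul_eq_one_right hW
  have hre : (γ / (W:ℂ)^2).re = γ.re * σ^4 := by
    rw [hWi]; push_cast
    rw [show γ / (((σ:ℂ)^2)⁻¹)^2 = γ * ((σ^4 : ℝ) : ℂ) by push_cast; rw [inv_pow, div_inv_eq_mul]; ring, Complex.re_mul_ofReal]
  have hdiv : ∀ y : ℝ, y / W = σ^2 * y := fun y => by rw [hWi, div_inv_eq_mul]; ring
  have hin : ∀ y : ℝ, |y| ≤ δ * W ↔ |σ^2 * y| ≤ δ := fun y => by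
    rw [← hdiv, abs_div, abs_of_pos (by rw [hWi]; positivity : 0 < W), div_le_iff₀ (by rw [hWi]; positivity)]
  have b3 : ∀ t : ℝ, |t| ≤ δ → ‖φ t‖ ≤ B * |t|^3 := fun t ht => by
    have h1 := hφ t (ht.trans hδ1)
    have h2 : ‖β * (t:ℂ)^3‖ = ‖β‖ * |t|^3 := by rw [norm_mul, norm_pow, Complex.norm_real, Real.norm_eq_abs]
    have h3 : t^4 ≤ |t|^3 := by
      rw [← abs_pow_four t]
      exact pow_le_pow_of_le_one (abs_nonneg t) (by linarith) (by norm_num)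
    calc ‖φ t‖ = ‖(φ t - β * (t:ℂ)^3) + β * (t:ℂ)^3‖ := by ring_nf
      _ ≤ _ := (norm_add_le _ _).trans (by rw [h2, hB]; nlinarith)
  have b2 : ∀ t : ℝ, |t| ≤ δ → ‖φ t‖ ≤ B * δ * t^2 := fun t ht => by
    refine (b3 t ht).trans ?_
    rw [← sq_abs t]
    have := mul_le_mul_of_nonneg_left ht (by positivity : 0 ≤ B * |t|^2)
    nlinarith
  have b1 : ∀ t : ℝ, |t| ≤ δ → ‖φ t‖ ≤ 1 := fun t ht => by
    refine (b2 t ht).trans ?_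
    have : t^2 ≤ 1 := by rw [sq_le_one_iff_abs_le_one]; linarith
    nlinarith [mul_nonneg hB0 hδ.le]
  set ψo : ℝ → ℂ := fun y => if |y| ≤ δ * W then -(β * ((y / W : ℝ) : ℂ)^3) else 0 with hψo
  have hset : MeasurableSet {y : ℝ | |y| ≤ δ * W} := measurableSet_le measurable_id.abs measurable_const
  have mψ : Measurable (psi φ W δ) := by
    unfold psi
    refine Measurable.sub (Measurable.ite hset ?_ measurable_const) measurable_const
    exact Complex.measurable_exp.comp ((hφm.comp (measurable_id.div_const W)).neg)
  have mψo : Measurable ψo := by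
    refine Measurable.ite hset ?_ measurable_const
    fun_prop
  -- strong bound
  have hE : ∀ y : ℝ, 1 + (σ*y)^4 + (σ*y)^8 ≤ (1 + 2/c^2 + 24/c^4) * Real.exp (c * σ^2 * y^2) := fun y => by
    have := exp_pow4 hc (σ * y)
    rwa [mul_pow σ y 2, ← mul_assoc c] at this
  have hd : ∀ y, ‖psi φ W δ y - ψo y‖ ≤ (C0 + B^2 + 1) * σ^4 * (1 + (σ*y)^4 + (σ*y)^8) := fun y => by
    have p4 : 0 ≤ (σ*y)^4 := by positivity
    have p8 : 0 ≤ (σ*y)^8 := by positivity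
    by_cases hy : |y| ≤ δ * W
    · have ht := (hin y).1 hy
      simp only [psi, hψo, if_pos hy, hdiv]
      set t := σ^2 * y with htt
      have h1 := Complex.norm_exp_sub_one_sub_id_le (x := -φ t) (by rw [norm_neg]; exact b1 t ht)
      have h2 := hφ t (ht.trans hδ1)
      rw [norm_neg] at h1
      have h3 : ‖φ t‖^2 ≤ B^2 * t^4 := by
        calc ‖φ t‖^2 ≤ (B * |t|^3)^2 := by gcongr; exact b3 t ht
          _ = B^2 * (|t|^4 * |t|^2) := by ring
          _ ≤ B^2 * (t^4 * 1) := by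
            rw [abs_pow_four]; gcongr
            exact pow_le_one₀ (abs_nonneg t) (by linarith)
          _ = _ := by ring
      have e4 : t^4 = σ^4 * (σ*y)^4 := by rw [htt]; ring
      calc _ = ‖(Complex.exp (-φ t) - 1 - -φ t) - (φ t - β * (t:ℂ)^3)‖ := by congr 1; ring
        _ ≤ B^2 * t^4 + C0 * t^4 := (norm_sub_le _ _).trans (add_le_add (h1.trans h3) h2)
        _ = (C0 + B^2) * σ^4 * (σ*y)^4 := by rw [e4]; ring
        _ ≤ _ := by
          gcongr ?_ * _ * ?_ <;> linarith
    · have ht : δ < |σ^2 * y| := by rw [hin] at hy; exact not_le.1 hy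
      simp only [psi, hψo, if_neg hy]
      have h8 : δ^8 ≤ σ^8 * (σ*y)^8 := by
        calc δ^8 ≤ |σ^2*y|^8 := by gcongr
          _ = (σ^2*y)^8 := by rw [← abs_pow]; exact abs_of_nonneg (by positivity)
          _ = _ := by ring
      have h9 : σ^2 ≤ δ^8 := by
        calc σ^2 ≤ (δ^4)^2 := by gcongr
          _ = _ := by ring
      have h10 : 1 ≤ σ^6 * (σ*y)^8 := by
        have : σ^2 * 1 ≤ σ^2 * (σ^6 * (σ*y)^8) := by nlinarith
        exact le_of_mul_le_mul_left this (by positivity)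
      have h11 : σ^6 ≤ σ^4 := pow_le_pow_of_le_one hσ.le hσ1 (by norm_num)
      calc _ = (1:ℝ) := by simp
        _ ≤ σ^4 * (σ*y)^8 := h10.trans (by gcongr)
        _ ≤ 1 * σ^4 * (1 + (σ*y)^4 + (σ*y)^8) := by
          rw [one_mul]; gcongr; linarith
        _ ≤ _ := by
          gcongr
          nlinarith
  have ho : ∀ y, ‖ψo y‖ ≤ ‖β‖ * σ^3 * (1 + (σ*y)^4 + (σ*y)^8) := fun y => by
    have p4 : 0 ≤ (σ*y)^4 := by positivity
    have p8 : 0 ≤ (σ*y)^8 := by positivity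
    by_cases hy : |y| ≤ δ * W
    · simp only [hψo, if_pos hy, hdiv]
      rw [norm_neg, norm_mul, norm_pow, Complex.norm_real, Real.norm_eq_abs]
      have : |σ^2 * y|^3 = σ^3 * |σ*y|^3 := by
        rw [abs_mul, abs_mul, abs_of_pos hσ, abs_of_pos (pow_pos hσ 2)]; ring
      rw [this, mul_assoc]
      gcongr
      have : |σ*y|^3 ≤ 1 + |σ*y|^4 := by
        have a0 := abs_nonneg (σ*y)
        rcases le_total |σ*y| 1 with h | h
        · have := pow_le_one₀ (n := 3) a0 h
          have : 0 ≤ |σ*y|^4 := by positivity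
          linarith
        · have := pow_le_pow_right₀ h (by norm_num : 3 ≤ 4)
          linarith
      rw [abs_pow_four] at this
      linarith
    · simp only [hψo, if_neg hy, norm_zero]; positivity
  have hσ43 : σ^4 ≤ σ^3 := pow_le_pow_of_le_one hσ.le hσ1 (by norm_num)
  refine ⟨BM_cexp_sq (by rw [hre]; positivity), ⟨mψ, 2, fun y => ?_⟩, fun y => ?_, fun y => ?_, fun y => ?_, ψo, ⟨mψo, B, fun y => ?_⟩, fun y => ?_, fun y => ?_⟩
  · by_cases hy : |y| ≤ δ * W
    · have ht := (hin y).1 hy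
      simp only [psi, if_pos hy, hdiv]
      have := Complex.norm_exp_sub_one_le (x := -φ (σ^2*y)) (by rw [norm_neg]; exact b1 _ ht)
      rw [norm_neg] at this
      linarith [b1 _ ht]
    · simp [psi, if_neg hy]
  · unfold w0
    rw [norm_cexp_sq, hre]
    apply Real.exp_le_exp.2
    have : 0 ≤ γ.re * σ^4 * y^2 := by positivity
    nlinarith
  · unfold psi
    by_cases hy : |y| ≤ δ * W
    · have ht := (hin y).1 hy
      rw [if_pos hy, hdiv, add_sub_cancel, norm_mul]
      unfold w0
      rw [norm_cexp_sq, hre]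
      have h1 : ‖Complex.exp (-φ (σ^2*y))‖ ≤ Real.exp (γ.re/2 * (σ^2*y)^2) := by
        rw [Complex.norm_exp]
        apply Real.exp_le_exp.2
        calc _ ≤ ‖-φ (σ^2*y)‖ := Complex.re_le_norm _
          _ ≤ B * δ * (σ^2*y)^2 := by rw [norm_neg]; exact b2 _ ht
          _ ≤ _ := by gcongr
      refine (mul_le_mul_of_nonneg_left h1 (Real.exp_nonneg _)).trans ?_
      rw [← Real.exp_add]
      apply Real.exp_le_exp.2
      apply le_of_eq; ring
    · rw [if_neg hy]; simp; positivity
  · calc ‖psi φ W δ y‖ = ‖(psi φ W δ y - ψo y) + ψo y‖ := by ring_nf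
      _ ≤ (C0 + B^2 + 1) * σ^3 * (1 + (σ*y)^4 + (σ*y)^8) + ‖β‖ * σ^3 * (1 + (σ*y)^4 + (σ*y)^8) := by
        refine (norm_add_le _ _).trans (add_le_add ((hd y).trans ?_) (ho y))
        gcongr
      _ = (C0 + B^2 + ‖β‖ + 1) * σ^3 * (1 + (σ*y)^4 + (σ*y)^8) := by ring
      _ ≤ (C0 + B^2 + ‖β‖ + 1) * σ^3 * ((1 + 2/c^2 + 24/c^4) * Real.exp (c * σ^2 * y^2)) := by
        gcongr; exact hE y
      _ = _ := by unfold cC; ring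
  · by_cases hy : |y| ≤ δ * W
    · have ht := (hin y).1 hy
      simp only [hψo, if_pos hy, hdiv]
      rw [norm_neg, norm_mul, norm_pow, Complex.norm_real, Real.norm_eq_abs]
      have := pow_le_one₀ (n := 3) (abs_nonneg (σ^2*y)) (by linarith)
      nlinarith [norm_nonneg β]
    · simp only [hψo, if_neg hy, norm_zero]; exact hB0
  · simp only [hψo, abs_neg]
    split_ifs
    · push_cast; ring
    · simp
  · calc _ ≤ (C0 + B^2 + 1) * σ^4 * (1 + (σ*y)^4 + (σ*y)^8) := hd y
      _ ≤ (C0 + B^2 + ‖β‖ + 1) * σ^4 * ((1 + 2/c^2 + 24/c^4) * Real.exp (c * σ^2 * y^2)) := by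
        gcongr ?_ * _ * ?_
        · linarith [norm_nonneg β]
        · exact hE y
      _ = _ := by unfold cC; ring

lemma wp_int {σ γ c C1 : ℝ} {w ψ : ℝ → ℂ} (P : Pert σ γ c C1 w ψ) (hσ : 0 < σ) (hγ : 0 < γ) :
    Integrable (wp w ψ) := by
  have : Integrable (fun y : ℝ => Real.exp (-(γ * (σ^2)^2) * y^2)) := integrable_exp_neg_mul_sq (by positivity)
  exact this.mono' P.hwp.1.aestronglyMeasurable (Filter.Eventually.of_forall P.bw')

end BandChain

namespace BandChain
open Filter Topology

noncomputable def Om (γ : ℂ) (σ : ℝ) : ℂ := (2 * γ + γ^2 * (σ:ℂ)^4) ^ (1/2 : ℂ)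
noncomputable def omf (γ : ℂ) (σ : ℝ) : ℂ := Om γ σ * (σ:ℂ)^2
noncomputable def gf (γ : ℂ) (σ : ℝ) : ℂ := γ * (σ:ℂ)^4

lemma Om_tendsto {γ : ℂ} (hγ : 0 < γ.re) : Tendsto (fun σ : ℝ => Om γ σ) (𝓝 0) (𝓝 ((2 * γ) ^ (1/2 : ℂ))) := by
  have h : ContinuousAt (fun σ : ℝ => Om γ σ) 0 := by
    unfold Om
    refine ContinuousAt.cpow (by fun_prop) continuousAt_const ?_
    left; simpa using hγ
  have := h.tendsto
  simpa [Om] using this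

set_option maxHeartbeats 1000000 in
lemma blk_ex {γ : ℂ} (hγ : 0 < γ.re) : ∃ cs c c2 M T Λ : ℝ, ∃ mf : ℝ → ℕ, 0 < c ∧ 2 * c ≤ cs ∧ 8 * (2 * c) ≤ γ.re/2 ∧
    0 < T ∧ 0 < M * c2 ∧
    ∀ᶠ σ : ℝ in 𝓝[>] 0, Lev (σ^2) (γ.re/2) cs ∧ ∀ (C1 : ℝ) (ψ : ℝ → ℂ), 0 ≤ C1 →
      Pert σ (γ.re/2) c C1 (w0 (gf γ σ)) ψ → Blk σ (γ.re/2) cs c C1 c2 M T Λ (gf γ σ) (omf γ σ) ψ (mf σ) := by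
  set Ω0 : ℂ := (2 * γ) ^ (1/2 : ℂ) with hΩ0
  have hΩr : 0 < Ω0.re := (csqrt_sector (z := 2 * γ) (by simpa using hγ)).1
  set G := γ.re/2 with hG
  have hG0 : 0 < G := by positivity
  obtain ⟨c1, hc1⟩ : ∃ c1, c1 = Ω0.re/2 := ⟨_, rfl⟩
  obtain ⟨c2, hc2⟩ : ∃ c2, c2 = c1/8 := ⟨_, rfl⟩
  obtain ⟨M, hM⟩ : ∃ M, M = 1 + (‖Ω0‖ + 1)/c2 := ⟨_, rfl⟩
  obtain ⟨cs, hcs⟩ : ∃ cs, cs = √G/4 := ⟨_, rfl⟩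
  obtain ⟨c, hc⟩ : ∃ c, c = min (min (cs/2) c2) (G/16) := ⟨_, rfl⟩
  obtain ⟨τ, hτ⟩ : ∃ τ, τ = 1 + 24 * M^2/c1 := ⟨_, rfl⟩
  have c1p : 0 < c1 := by rw [hc1]; positivity
  have c2p : 0 < c2 := by rw [hc2]; positivity
  have Mp : 1 ≤ M := by rw [hM]; have : 0 ≤ (‖Ω0‖ + 1)/c2 := by positivity
                        linarith
  have csp : 0 < cs := by rw [hcs]; positivity
  have cp : 0 < c := by rw [hc]; positivity
  have hc_cs : 2 * c ≤ cs := by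
    have : c ≤ cs/2 := by rw [hc]; exact (min_le_left _ _).trans (min_le_left _ _)
    linarith
  have hc_c2 : c ≤ c2 := by rw [hc]; exact (min_le_left _ _).trans (min_le_right _ _)
  have hc_G : c ≤ G/16 := by rw [hc]; exact min_le_right _ _
  have τ1 : 1 ≤ τ := by rw [hτ]; have : 0 ≤ 24 * M^2/c1 := by positivity
                        linarith
  have τc : 24 * M^2 ≤ τ * c1 := by
    rw [hτ, add_mul, div_mul_cancel₀ _ c1p.ne']; linarith
  have hMc : ‖Ω0‖ + 1 ≤ M * c2 := by
    rw [hM, add_mul, div_mul_cancel₀ _ c2p.ne']; linarith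
  refine ⟨cs, c, c2, M, τ + 1, Real.exp (M * c2 * (τ + 1)), fun σ => ⌈τ * (σ^2)⁻¹⌉₊, cp, hc_cs, by linarith, by linarith, by positivity, ?_⟩
  have t1 : Tendsto (fun σ : ℝ => Om γ σ) (𝓝[>] 0) (𝓝 Ω0) := (Om_tendsto hγ).mono_left nhdsWithin_le_nhds
  have t2 : Tendsto (fun σ : ℝ => Om γ σ - γ * (σ:ℂ)^2) (𝓝[>] 0) (𝓝 Ω0) := by
    have : Tendsto (fun σ : ℝ => γ * (σ:ℂ)^2) (𝓝[>] 0) (𝓝 0) := by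
      refine (Continuous.tendsto' (by fun_prop) 0 0 (by simp)).mono_left nhdsWithin_le_nhds
    simpa using t1.sub this
  have e1 : ∀ᶠ σ : ℝ in 𝓝[>] 0, ‖Om γ σ‖ < ‖Ω0‖ + 1 := t1.norm.eventually_lt_const (by linarith)
  have e2 : ∀ᶠ σ : ℝ in 𝓝[>] 0, c1 < (Om γ σ - γ * (σ:ℂ)^2).re :=
    ((Complex.continuous_re.tendsto _).comp t2).eventually_const_lt (by rw [hc1]; linarith)
  have e2' : ∀ᶠ σ : ℝ in 𝓝[>] 0, c1 < (Om γ σ).re :=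
    ((Complex.continuous_re.tendsto _).comp t1).eventually_const_lt (by rw [hc1]; linarith)
  have lt : ∀ (f : ℝ → ℝ) (a : ℝ), Continuous f → f 0 < a → ∀ᶠ σ : ℝ in 𝓝[>] 0, f σ < a := fun f a hf h =>
    ((hf.tendsto 0).mono_left nhdsWithin_le_nhds).eventually_lt_const h
  have e3 := lt (fun σ => 16 * cs * σ^2) 1 (by fun_prop) (by simp)
  have e4 := lt (fun σ => 8 * G * (σ^2)^2) 1 (by fun_prop) (by simp)
  have e5 := lt (fun σ => ‖γ‖ * σ^2) c1 (by fun_prop) (by simpa using c1p)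
  have e6 := lt (fun σ => σ) 1 (by fun_prop) (by simp)
  filter_upwards [e1, e2, e2', e3, e4, e5, e6, self_mem_nhdsWithin] with σ e1 e2 e2' e3 e4 e5 e6 (e7 : 0 < σ)
  have L : Lev (σ^2) G cs := by
    refine ⟨by positivity, hG0, csp, ?_, e3.le, e4.le⟩
    rw [hcs, div_pow, Real.sq_sqrt hG0.le]; linarith
  have sigsqpos : 0 < σ^2 := by positivity
  have sigsqle : σ^2 ≤ 1 := pow_le_one₀ e7.le e6.le
  refine ⟨L, fun C1 ψ hC1 P => ?_⟩
  have ere : ∀ z : ℂ, (z * (σ:ℂ)^2).re = z.re * σ^2 := fun z => by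
    rw [show (σ:ℂ)^2 = ((σ^2 : ℝ) : ℂ) by push_cast; rfl, Complex.re_mul_ofReal]
  have hn2 : ‖(σ:ℂ)^2‖ = σ^2 := by rw [norm_pow, Complex.norm_real, Real.norm_of_nonneg e7.le]
  have gre : (gf γ σ).re = γ.re * σ^4 := by
    unfold gf
    rw [show (σ:ℂ)^4 = ((σ^4 : ℝ) : ℂ) by push_cast; rfl, Complex.re_mul_ofReal]
  have og : omf γ σ - gf γ σ = (Om γ σ - γ * (σ:ℂ)^2) * (σ:ℂ)^2 := by unfold omf gf; ring
  have ogre : c1 * σ^2 ≤ (omf γ σ - gf γ σ).re := by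
    rw [og, ere]; gcongr
  have ore : c1 * σ^2 ≤ (omf γ σ).re := by
    unfold omf; rw [ere]; gcongr
  have on : ‖omf γ σ‖ = ‖Om γ σ‖ * σ^2 := by unfold omf; rw [norm_mul, hn2]
  have F : Free (gf γ σ) (omf γ σ) := by
    refine ⟨by rw [gre]; positivity, lt_of_lt_of_le (by positivity) ore, lt_of_lt_of_le (by positivity) ogre, ?_⟩
    unfold omf gf Om
    rw [mul_pow, csqrt_sq]; ring
  have hωle : ‖omf γ σ‖ ≤ M * (c2 * σ^2) := by
    rw [on, ← mul_assoc]; gcongr; linarith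
  have hgω : ‖gf γ σ‖ ≤ ‖omf γ σ‖ := by
    rw [on]; unfold gf
    rw [norm_mul, norm_pow, Complex.norm_real, Real.norm_of_nonneg e7.le]
    calc ‖γ‖ * σ^4 = ‖γ‖ * σ^2 * σ^2 := by ring
      _ ≤ c1 * σ^2 := by gcongr
      _ ≤ (Om γ σ).re * σ^2 := by gcongr
      _ ≤ _ := by gcongr; exact Complex.re_le_norm _
  set m := ⌈τ * (σ^2)⁻¹⌉₊ with hm
  have hml : τ ≤ σ^2 * m := by
    have := Nat.le_ceil (τ * (σ^2)⁻¹)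
    calc τ = σ^2 * (τ * (σ^2)⁻¹) := by field_simp
      _ ≤ _ := by gcongr
  have hmu : σ^2 * m ≤ τ + 1 := by
    have := (Nat.ceil_lt_add_one (show 0 ≤ τ * (σ^2)⁻¹ by positivity)).le
    calc σ^2 * m ≤ σ^2 * (τ * (σ^2)⁻¹ + 1) := by gcongr
      _ = τ + σ^2 := by field_simp
      _ ≤ _ := by gcongr
  have m1 : 1 ≤ m := by
    rw [hm, Nat.one_le_ceil_iff]; positivity
  refine ⟨P, L, F, e7, e6.le, hC1, cp, hc_cs, hc_c2, Mp, by linarith, ?_, hωle, hgω, m1, hmu, ?_, ?_, ?_⟩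
  · rw [hc2]; linarith
  · have := mul_le_mul_of_nonneg_left (τ1.trans hml) hG0.le
    linarith
  · have h1 : 1 + c1 * σ^2 ≤ ‖1 + gf γ σ + omf γ σ‖ := by
      refine le_trans ?_ (Complex.re_le_norm _)
      simp only [Complex.add_re, Complex.one_re]
      have := F.g0
      linarith
    rw [F.r_eq, norm_inv, inv_pow]
    have h2 : τ * c1 ≤ ‖1 + gf γ σ + omf γ σ‖^m := by
      have hq0 : 0 ≤ c1 * σ^2 := by positivity
      have hq1 := mul_le_mul_of_nonneg_right hml c1p.le
      calc τ * c1 ≤ 1 + m * (c1 * σ^2) := by linarith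
        _ ≤ (1 + c1 * σ^2)^m := one_add_mul_le_pow (by linarith) m
        _ ≤ _ := by gcongr
    have h3 : 0 < ‖1 + gf γ σ + omf γ σ‖^m := lt_of_lt_of_le (by positivity) h2
    rw [← div_eq_mul_inv, div_le_iff₀ h3]
    linarith
  · intro l hl
    have h1 : ‖(lam (gf γ σ) (omf γ σ))⁻¹‖^2 ≤ Real.exp (M * (c2 * σ^2))^2 := by
      rw [norm_inv, inv_pow, ← norm_pow, F.lam_sq, norm_inv, inv_inv, ← Real.exp_nat_mul]
      calc ‖1 + gf γ σ + omf γ σ‖ ≤ 1 + ‖gf γ σ‖ + ‖omf γ σ‖ := by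
            refine (norm_add_le _ _).trans ?_
            gcongr
            refine (norm_add_le _ _).trans ?_
            simp
        _ ≤ 2 * (M * (c2 * σ^2)) + 1 := by linarith
        _ ≤ _ := by push_cast; exact Real.add_one_le_exp _
    have h2 := (abs_le_of_sq_le_sq' h1 (Real.exp_nonneg _)).2
    calc _ ≤ Real.exp (M * (c2 * σ^2))^l := by gcongr
      _ = Real.exp (M * c2 * (σ^2 * l)) := by rw [← Real.exp_nat_mul]; ring_nf
      _ ≤ _ := by
        apply Real.exp_le_exp.2
        have : (l:ℝ) ≤ m := by exact_mod_cast hl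
        gcongr
        refine le_trans ?_ hmu
        gcongr

end BandChain

namespace BandChain
open Filter Topology

lemma ratio_aux {z D f : ℕ → ℂ} {σ : ℕ → ℝ} {d : ℝ} (hd : 0 < d) (hσ : ∀ n, 0 < σ n)
    (hD : ∀ᶠ n in atTop, d ≤ σ n * ‖D n‖)
    (h1 : Tendsto (fun n => σ n * ‖f n * z n - D n‖) atTop (𝓝 0)) :
    Tendsto (fun n => f n * z n / D n) atTop (𝓝 1) := by
  rw [tendsto_iff_norm_sub_tendsto_zero]
  refine squeeze_zero' (Eventually.of_forall fun _ => norm_nonneg _) ?_ (by simpa using h1.div_const d)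
  filter_upwards [hD] with n hn
  have hDn : D n ≠ 0 := fun h => by rw [h, norm_zero, mul_zero] at hn; linarith
  have hp : 0 < ‖D n‖ := norm_pos_iff.2 hDn
  rw [show f n * z n / D n - 1 = (f n * z n - D n) / D n by field_simp, norm_div,
    ← mul_div_mul_left _ _ (hσ n).ne']
  have := hσ n
  gcongr

lemma ratio {z z0 D f : ℕ → ℂ} {σ : ℕ → ℝ} {d : ℝ} (hd : 0 < d) (hσ : ∀ n, 0 < σ n)
    (hD : ∀ᶠ n in atTop, d ≤ σ n * ‖D n‖)
    (h1 : Tendsto (fun n => σ n * ‖f n * z n - D n‖) atTop (𝓝 0))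
    (h2 : Tendsto (fun n => σ n * ‖f n * z0 n - D n‖) atTop (𝓝 0)) :
    Tendsto (fun n => z n / z0 n) atTop (𝓝 1) := by
  have a1 := ratio_aux hd hσ hD h1
  have a2 := ratio_aux hd hσ hD h2
  have a3 := a1.div a2 one_ne_zero
  rw [div_one] at a3
  refine a3.congr' ?_
  filter_upwards [a2.eventually_ne one_ne_zero] with n hn
  have hD0 : D n ≠ 0 := fun h => hn (by rw [h, div_zero])
  have hf0 : f n ≠ 0 := fun h => hn (by rw [h, zero_mul, zero_div])
  rw [Pi.div_apply, div_div_div_cancel_right₀ hD0, mul_div_mul_left _ _ hf0]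

lemma caseA {G cs c C1 c2 M T Λ : ℝ} {σ : ℕ → ℝ} {g ω : ℕ → ℂ} {ψ : ℕ → ℝ → ℂ} {m : ℕ → ℕ} (hT : 0 < T) (hc : 0 < c) (hG : 0 < G)
    (hB : ∀ᶠ n in atTop, Blk (σ n) G cs c C1 c2 M T Λ (g n) (ω n) (ψ n) (m n))
    (h0 : Tendsto σ atTop (𝓝 0)) (hσ : ∀ n, 0 < σ n)
    (h2 : Tendsto (fun n : ℕ => (σ n)^2 * (2 * n : ℝ)) atTop atTop)
    (h4 : Tendsto (fun n : ℕ => (σ n)^4 * (2 * n : ℝ)) atTop (𝓝 0)) :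
    Tendsto (fun n => σ n * ‖(lam (g n) (ω n))⁻¹^(2*n) * Zc (wp (w0 (g n)) (ψ n)) (2*n)
      - al (g n) (ω n) (fun _ => 1) * J0 (g n) (ω n)‖) atTop (𝓝 0) := by
  obtain ⟨A, hA⟩ : ∃ A, A = bA cs C1 M T Λ := ⟨_, rfl⟩
  obtain ⟨h, hh⟩ : ∃ h, h = Λ * Real.exp (2 * cs * T) + M + 1 := ⟨_, rfl⟩
  set b : ℕ → ℕ := fun n => 2 * n / m n with hb
  set X : ℕ → ℝ := fun n => Real.exp ((A + 2 * A^2) * (σ n)^2 * b n) with hX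
  have hbt : Tendsto (fun n => (b n : ℝ)) atTop atTop := by
    have t : Tendsto (fun n : ℕ => (σ n)^2 * (2 * n : ℝ) / T - 1) atTop atTop :=
      tendsto_atTop_add_const_right _ _ (h2.atTop_div_const hT)
    refine tendsto_atTop_mono' _ ?_ t
    filter_upwards [hB] with n B
    have hm : 0 < m n := B.m1
    have h1 : 2 * n < m n * (b n + 1) := by
      have := Nat.div_add_mod (2*n) (m n)
      have := Nat.mod_lt (2*n) hm
      rw [hb]; simp only; rw [mul_add]; omega
    have h1' : (2 * n : ℝ) ≤ m n * (b n + 1) := by exact_mod_cast h1.le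
    have h3 := B.hT
    have : (σ n)^2 * (2 * n : ℝ) ≤ (b n + 1) * T := by
      calc (σ n)^2 * (2 * n : ℝ) ≤ (σ n)^2 * (m n * (b n + 1)) := by gcongr
        _ = (σ n)^2 * m n * (b n + 1) := by ring
        _ ≤ T * (b n + 1) := by gcongr
        _ = _ := by ring
    rw [tsub_le_iff_right, div_le_iff₀ hT]
    exact this
  have hbn : Tendsto b atTop atTop := tendsto_natCast_atTop_iff.1 hbt
  have hsb : Tendsto (fun n => (σ n)^2 * (b n : ℝ)) atTop (𝓝 0) := by
    refine squeeze_zero' (Eventually.of_forall fun n => by positivity) ?_ (by simpa using h4.const_mul (G/(8*c)))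
    filter_upwards [hB] with n B
    have h1 : ((m n * b n : ℕ) : ℝ) ≤ (2 * n : ℕ) := by exact_mod_cast Nat.mul_div_le (2*n) (m n)
    push_cast at h1
    have h3 := B.hcT
    have h5 : 8 * c / G ≤ (σ n)^2 * m n := by rw [div_le_iff₀ hG]; linarith
    have h6 : (σ n)^2 * b n * (8 * c / G) ≤ (σ n)^4 * (2 * n) := by
      calc _ ≤ (σ n)^2 * b n * ((σ n)^2 * m n) := by gcongr
        _ = (σ n)^4 * (m n * b n) := by ring
        _ ≤ _ := by gcongr
    calc (σ n)^2 * (b n : ℝ) = G/(8*c) * ((σ n)^2 * b n * (8 * c / G)) := by field_simp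
      _ ≤ _ := by gcongr
  have hXt : Tendsto X atTop (𝓝 1) := by
    have : Tendsto (fun n => (A + 2 * A^2) * ((σ n)^2 * b n)) atTop (𝓝 0) := by simpa using hsb.const_mul (A + 2 * A^2)
    have := (Real.continuous_exp.tendsto _).comp this
    rw [Real.exp_zero] at this
    refine this.congr fun n => ?_
    simp only [hX, Function.comp_apply, mul_assoc]
  have hpow : Tendsto (fun n => (1/2 : ℝ)^(b n)) atTop (𝓝 0) :=
    (tendsto_pow_atTop_nhds_zero_of_lt_one (by norm_num) (by norm_num)).comp hbn
  have hE : Tendsto (fun n => √(Real.pi / c) * ((A + 2 * A * h + M * C1 + 2 * A * (M + 1 + h)) * (σ n * X n) + (M + 1) * (X n - 1) + h * (1/2)^(b n))) atTop (𝓝 0) := by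
    have := ((((h0.mul hXt).const_mul (A + 2 * A * h + M * C1 + 2 * A * (M + 1 + h))).add ((hXt.sub_const 1).const_mul (M+1))).add (hpow.const_mul h)).const_mul (√(Real.pi / c))
    simpa using this
  have hAσ : ∀ᶠ n in atTop, A * σ n < 1/4 := by
    have : Tendsto (fun n => A * σ n) atTop (𝓝 0) := by simpa using h0.const_mul A
    exact this.eventually_lt_const (by norm_num)
  refine squeeze_zero' (Eventually.of_forall fun n => by have := hσ n; positivity) ?_ hE
  filter_upwards [hB, hAσ, hbn.eventually_ge_atTop 1] with n B hAn hb1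
  have := B.main hA hAn.le hh (2*n % m n) (b n) (Nat.mod_lt _ B.m1).le hb1 (X := X n) rfl
  rwa [show m n * b n + 2 * n % m n = 2 * n from Nat.div_add_mod _ _] at this

lemma caseB {G cs c C1 : ℝ} {σ : ℕ → ℝ} {g : ℕ → ℂ} {ψ : ℕ → ℝ → ℂ} (hC1 : 0 ≤ C1) (hc : 0 < c) (hcs : 2 * c ≤ cs)
    (hcG : 8 * (2 * c) ≤ G)
    (hP : ∀ᶠ n in atTop, Pert (σ n) G c C1 (w0 (g n)) (ψ n))
    (hL : ∀ᶠ n in atTop, Lev ((σ n)^2) G cs) (hg : ∀ n, 0 < (g n).re)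
    (h0 : Tendsto σ atTop (𝓝 0)) (hσ : ∀ n, 0 < σ n)
    (h2 : ∀ n : ℕ, (σ n)^2 * (2 * n + 1 : ℝ) = 1) :
    Tendsto (fun n => σ n * ‖1 * Zc (wp (w0 (g n)) (ψ n)) (2*n) - Zc (w0 (g n)) (2*n)‖) atTop (𝓝 0) := by
  have hE : Tendsto (fun n => √(Real.pi / c) * ((cA C1 1 cs + C1 * Real.exp (2 * cs)) * σ n)) atTop (𝓝 0) := by
    simpa using (h0.const_mul (cA C1 1 cs + C1 * Real.exp (2 * cs))).const_mul (√(Real.pi / c))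
  refine squeeze_zero' (Eventually.of_forall fun n => by have := hσ n; positivity) ?_ hE
  filter_upwards [hP, hL, eventually_ge_atTop 1, h0.eventually_lt_const (zero_lt_one)] with n P L hn h1
  have h3 := h2 n
  have hn' : (1:ℝ) ≤ n := by exact_mod_cast hn
  have hs2 : 0 < (σ n)^2 := pow_pos (hσ n) 2
  rw [one_mul]
  refine one_main P L (hσ n) h1.le hC1 hc hcs hcG (hg n) (2*n) ?_ ?_
  · push_cast; nlinarith
  · push_cast; nlinarith

end BandChain

namespace BandChain
open Filter Topology

noncomputable def sg (θ : ℝ) (n : ℕ) : ℝ := (√(Wn θ n))⁻¹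

lemma N_tendsto : Tendsto (fun n : ℕ => 2 * (n:ℝ) + 1) atTop atTop :=
  tendsto_atTop_add_const_right _ _ (tendsto_natCast_atTop_atTop.const_mul_atTop (by norm_num))

lemma Wn_pos (θ : ℝ) (n : ℕ) : 0 < Wn θ n := by unfold Wn; positivity

lemma Wn_ge (θ : ℝ) (hθ : 0 < θ) (n : ℕ) : 1 ≤ Wn θ n := by
  unfold Wn
  exact Real.one_le_rpow (by have : (0:ℝ) ≤ n := Nat.cast_nonneg n
                             linarith) (by positivity)

lemma Wn_tendsto {θ : ℝ} (hθ : 0 < θ) : Tendsto (Wn θ) atTop atTop :=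
  (tendsto_rpow_atTop (by positivity : 0 < (1+θ)/2)).comp N_tendsto

lemma sg_pos (θ : ℝ) (n : ℕ) : 0 < sg θ n := by
  have := Wn_pos θ n; unfold sg; positivity

lemma sg_sq (θ : ℝ) (n : ℕ) : (sg θ n)^2 = (Wn θ n)⁻¹ := by
  unfold sg; rw [inv_pow, Real.sq_sqrt (Wn_pos θ n).le]

lemma sg_W (θ : ℝ) (n : ℕ) : (sg θ n)^2 * Wn θ n = 1 := by
  rw [sg_sq, inv_mul_cancel₀ (Wn_pos θ n).ne']

lemma sg_rpow (θ : ℝ) (n : ℕ) : sg θ n = (Wn θ n)^(-(1/2) : ℝ) := by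
  unfold sg; rw [Real.sqrt_eq_rpow, Real.rpow_neg (Wn_pos θ n).le]

lemma sg_tendsto {θ : ℝ} (hθ : 0 < θ) : Tendsto (sg θ) atTop (𝓝 0) :=
  tendsto_inv_atTop_zero.comp (Real.tendsto_sqrt_atTop.comp (Wn_tendsto hθ))

lemma sg_tendsto' {θ : ℝ} (hθ : 0 < θ) : Tendsto (sg θ) atTop (𝓝[>] 0) :=
  tendsto_nhdsWithin_iff.2 ⟨sg_tendsto hθ, Eventually.of_forall (sg_pos θ)⟩

lemma dl_tendsto {θ κ : ℝ} (hθ : 0 < θ) (hκ : 0 < κ) : Tendsto (dl θ κ) atTop (𝓝 0) :=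
  (tendsto_rpow_neg_atTop hκ).comp (Wn_tendsto hθ)

lemma sg_le_dl {θ κ : ℝ} (hθ : 0 < θ) (hκ : κ ≤ 1/8) (n : ℕ) : sg θ n ≤ (dl θ κ n)^4 := by
  unfold dl
  rw [sg_rpow, ← Real.rpow_natCast, ← Real.rpow_mul (Wn_pos θ n).le]
  apply Real.rpow_le_rpow_of_exponent_le (Wn_ge θ hθ n)
  push_cast; linarith

lemma gf_eq (γ : ℂ) (θ : ℝ) (n : ℕ) : γ / ((Wn θ n : ℝ) : ℂ)^2 = gf γ (sg θ n) := by
  unfold gf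
  have h : (((sg θ n)^2 : ℝ) : ℂ) = ((Wn θ n : ℝ) : ℂ)⁻¹ := by rw [sg_sq]; push_cast; rfl
  push_cast at h
  rw [show ((sg θ n : ℝ) : ℂ)^4 = (((sg θ n : ℝ) : ℂ)^2)^2 by ring, h, inv_pow, div_eq_mul_inv]

lemma gf_re (γ : ℂ) (σ : ℝ) : (gf γ σ).re = γ.re * σ^4 := by
  unfold gf
  rw [show (σ:ℂ)^4 = ((σ^4 : ℝ) : ℂ) by push_cast; rfl, Complex.re_mul_ofReal]

lemma sg_N {θ : ℝ} (n : ℕ) : (sg θ n)^2 * (2 * (n:ℝ) + 1) = (2 * (n:ℝ) + 1)^((1 - θ)/2) := by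
  have hp : (0:ℝ) < 2 * (n:ℝ) + 1 := by positivity
  rw [sg_sq]; unfold Wn
  rw [← Real.rpow_neg hp.le]
  nth_rewrite 2 [← Real.rpow_one (2 * (n:ℝ) + 1)]
  rw [← Real.rpow_add hp]; congr 1; ring

lemma sg_N4 {θ : ℝ} (n : ℕ) : (sg θ n)^4 * (2 * (n:ℝ) + 1) = (2 * (n:ℝ) + 1)^(-θ) := by
  have hp : (0:ℝ) < 2 * (n:ℝ) + 1 := by positivity
  rw [show (sg θ n)^4 * (2 * (n:ℝ) + 1) = (sg θ n)^2 * ((sg θ n)^2 * (2 * (n:ℝ) + 1)) by ring, sg_N, sg_sq]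
  unfold Wn
  rw [← Real.rpow_neg hp.le, ← Real.rpow_add hp]; congr 1; ring

lemma pert_ev {γ : ℂ} {φ : ℝ → ℂ} {β : ℂ} {C0 c θ κ : ℝ} (hγ : 0 < γ.re) (hφm : Measurable φ)
    (hC0 : 0 ≤ C0) (hφ : ∀ t : ℝ, |t| ≤ 1/2 → ‖φ t - β * (t:ℂ)^3‖ ≤ C0 * t^4) (hc : 0 < c)
    (hθ : 0 < θ) (hκ : 0 < κ) (hκ8 : κ ≤ 1/8) :
    ∀ᶠ n in atTop, Pert (sg θ n) (γ.re/2) c (cC c C0 ‖β‖) (w0 (gf γ (sg θ n))) (psi φ (Wn θ n) (dl θ κ n)) := by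
  have d := dl_tendsto hθ hκ
  have d' : Tendsto (fun n => (‖β‖ + C0) * dl θ κ n) atTop (𝓝 0) := by simpa using d.const_mul (‖β‖ + C0)
  filter_upwards [d.eventually_lt_const (show (0:ℝ) < 1/2 by norm_num), d'.eventually_lt_const zero_lt_one,
    d'.eventually_lt_const (half_pos hγ), (sg_tendsto hθ).eventually_lt_const zero_lt_one] with n h1 h2 h3 h4
  rw [← gf_eq]
  exact pert_of hγ hφm hC0 hφ hc (sg_pos θ n) h4.le (sg_W θ n) (Real.rpow_pos_of_pos (Wn_pos θ n) _) h1.le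
    (sg_le_dl hθ hκ8 n) h2.le h3.le

theorem gen {γ : ℂ} {φ : ℝ → ℂ} {β : ℂ} {C0 θ κ : ℝ} (hγ : 0 < γ.re) (hφm : Measurable φ)
    (hC0 : 0 ≤ C0) (hφ : ∀ t : ℝ, |t| ≤ 1/2 → ‖φ t - β * (t:ℂ)^3‖ ≤ C0 * t^4)
    (hθ : 0 < θ) (hθ1 : θ ≤ 1) (hκ : 0 < κ) (hκ8 : κ ≤ 1/8) :
    Tendsto (fun n : ℕ => avg0 n (Wn θ n) (dl θ κ n) γ
      (fun x => Complex.exp (-(∑ j, φ (x j / Wn θ n))))) atTop (𝓝 1) := by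
  obtain ⟨cs, c, c2, M, T, Λ, mf, hc, hcs, hcG, hT, hMc, hev⟩ := blk_ex hγ
  have hev' := (sg_tendsto' hθ).eventually hev
  have hG : 0 < γ.re/2 := half_pos hγ
  have P1 := pert_ev (c := c) hγ hφm hC0 hφ hc hθ hκ hκ8
  have P0 := pert_ev (φ := 0) (β := 0) (C0 := 0) (c := c) hγ measurable_zero le_rfl (by simp) hc hθ hκ hκ8
  have C1p := cC_nonneg hC0 (norm_nonneg β) hc
  have C0p := cC_nonneg (le_refl (0:ℝ)) (norm_nonneg (0:ℂ)) hc
  have key : Tendsto (fun n : ℕ => Zc (wp (w0 (gf γ (sg θ n))) (psi φ (Wn θ n) (dl θ κ n))) (2*n)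
      / Zc (wp (w0 (gf γ (sg θ n))) (psi 0 (Wn θ n) (dl θ κ n))) (2*n)) atTop (𝓝 1) := by
    rcases hθ1.lt_or_eq with hlt | heq
    · have B1 := hev'.and P1
      have B0 := hev'.and P0
      have B1' := B1.mono fun n h => h.1.2 _ _ C1p h.2
      have B0' := B0.mono fun n h => h.1.2 _ _ C0p h.2
      have s2 : Tendsto (fun n : ℕ => (sg θ n)^2 * (2 * n : ℝ)) atTop atTop := by
        have : Tendsto (fun n : ℕ => (sg θ n)^2 * (2 * (n:ℝ) + 1)) atTop atTop := by
          simp_rw [sg_N]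
          exact (tendsto_rpow_atTop (by linarith : 0 < (1-θ)/2)).comp N_tendsto
        refine tendsto_atTop_mono' _ ?_ (tendsto_atTop_add_const_right _ (-1) this)
        filter_upwards [(sg_tendsto hθ).eventually_lt_const zero_lt_one] with n h
        have := pow_le_one₀ (n := 2) (sg_pos θ n).le h.le
        linarith
      have s4 : Tendsto (fun n : ℕ => (sg θ n)^4 * (2 * n : ℝ)) atTop (𝓝 0) := by
        have : Tendsto (fun n : ℕ => (sg θ n)^4 * (2 * (n:ℝ) + 1)) atTop (𝓝 0) := by
          simp_rw [sg_N4]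
          exact (tendsto_rpow_neg_atTop hθ).comp N_tendsto
        refine squeeze_zero (fun n => by positivity) (fun n => ?_) this
        gcongr; linarith
      refine ratio (σ := sg θ) (d := √(Real.pi / (M * c2))) (Real.sqrt_pos.2 (div_pos Real.pi_pos hMc)) (sg_pos θ) ?_
        (caseA (m := fun n => mf (sg θ n)) hT hc hG B1' (sg_tendsto hθ) (sg_pos θ) s2 s4)
        (caseA (m := fun n => mf (sg θ n)) hT hc hG B0' (sg_tendsto hθ) (sg_pos θ) s2 s4)
      exact B1'.mono fun n h => h.lower
    · have h2 : ∀ n : ℕ, (sg θ n)^2 * (2 * n + 1 : ℝ) = 1 := fun n => by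
        rw [sg_N, heq]; simp
      have hg : ∀ n, 0 < (gf γ (sg θ n)).re := fun n => by
        rw [gf_re]; have := sg_pos θ n; positivity
      have L := hev'.mono fun n h => h.1
      have hγn : 0 < ‖γ‖ := norm_pos_iff.2 fun h => by rw [h] at hγ; simp at hγ
      refine ratio (σ := sg θ) (d := Real.exp (-‖γ‖) * √(Real.pi / ‖γ‖)) (by positivity) (sg_pos θ) ?_
        (caseB C1p hc hcs hcG P1 L hg (sg_tendsto hθ) (sg_pos θ) h2)
        (caseB C0p hc hcs hcG P0 L hg (sg_tendsto hθ) (sg_pos θ) h2)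
      refine Eventually.of_forall fun n => ?_
      refine one_lower (sg_pos θ n) hγn (hg n) ?_ (2*n) ?_
      · unfold gf; rw [norm_mul, norm_pow, Complex.norm_real, Real.norm_of_nonneg (sg_pos θ n).le]
      · push_cast; exact (h2 n).le
  refine key.congr' ?_
  filter_upwards [P1, P0] with n p1 p0
  rw [avg0_eq, gf_eq]
  · rw [gf_eq]; exact p1.hwp
  · rw [gf_eq]; exact wp_int p1 (sg_pos θ n) hG
  · rw [gf_eq]; exact p0.hwp
  · rw [gf_eq]; exact wp_int p0 (sg_pos θ n) hG

lemma phi_taylor {l0 a : ℝ} {c : ℂ} (ha : a^2 + l0^2/4 = 1)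
    (hc : c = (a:ℂ)^2 + Complex.I * a * l0/2) (t : ℝ) (ht : |t| ≤ 1/2) :
    ‖phiPM l0 a c t - (-((a:ℂ) + Complex.I * l0/2)^3/3) * (t:ℂ)^3‖ ≤ 1 * t^4 := by
  set ζ : ℂ := (a:ℂ) + Complex.I * l0/2 with hζ
  have haC : (a:ℂ)^2 + (l0:ℂ)^2/4 = 1 := by exact_mod_cast ha
  have hI := Complex.I_sq
  have hmul : ζ * ((a:ℂ) - Complex.I * l0/2) = 1 := by
    rw [hζ]; linear_combination haC - (l0:ℂ)^2/4 * hI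
  have hinv : ((a:ℂ) - Complex.I * l0/2)⁻¹ = ζ := inv_eq_of_mul_eq_one_left hmul
  have hc' : c = (1 + ζ^2)/2 := by
    rw [hc, hζ]; linear_combination (1/2) * haC - (l0:ℂ)^2/8 * hI
  have hn : ‖ζ‖ = 1 := by
    have h1 : ‖ζ‖^2 = 1 := by
      rw [← Complex.normSq_eq_norm_sq, Complex.normSq_apply]
      have r : ζ.re = a := by rw [hζ]; simp
      have i : ζ.im = l0/2 := by rw [hζ]; simp
      rw [r, i]; linarith
    nlinarith [norm_nonneg ζ]
  have hz : ‖ζ * t‖ = |t| := by rw [norm_mul, hn, one_mul, Complex.norm_real, Real.norm_eq_abs]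
  have hlog := Complex.norm_log_sub_logTaylor_le 3 (z := ζ * t) (by rw [hz]; linarith)
  rw [hz] at hlog
  have e : phiPM l0 a c t - (-ζ^3/3) * (t:ℂ)^3 = -(Complex.log (1 + ζ * t) - Complex.logTaylor 4 (ζ * t)) := by
    have hT : Complex.logTaylor 4 (ζ * t) = ζ * t - (ζ*t)^2/2 + (ζ*t)^3/3 := by
      simp [Complex.logTaylor, Finset.sum_range_succ]; ring
    unfold phiPM
    rw [hT, div_eq_mul_inv (t:ℂ), hinv, hc', mul_comm (t:ℂ) ζ,
      show (a:ℂ) + t + Complex.I * l0/2 = ζ + t by rw [hζ]; ring]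
    ring
  rw [e, norm_neg]
  refine hlog.trans ?_
  have h2 : (1 - |t|)⁻¹ ≤ 2 := by
    rw [inv_le_comm₀ (by linarith) (by norm_num)]; linarith
  have h3 : |t|^4 = t^4 := abs_pow_four t
  norm_num
  rw [h3]
  have : 0 ≤ t^4 := by positivity
  nlinarith

lemma phi_meas (l0 a : ℝ) (c : ℂ) : Measurable (phiPM l0 a c) := by
  unfold phiPM
  have : Measurable fun y : ℝ => Complex.log (1 + (y:ℂ)/((a:ℂ) - Complex.I * l0/2)) :=
    Complex.measurable_log.comp (by fun_prop)
  fun_prop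

end BandChain

/-- `⟨exp{−∑_j φ_±(x_j/W)}⟩₀ → 1` as `n → ∞`, with `γ = c_±` respectively. -/
theorem avg_phi_tendsto_one (l0 : ℝ) (hl0 : l0 ∈ Set.Ioo (-2 : ℝ) 2)
    (θ κ : ℝ) (hθ : 0 < θ) (hθ1 : θ ≤ 1) (hκ : 0 < κ) (hκθ : κ < θ / 8) :
    Filter.Tendsto (fun n : ℕ =>
        avg0 n (Wn θ n) (dl θ κ n) (cplus l0)
          (fun x => Complex.exp (-(∑ j, phiPM l0 (aplus l0) (cplus l0) (x j / Wn θ n)))))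
      Filter.atTop (nhds 1) ∧
    Filter.Tendsto (fun n : ℕ =>
        avg0 n (Wn θ n) (dl θ κ n) (cminus l0)
          (fun x => Complex.exp (-(∑ j, phiPM l0 (-aplus l0) (cminus l0) (x j / Wn θ n)))))
      Filter.atTop (nhds 1) := by
  have hp : 0 < 1 - l0^2/4 := by nlinarith [hl0.1, hl0.2]
  have ha : aplus l0 = √(1 - l0^2/4) := by
    unfold aplus
    rw [show 4 - l0^2 = 2^2 * (1 - l0^2/4) by ring, Real.sqrt_mul (by positivity), Real.sqrt_sq (by norm_num)]
    ring
  have ha2 : (aplus l0)^2 = 1 - l0^2/4 := by rw [ha, Real.sq_sqrt hp.le]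
  have ha2C : ((aplus l0 : ℝ) : ℂ)^2 = ((1 - l0^2/4 : ℝ) : ℂ) := by exact_mod_cast ha2
  have hκ8 : κ ≤ 1/8 := by linarith
  constructor
  · refine BandChain.gen (β := -((aplus l0 : ℂ) + Complex.I * l0/2)^3/3) (C0 := 1) ?_ (BandChain.phi_meas _ _ _) zero_le_one
      (BandChain.phi_taylor (by rw [ha2]; ring) ?_) hθ hθ1 hκ hκ8
    · simpa [cplus, pow_two] using hp
    · unfold cplus; rw [ha2C, ← ha]; push_cast; ring
  · refine BandChain.gen (β := -(((-aplus l0 : ℝ) : ℂ) + Complex.I * l0/2)^3/3) (C0 := 1) ?_ (BandChain.phi_meas _ _ _) zero_le_one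
      (BandChain.phi_taylor (by rw [neg_sq, ha2]; ring) ?_) hθ hθ1 hκ hκ8
    · simpa [cminus, pow_two] using hp
    · unfold cminus; push_cast; rw [neg_sq, ha2C, ← ha]; push_cast; ring
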